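/- (Main theorem, case A, homeomorphic form.) Let d ∈ [0,1). There exists a constant c = c(d) > 0 with the following property. Let f = h + conj(g) be a sense-preserving harmonic mapping on 𝔻 with h' nonvanishing, whose dilatation ω = g'/h' satisfies |ω(z)| ≤ d for all z ∈ 𝔻, and whose Schwarzian satisfies sup_{z∈𝔻} (1−|z|²)² |S_f(z)| ≤ c. Define F on the Riemann sphere ℂ ∪ {∞} by F(z) = f(z) for |z| < 1, F(z) = E_f(1/conj(z)) for |z| > 1 with the case-(A) extension (taking τ = Ph), F(∞) = E_f(0), setting F(z) = ∞ at points where the denominator conj(ζ) − (1/2)(1−|ζ|²) Ph(ζ) vanishes (ζ = 1/conj(z)), and on |z| = 1 by the continuous boundary extension of f. Then F is a well-defined homeomorphism of ℂ ∪ {∞} onto itself extending f, and there exists k < 1 such that |∂_z̄ F(z)| ≤ k |∂_z F(z)| at every z with |z| > 1 where F(z) ≠ ∞ (so F is quasiconformal). -/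

import Mathlib

/-!
Write `ζ = 1 / conj z` for the reflection of an exterior point. Up to the conjugation, the extension
outside the disk is built from one operation on holomorphic functions,
`Gf h g z = g ζ + (z - ζ) g'(ζ) / (1 - (z - ζ) Ph(ζ) / 2)`, and inside the disk `Gf h g = g`.
The map of the theorem is `F = Gf h h + conj (Gf h g)`, and `Gf h h` is the classical Ahlfors–Weill
extension of `h`. The proof has three parts.

**Smallness.** A bounded dilatation and a bounded harmonic Schwarzian turn the definition of `S_f`
into a Riccati inequality for `Ph`, so `(1 - |z|²) |Ph|` is bounded in terms of `d` (`riccati_bound`,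
`preSch_bound`). Further, `(1 - |ω|²)² S_f` is a quadratic polynomial in `conj ω` with holomorphic
coefficients (`schwH_formula`). If it is small on a disk, comparison of the coefficients of `x̄` and
`x̄²` in the Taylor expansion shows that `ω'` is small at the centre (`coeff_extract`, `quad_rigid`).
Applied at the hyperbolic scale, this makes `(1 - |z|²) |ω'|` and `(1 - |z|²)² |S_h|` as small as
desired when `c` is small (`smallness`).

**The analytic part.** Let `h` have a small Schwarzian. Postcomposition with a Möbius transformation
normalizes `h` to `h(0) = 0`, `h'(0) = 1`, `h''(0) = 0` (`nrm`); integration of the Riccati equation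
along rays shows that the Möbius transformation has no pole on the image of the disk (`DH.den_ne`,
`DH.nrm_NH`) and that the normalized function and its extension are close to the identity
(`NH.bounds`, `NH.close`). The numerator and the denominator of the extension transform as a vector
under disk automorphisms (`num_den_comp`), so injectivity can be tested after moving one of the
points to `0` or to `∞` (`CH.Gf_inj`). Surjectivity holds for dilates, at a minimum of
`|Gf h h z - c|²` where the differential is invertible, and passes to the limit (`NH.surj`). Hence
`Gf h h` extends to a homeomorphism `F̃` of the sphere (`DH.exists_sphere`).

**The antianalytic part.** The Wirtinger derivatives of `Gf h h` and `Gf h g` are explicit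
(`Gf_wirt`). They show that `Gf h g` is locally a contraction as a function of `Gf h h`, with
constant `Lc` close to `d`; as `Gf h h` covers the plane, the bound is global (`PH.lip_smooth`, then
`PH.lip` by approximation with dilates). So `Gf h g = K ∘ Gf h h` with `K` a contraction of the plane
(`exists_lipschitz`), and `Ψ(w) = w + conj K(w)` is a homeomorphism (`exists_perturb`). Since
`F = Ψ ∘ F̃`, the map `F` is a homeomorphism of the sphere. The same Wirtinger derivatives bound its
complex dilatation (`PH.qc`).
-/

open Metric

/-- Wirtinger derivative `∂_z F = (1/2)(∂_x F - i ∂_y F)`. -/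
noncomputable def wZ (F : ℂ → ℂ) (z : ℂ) : ℂ :=
  (fderiv ℝ F z 1 - Complex.I * fderiv ℝ F z Complex.I) / 2

/-- Wirtinger derivative `∂_z̄ F = (1/2)(∂_x F + i ∂_y F)`. -/
noncomputable def wZb (F : ℂ → ℂ) (z : ℂ) : ℂ :=
  (fderiv ℝ F z 1 + Complex.I * fderiv ℝ F z Complex.I) / 2

/-- Pre-Schwarzian derivative `Ph = h''/h'` of a holomorphic function. -/
noncomputable def preSch (h : ℂ → ℂ) (z : ℂ) : ℂ :=
  deriv (deriv h) z / deriv h z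

/-- Schwarzian derivative `Sh = (Ph)' - (1/2)(Ph)^2` of a holomorphic function. -/
noncomputable def schw (h : ℂ → ℂ) (z : ℂ) : ℂ :=
  deriv (preSch h) z - (1 / 2) * (preSch h z) ^ 2

/-- Dilatation `ω = g'/h'` of the harmonic mapping `f = h + conj g`. -/
noncomputable def dil (h g : ℂ → ℂ) (z : ℂ) : ℂ :=
  deriv g z / deriv h z

/-- Harmonic pre-Schwarzian `P_f = Ph - conj(ω) ω' / (1 - |ω|²)`. -/
noncomputable def preSchH (h g : ℂ → ℂ) (z : ℂ) : ℂ :=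
  preSch h z -
    (starRingEnd ℂ) (dil h g z) * deriv (dil h g) z / ((1 - ‖dil h g z‖ ^ 2 : ℝ) : ℂ)

/-- Harmonic Schwarzian `S_f = ∂_z P_f - (1/2) P_f²`. -/
noncomputable def schwH (h g : ℂ → ℂ) (z : ℂ) : ℂ :=
  wZ (preSchH h g) z - (1 / 2) * (preSchH h g z) ^ 2

/-- Denominator `conj ζ - (1/2)(1-|ζ|²) Ph(ζ)` (case A). -/
noncomputable def denA (h : ℂ → ℂ) (ζ : ℂ) : ℂ :=
  (starRingEnd ℂ) ζ - (1 / 2) * ((1 - ‖ζ‖ ^ 2 : ℝ) : ℂ) * preSch h ζ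

/-- Denominator `conj ζ - (1/2)(1-|ζ|²) P_f(ζ)` (case B). -/
noncomputable def denB (h g : ℂ → ℂ) (ζ : ℂ) : ℂ :=
  (starRingEnd ℂ) ζ - (1 / 2) * ((1 - ‖ζ‖ ^ 2 : ℝ) : ℂ) * preSchH h g ζ

/-- `Φ` for case A: `(1-|ζ|²) h'(ζ) / (conj ζ - (1/2)(1-|ζ|²) Ph(ζ))`. -/
noncomputable def phiA (h : ℂ → ℂ) (ζ : ℂ) : ℂ :=
  ((1 - ‖ζ‖ ^ 2 : ℝ) : ℂ) * deriv h ζ / denA h ζ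

/-- `Φ` for case B: `(1-|ζ|²) h'(ζ) / (conj ζ - (1/2)(1-|ζ|²) P_f(ζ))`. -/
noncomputable def phiB (h g : ℂ → ℂ) (ζ : ℂ) : ℂ :=
  ((1 - ‖ζ‖ ^ 2 : ℝ) : ℂ) * deriv h ζ / denB h g ζ

/-- Case A extension value `E_f(ζ) = f(ζ) + Φ(ζ) + conj(ω(ζ)) conj(Φ(ζ))`, `τ = Ph`. -/
noncomputable def extA (h g : ℂ → ℂ) (ζ : ℂ) : ℂ :=
  (h ζ + (starRingEnd ℂ) (g ζ)) + phiA h ζ +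
    (starRingEnd ℂ) (dil h g ζ) * (starRingEnd ℂ) (phiA h ζ)

/-- Case B extension value `E_f(ζ) = f(ζ) + Φ(ζ) + conj(ω(ζ)) conj(Φ(ζ))`, `τ = P_f`. -/
noncomputable def extB (h g : ℂ → ℂ) (ζ : ℂ) : ℂ :=
  (h ζ + (starRingEnd ℂ) (g ζ)) + phiB h g ζ +
    (starRingEnd ℂ) (dil h g ζ) * (starRingEnd ℂ) (phiB h g ζ)

/-! ### Wirtinger derivatives -/

/-- The real-linear map `v ↦ a v + b conj v`. -/
noncomputable def wirtL (a b : ℂ) : ℂ →L[ℝ] ℂ :=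
  (a • (1 : ℂ →L[ℂ] ℂ)).restrictScalars ℝ + b • (Complex.conjCLE : ℂ →L[ℝ] ℂ)

@[simp] lemma wirtL_apply (a b v : ℂ) : wirtL a b v = a * v + b * (starRingEnd ℂ) v := by
  simp [wirtL]

/-- `F` is real differentiable at `z` with Wirtinger derivatives `∂_z F = a`, `∂_z̄ F = b`. -/
def HasWirt (F : ℂ → ℂ) (a b z : ℂ) : Prop := HasFDerivAt F (wirtL a b) z

lemma HasWirt.wZ_eq {F : ℂ → ℂ} {a b z : ℂ} (h : HasWirt F a b z) : wZ F z = a := by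
  have := HasFDerivAt.fderiv h
  simp only [wZ, this, wirtL_apply, Complex.conj_I, map_one]
  linear_combination (-a + b) / 2 * Complex.I_mul_I

lemma HasWirt.wZb_eq {F : ℂ → ℂ} {a b z : ℂ} (h : HasWirt F a b z) : wZb F z = b := by
  have := HasFDerivAt.fderiv h
  simp only [wZb, this, wirtL_apply, Complex.conj_I, map_one]
  linear_combination (a - b) / 2 * Complex.I_mul_I

lemma HasWirt.congr {F : ℂ → ℂ} {a b a' b' z : ℂ} (h : HasWirt F a b z) (ha : a = a')
    (hb : b = b') : HasWirt F a' b' z := by subst ha; subst hb; exact h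

lemma HasDerivAt.hasWirt {F : ℂ → ℂ} {a z : ℂ} (h : HasDerivAt F a z) : HasWirt F a 0 z := by
  have := (h.hasFDerivAt).restrictScalars ℝ
  refine this.congr_fderiv ?_
  ext; simp [mul_comm]

lemma hasWirt_id (z : ℂ) : HasWirt (fun w => w) 1 0 z := (hasDerivAt_id' z).hasWirt

lemma hasWirt_const (c z : ℂ) : HasWirt (fun _ => c) 0 0 z := (hasDerivAt_const z c).hasWirt

lemma HasWirt.conj {F : ℂ → ℂ} {a b z : ℂ} (h : HasWirt F a b z) :
    HasWirt (fun w => (starRingEnd ℂ) (F w)) ((starRingEnd ℂ) b) ((starRingEnd ℂ) a) z := by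
  have := (Complex.conjCLE.hasFDerivAt (x := F z)).comp z h
  refine HasFDerivAt.congr_fderiv (f := fun w => (starRingEnd ℂ) (F w)) this ?_
  ext; simp [add_comm]

lemma HasWirt.add {F G : ℂ → ℂ} {a b c d z : ℂ} (h : HasWirt F a b z) (h' : HasWirt G c d z) :
    HasWirt (fun w => F w + G w) (a + c) (b + d) z := by
  refine (HasFDerivAt.add h h').congr_fderiv ?_
  ext; simp; ring

lemma HasWirt.sub {F G : ℂ → ℂ} {a b c d z : ℂ} (h : HasWirt F a b z) (h' : HasWirt G c d z) :
    HasWirt (fun w => F w - G w) (a - c) (b - d) z := by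
  refine (HasFDerivAt.sub h h').congr_fderiv ?_
  ext; simp; ring

lemma HasWirt.mul {F G : ℂ → ℂ} {a b c d z : ℂ} (h : HasWirt F a b z) (h' : HasWirt G c d z) :
    HasWirt (fun w => F w * G w) (a * G z + F z * c) (b * G z + F z * d) z := by
  refine (HasFDerivAt.mul h h').congr_fderiv ?_
  ext; simp; ring

lemma HasDerivAt.comp_hasWirt {f F : ℂ → ℂ} {f' a b z : ℂ} (hf : HasDerivAt f f' (F z))
    (h : HasWirt F a b z) : HasWirt (fun w => f (F w)) (f' * a) (f' * b) z := by
  have := HasFDerivAt.comp z ((hf.hasFDerivAt).restrictScalars ℝ) h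
  refine HasFDerivAt.congr_fderiv (f := fun w => f (F w)) this ?_
  ext; simp; ring

lemma HasWirt.inv {F : ℂ → ℂ} {a b z : ℂ} (h : HasWirt F a b z) (h0 : F z ≠ 0) :
    HasWirt (fun w => (F w)⁻¹) (-a / F z ^ 2) (-b / F z ^ 2) z :=
  ((hasDerivAt_inv h0).comp_hasWirt h).congr (by ring) (by ring)

lemma HasWirt.div {F G : ℂ → ℂ} {a b c d z : ℂ} (h : HasWirt F a b z) (h' : HasWirt G c d z)
    (h0 : G z ≠ 0) :
    HasWirt (fun w => F w / G w) ((a * G z - F z * c) / G z ^ 2)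
      ((b * G z - F z * d) / G z ^ 2) z := by
  simp only [div_eq_mul_inv (F _)]
  exact (h.mul (h'.inv h0)).congr (by field_simp; try ring) (by field_simp; try ring)

lemma HasWirt.congr_fun {F G : ℂ → ℂ} {a b z : ℂ} (h : HasWirt F a b z)
    (e : G =ᶠ[nhds z] F) : HasWirt G a b z := HasFDerivAt.congr_of_eventuallyEq h e

lemma HasWirt.continuousAt {F : ℂ → ℂ} {a b z : ℂ} (h : HasWirt F a b z) : ContinuousAt F z :=
  HasFDerivAt.continuousAt h

/-! ### Holomorphic quantities -/

lemma deriv_diff {h : ℂ → ℂ} {U : Set ℂ} (hU : IsOpen U) (hd : DifferentiableOn ℂ h U) :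
    DifferentiableOn ℂ (deriv h) U := hd.deriv hU

lemma preSch_diff {h : ℂ → ℂ} {U : Set ℂ} (hU : IsOpen U) (hd : DifferentiableOn ℂ h U)
    (hn : ∀ z ∈ U, deriv h z ≠ 0) : DifferentiableOn ℂ (preSch h) U :=
  ((hd.deriv hU).deriv hU).div (hd.deriv hU) hn

lemma dil_diff {h g : ℂ → ℂ} {U : Set ℂ} (hU : IsOpen U) (hd : DifferentiableOn ℂ h U)
    (gd : DifferentiableOn ℂ g U)
    (hn : ∀ z ∈ U, deriv h z ≠ 0) : DifferentiableOn ℂ (dil h g) U :=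
  (gd.deriv hU).div (hd.deriv hU) hn

lemma hda {h : ℂ → ℂ} {U : Set ℂ} (hd : DifferentiableOn ℂ h U)
    (hU : IsOpen U) {z : ℂ} (hz : z ∈ U) : HasDerivAt h (deriv h z) z :=
  (hd.differentiableAt (hU.mem_nhds hz)).hasDerivAt

/-- The harmonic Schwarzian, multiplied by `(1 - |ω|²)²`, is a quadratic polynomial in `conj ω`
with holomorphic coefficients. -/
lemma schwH_formula {h g : ℂ → ℂ} (hd : DifferentiableOn ℂ h (ball 0 1))
    (gd : DifferentiableOn ℂ g (ball 0 1)) (hn : ∀ z ∈ ball (0 : ℂ) 1, deriv h z ≠ 0)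
    {z : ℂ} (hz : z ∈ ball (0 : ℂ) 1) (hw : ‖dil h g z‖ < 1) :
    schwH h g z * (1 - dil h g z * (starRingEnd ℂ) (dil h g z)) ^ 2 =
      schw h z * (1 - dil h g z * (starRingEnd ℂ) (dil h g z)) ^ 2
      + (starRingEnd ℂ) (dil h g z) * (1 - dil h g z * (starRingEnd ℂ) (dil h g z))
        * (preSch h z * deriv (dil h g) z - deriv (deriv (dil h g)) z)
      - 3 / 2 * ((starRingEnd ℂ) (dil h g z) * deriv (dil h g) z) ^ 2 := by
  have hU : IsOpen (ball (0 : ℂ) 1) := isOpen_ball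
  have e1 : ∀ w, ((1 - ‖dil h g w‖ ^ 2 : ℝ) : ℂ)
      = 1 - dil h g w * (starRingEnd ℂ) (dil h g w) := by
    intro w; rw [Complex.mul_conj']; push_cast; rfl
  have hne : (1 - dil h g z * (starRingEnd ℂ) (dil h g z)) ≠ 0 := by
    rw [← e1]; norm_cast; nlinarith [norm_nonneg (dil h g z)]
  have dP := (hda (preSch_diff hU hd hn) hU hz).hasWirt
  have dω := (hda (dil_diff hU hd gd hn) hU hz).hasWirt
  have dω2 := (hda (deriv_diff hU (dil_diff hU hd gd hn)) hU hz).hasWirt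
  have key := (dP.sub (((dω.conj).mul dω2).div
    ((hasWirt_const 1 z).sub (dω.mul dω.conj)) hne)).congr_fun (G := preSchH h g)
    (Filter.Eventually.of_forall fun w => by simp only [preSchH, e1])
  rw [schwH, key.wZ_eq, preSchH, schw, e1]
  simp only [map_zero]
  generalize (starRingEnd ℂ) (dil h g z) = c at *
  generalize dil h g z = w at *
  obtain ⟨m, hm⟩ : ∃ m, m = 1 - w * c := ⟨_, rfl⟩
  rw [← hm] at hne ⊢
  field_simp
  rw [hm]
  ring

/-! ### Cauchy and Riccati estimates at the hyperbolic scale -/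

/-- Cauchy's estimate on the disk of radius `ρ` about `z`. -/
lemma cauchy1 {f : ℂ → ℂ} {z : ℂ} {ρ B : ℝ} (hρ : 0 < ρ) (hf : DifferentiableOn ℂ f (ball 0 1))
    (hs : ‖z‖ + ρ < 1) (hB : ∀ w, ‖w - z‖ ≤ ρ → ‖f w‖ ≤ B) : ‖deriv f z‖ ≤ B / ρ := by
  refine Complex.norm_deriv_le_of_forall_mem_sphere_norm_le hρ ?_ ?_
  · refine DifferentiableOn.diffContOnCl (hf.mono ?_)
    rw [closure_ball _ hρ.ne']
    intro w hw
    rw [mem_closedBall_iff_norm] at hw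
    rw [mem_ball_zero_iff]
    linarith [norm_le_norm_add_norm_sub' w z]
  · intro w hw
    rw [mem_sphere_iff_norm] at hw
    exact hB w hw.le

/-- Cauchy's estimate at the hyperbolic scale: a derivative costs one power of `1 - ‖z‖`. -/
lemma hyp_cauchy {f : ℂ → ℂ} {B : ℝ} (n : ℕ) (hf : DifferentiableOn ℂ f (ball 0 1))
    (hB : ∀ z ∈ ball (0 : ℂ) 1, ‖f z‖ * (1 - ‖z‖) ^ n ≤ B) {z : ℂ} (hz : z ∈ ball (0 : ℂ) 1) :
    ‖deriv f z‖ * (1 - ‖z‖) ^ (n + 1) ≤ 2 ^ (n + 1) * B := by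
  rw [mem_ball_zero_iff] at hz
  obtain ⟨ρ, hρ⟩ : ∃ ρ, ρ = (1 - ‖z‖) / 2 := ⟨_, rfl⟩
  have hρ0 : 0 < ρ := by linarith
  have := cauchy1 (B := B / ρ ^ n) hρ0 hf (by linarith) (z := z) (fun w hw => by
    have h1 : ‖w‖ ≤ ‖z‖ + ρ := by linarith [norm_le_norm_add_norm_sub' w z]
    rw [le_div_iff₀ (by positivity)]
    refine le_trans ?_ (hB w (by rw [mem_ball_zero_iff]; linarith))
    gcongr
    linarith)
  rw [div_div, le_div_iff₀ (by positivity), ← pow_succ] at this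
  have e : (1 - ‖z‖) = 2 * ρ := by linarith
  rw [e, mul_pow]
  nlinarith [pow_pos (two_pos : (0 : ℝ) < 2) (n + 1)]

/-- A holomorphic function on the disk that satisfies a Riccati inequality `|y|² ≲ |y'| + …` at
the hyperbolic scale is bounded at that scale, since large values would force a pole. -/
lemma riccati_bound {y : ℂ → ℂ} {C : ℝ} (hC : 1 ≤ C) (hy : DifferentiableOn ℂ y (ball 0 1))
    (h : ∀ z ∈ ball (0 : ℂ) 1, 1 / 2 * ‖y z‖ ^ 2 * (1 - ‖z‖) ^ 2 ≤
      ‖deriv y z‖ * (1 - ‖z‖) ^ 2 + C * (‖y z‖ * (1 - ‖z‖)) + C)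
    {z : ℂ} (hz : z ∈ ball (0 : ℂ) 1) : ‖y z‖ * (1 - ‖z‖) ≤ 24 * C := by
  have hz' : ‖z‖ < 1 := by simpa using hz
  have main : ∀ R : ℝ, 0 < R → R < 1 → ‖z‖ ≤ R → (R - ‖z‖) * ‖y z‖ ≤ 24 * C := by
    intro R hR0 hR hzR
    have hsub : closedBall (0 : ℂ) R ⊆ ball 0 1 := closedBall_subset_ball hR
    -- maximize `(R - ‖w‖) ‖y w‖`; near a maximum `y` is comparable to `y w`
    obtain ⟨w, hw, hmax⟩ := (isCompact_closedBall (0 : ℂ) R).exists_isMaxOn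
      ⟨0, by simp [hR0.le]⟩ (f := fun w => (R - ‖w‖) * ‖y w‖)
      ((by fun_prop : Continuous fun w : ℂ => R - ‖w‖).continuousOn.mul
        (hy.continuousOn.mono hsub).norm)
    have hzM := hmax (a := z) (by simpa using hzR)
    simp only [Set.mem_ofPred_eq] at hzM
    refine hzM.trans ?_
    by_contra! hbig
    obtain ⟨M, hM⟩ : ∃ M, M = (R - ‖w‖) * ‖y w‖ := ⟨_, rfl⟩
    rw [← hM] at hbig
    have hwR : ‖w‖ ≤ R := by simpa using hw
    have hwR' : ‖w‖ < R := by
      rcases hwR.lt_or_eq with h1 | h1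
      · exact h1
      · rw [h1] at hM; simp at hM; linarith
    obtain ⟨s, hs⟩ : ∃ s, s = (R - ‖w‖) / 2 := ⟨_, rfl⟩
    have hs0 : 0 < s := by linarith
    have hc := cauchy1 (B := M / s) hs0 hy (z := w) (by linarith) (fun v hv => by
      have h1 : ‖v‖ ≤ ‖w‖ + s := by linarith [norm_le_norm_add_norm_sub' v w]
      have h2 := hmax (a := v) (by simp; linarith)
      simp only [Set.mem_ofPred_eq] at h2
      rw [le_div_iff₀ hs0, hM]
      refine le_trans ?_ h2
      rw [mul_comm]
      gcongr
      linarith)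
    have hy' := h w (hsub hw)
    obtain ⟨t, ht⟩ : ∃ t, t = s / (1 - ‖w‖) := ⟨_, rfl⟩
    have h1w : 0 < 1 - ‖w‖ := by linarith
    have ht0 : 0 < t := by rw [ht]; positivity
    have ht1 : t ≤ 1 / 2 := by rw [ht, div_le_iff₀ h1w]; linarith
    have hst : (1 - ‖w‖) * t = s := by rw [ht]; field_simp
    have hyw : ‖y w‖ * s = M / 2 := by rw [hM, hs]; ring
    have hc' : ‖deriv y w‖ * s ^ 2 ≤ M := by
      rw [div_div, le_div_iff₀ (by positivity)] at hc; nlinarith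
    have := mul_le_mul_of_nonneg_right hy' (sq_nonneg t)
    have e1 : 1 / 2 * ‖y w‖ ^ 2 * (1 - ‖w‖) ^ 2 * t ^ 2 = M ^ 2 / 8 := by
      have : 1 / 2 * ‖y w‖ ^ 2 * (1 - ‖w‖) ^ 2 * t ^ 2 = 1 / 2 * (‖y w‖ * s) ^ 2 := by
        rw [← hst]; ring
      rw [this, hyw]; ring
    have e2 : (‖deriv y w‖ * (1 - ‖w‖) ^ 2 + C * (‖y w‖ * (1 - ‖w‖)) + C) * t ^ 2
        = ‖deriv y w‖ * s ^ 2 + C * (M / 2) * t + C * t ^ 2 := by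
      rw [← hyw, ← hst]; ring
    rw [e1, e2] at this
    have hM1 : 24 ≤ M := by linarith
    have h3 : C * (M / 2) * t ≤ C * (M / 2) * 1 := by
      gcongr; linarith
    have h4 : C * t ^ 2 ≤ C * 1 := by gcongr; nlinarith
    nlinarith
  by_contra! hlt
  have hc : Filter.Tendsto (fun R : ℝ => (R - ‖z‖) * ‖y z‖) (nhdsWithin 1 (Set.Iio 1))
      (nhds ((1 - ‖z‖) * ‖y z‖)) :=
    ((by fun_prop : Continuous fun R : ℝ => (R - ‖z‖) * ‖y z‖).tendsto 1).mono_left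
      nhdsWithin_le_nhds
  have := le_of_tendsto (b := 24 * C) hc (by
    filter_upwards [Ioo_mem_nhdsLT (show max ‖z‖ 0 < 1 by simp [hz'])] with R hR
    exact main R ((le_max_right _ _).trans_lt hR.1) hR.2 ((le_max_left _ _).trans hR.1.le))
  linarith

/-- Coefficient bounds: Cauchy estimates for the dilatation. -/
lemma dil_bounds {h g : ℂ → ℂ} {d : ℝ} (hd1 : d < 1) (hd : DifferentiableOn ℂ h (ball 0 1))
    (gd : DifferentiableOn ℂ g (ball 0 1)) (hn : ∀ z ∈ ball (0 : ℂ) 1, deriv h z ≠ 0)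
    (hw : ∀ z ∈ ball (0 : ℂ) 1, ‖dil h g z‖ ≤ d) {z : ℂ} (hz : z ∈ ball (0 : ℂ) 1) :
    ‖deriv (dil h g) z‖ * (1 - ‖z‖) ≤ 2 ∧ ‖deriv (deriv (dil h g)) z‖ * (1 - ‖z‖) ^ 2 ≤ 8 := by
  have hD := dil_diff isOpen_ball hd gd hn
  have h1 : ∀ z ∈ ball (0 : ℂ) 1, ‖deriv (dil h g) z‖ * (1 - ‖z‖) ^ 1 ≤ 2 := fun z hz => by
    have := hyp_cauchy 0 (B := 1) hD (fun z hz => by simpa using (hw z hz).trans hd1.le) hz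
    simpa using this
  refine ⟨by simpa using h1 z hz, ?_⟩
  have := hyp_cauchy 1 (deriv_diff isOpen_ball hD) h1 hz
  norm_num at this
  exact this

/-- `S_h` is controlled by `S_f` and the first two derivatives of the dilatation. -/
lemma schw_bound {h g : ℂ → ℂ} {d c p w1 w2 : ℝ} (hd0 : 0 ≤ d) (hd1 : d < 1)
    (hd : DifferentiableOn ℂ h (ball 0 1))
    (gd : DifferentiableOn ℂ g (ball 0 1)) (hn : ∀ z ∈ ball (0 : ℂ) 1, deriv h z ≠ 0)
    {z : ℂ} (hz : z ∈ ball (0 : ℂ) 1) (hw : ‖dil h g z‖ ≤ d)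
    (hS : (1 - ‖z‖ ^ 2) ^ 2 * ‖schwH h g z‖ ≤ c)
    (hp : ‖preSch h z‖ * (1 - ‖z‖) ≤ p) (h1 : ‖deriv (dil h g) z‖ * (1 - ‖z‖) ≤ w1)
    (h2 : ‖deriv (deriv (dil h g)) z‖ * (1 - ‖z‖) ^ 2 ≤ w2) :
    ‖schw h z‖ * (1 - ‖z‖) ^ 2 ≤
      c + (p * w1 + w2) / (1 - d ^ 2) + 3 / 2 * (w1 / (1 - d ^ 2)) ^ 2 := by
  have hz' : ‖z‖ < 1 := by simpa using hz
  have hf := schwH_formula hd gd hn hz (hw.trans_lt hd1)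
  obtain ⟨ρ, hρ⟩ : ∃ ρ, ρ = 1 - ‖z‖ := ⟨_, rfl⟩
  have hρ0 : 0 < ρ := by linarith
  obtain ⟨m, hm⟩ : ∃ m, m = 1 - d ^ 2 := ⟨_, rfl⟩
  have hm0 : 0 < m := by nlinarith
  rw [← hρ] at hp h1 h2 ⊢
  rw [← hm]
  obtain ⟨q, hq⟩ : ∃ q, q = 1 - dil h g z * (starRingEnd ℂ) (dil h g z) := ⟨_, rfl⟩
  have hqm : m ≤ ‖q‖ := by
    rw [hq, Complex.mul_conj']
    have : ((1 : ℂ) - (‖dil h g z‖ : ℂ) ^ 2) = ((1 - ‖dil h g z‖ ^ 2 : ℝ) : ℂ) := by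
      push_cast; rfl
    rw [this, Complex.norm_real, Real.norm_eq_abs]
    refine le_trans ?_ (le_abs_self _)
    rw [hm]
    nlinarith [norm_nonneg (dil h g z)]
  have hq0 : q ≠ 0 := by rw [← norm_pos_iff]; linarith
  rw [← hq] at hf
  have hS' : ‖schwH h g z‖ * ρ ^ 2 ≤ c := by
    refine le_trans ?_ hS
    rw [mul_comm]
    have : ρ ≤ 1 - ‖z‖ ^ 2 := by nlinarith [norm_nonneg z]
    gcongr
  have e : schw h z = schwH h g z - (starRingEnd ℂ) (dil h g z) *
      (preSch h z * deriv (dil h g) z - deriv (deriv (dil h g)) z) / q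
      + 3 / 2 * ((starRingEnd ℂ) (dil h g z) * deriv (dil h g) z / q) ^ 2 := by
    field_simp
    linear_combination (-2) * hf
  have hwc : ‖(starRingEnd ℂ) (dil h g z)‖ ≤ 1 := by
    rw [RCLike.norm_conj]; linarith
  rw [e]
  calc _ ≤ (‖schwH h g z‖ + ‖(starRingEnd ℂ) (dil h g z)‖ * (‖preSch h z‖ * ‖deriv (dil h g) z‖
        + ‖deriv (deriv (dil h g)) z‖) / ‖q‖ + 3 / 2 * (‖(starRingEnd ℂ) (dil h g z)‖
        * ‖deriv (dil h g) z‖ / ‖q‖) ^ 2) * ρ ^ 2 := by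
        gcongr
        refine (norm_add_le _ _).trans (add_le_add ((norm_sub_le _ _).trans
          (add_le_add le_rfl ?_)) ?_)
        · rw [norm_div, norm_mul]
          gcongr
          exact (norm_sub_le _ _).trans (by rw [norm_mul])
        · rw [norm_mul, norm_pow, norm_div, norm_div, norm_mul]; norm_num
    _ ≤ (‖schwH h g z‖ + 1 * (‖preSch h z‖ * ‖deriv (dil h g) z‖
        + ‖deriv (deriv (dil h g)) z‖) / m + 3 / 2 * (1
        * ‖deriv (dil h g) z‖ / m) ^ 2) * ρ ^ 2 := by gcongr
    _ = ‖schwH h g z‖ * ρ ^ 2 + ((‖preSch h z‖ * ρ) * (‖deriv (dil h g) z‖ * ρ)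
        + ‖deriv (deriv (dil h g)) z‖ * ρ ^ 2) / m
        + 3 / 2 * ((‖deriv (dil h g) z‖ * ρ) / m) ^ 2 := by ring
    _ ≤ _ := by
        have : 0 ≤ p := le_trans (by positivity) hp
        gcongr

/-- The pre-Schwarzian of the analytic part is bounded at the hyperbolic scale. -/
lemma preSch_bound {h g : ℂ → ℂ} {d c : ℝ} (hd0 : 0 ≤ d) (hd1 : d < 1) (hc : c ≤ 1)
    (hd : DifferentiableOn ℂ h (ball 0 1))
    (gd : DifferentiableOn ℂ g (ball 0 1)) (hn : ∀ z ∈ ball (0 : ℂ) 1, deriv h z ≠ 0)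
    (hw : ∀ z ∈ ball (0 : ℂ) 1, ‖dil h g z‖ ≤ d)
    (hS : ∀ z ∈ ball (0 : ℂ) 1, (1 - ‖z‖ ^ 2) ^ 2 * ‖schwH h g z‖ ≤ c)
    {z : ℂ} (hz : z ∈ ball (0 : ℂ) 1) :
    ‖preSch h z‖ * (1 - ‖z‖) ≤
      24 * (1 + 8 / (1 - d ^ 2) + 3 / 2 * (2 / (1 - d ^ 2)) ^ 2) := by
  have hm0 : 0 < 1 - d ^ 2 := by nlinarith
  refine riccati_bound ?_ (preSch_diff isOpen_ball hd hn) (fun z hz => ?_) hz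
  · have : 0 ≤ 8 / (1 - d ^ 2) + 3 / 2 * (2 / (1 - d ^ 2)) ^ 2 := by positivity
    linarith
  obtain ⟨b1, b2⟩ := dil_bounds hd1 hd gd hn hw hz
  have hz' : ‖z‖ < 1 := by simpa using hz
  have := schw_bound hd0 hd1 hd gd hn hz (hw z hz) (hS z hz) le_rfl b1 b2
  have h3 : ‖(1 / 2 : ℂ) * preSch h z ^ 2‖ ≤ ‖deriv (preSch h) z‖ + ‖schw h z‖ := by
    have : (1 / 2 : ℂ) * preSch h z ^ 2 = deriv (preSch h) z - schw h z := by rw [schw]; ring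
    rw [this]; exact norm_sub_le _ _
  rw [norm_mul, norm_pow] at h3
  norm_num at h3
  have h4 := mul_le_mul_of_nonneg_right h3 (sq_nonneg (1 - ‖z‖))
  have h5 : 0 ≤ ‖preSch h z‖ * (1 - ‖z‖) := mul_nonneg (norm_nonneg _) (by linarith)
  rw [add_div, mul_div_assoc] at this
  have h6 : 2 / (1 - d ^ 2) ≤ 8 / (1 - d ^ 2) := by gcongr; norm_num
  have h7 := mul_le_mul_of_nonneg_left h6 h5
  have h8 : 0 ≤ 3 / 2 * (2 / (1 - d ^ 2)) ^ 2 := by positivity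
  have h9 := mul_nonneg h5 h8
  linarith

/-! ### Extraction of Taylor coefficients -/

/-- The difference quotient at `0` of a bounded holomorphic function is holomorphic and bounded, by
the Schwarz lemma. -/
lemma slope_bdd {f : ℂ → ℂ} {L : ℝ} (hf : DifferentiableOn ℂ f (ball 0 1))
    (hB : ∀ z ∈ ball (0 : ℂ) 1, ‖f z‖ ≤ L) :
    ∃ f1 : ℂ → ℂ, DifferentiableOn ℂ f1 (ball 0 1) ∧ (∀ z ∈ ball (0 : ℂ) 1, ‖f1 z‖ ≤ 2 * L) ∧
      (∀ z, f z = f 0 + z * f1 z) ∧ f1 0 = deriv f 0 := by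
  refine ⟨dslope f 0, (Complex.differentiableOn_dslope (ball_mem_nhds 0 one_pos)).2 hf,
    fun z hz => ?_, fun z => ?_, dslope_same f 0⟩
  · have h2 := Complex.norm_dslope_le_div_of_mapsTo_ball hf (R₂ := 2 * L) (fun w hw => by
      rw [mem_closedBall, dist_eq_norm]
      have := norm_sub_le (f w) (f 0)
      linarith [hB w hw, hB 0 (mem_ball_self one_pos)]) hz
    simpa using h2
  · have := sub_smul_dslope f 0 z
    simp only [sub_zero, smul_eq_mul] at this
    rw [this]; ring

/-- A primitive fifth root of unity: powers below the fifth are separated by averaging, which is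
enough to tell apart the frequencies `-2, …, 2`. -/
lemma fifth_root : ∃ z : ℂ, ‖z‖ = 1 ∧ z ^ 5 = 1 ∧ (starRingEnd ℂ) z = z ^ 4 ∧
    ∀ n : ℕ, ¬ 5 ∣ n → 1 + z ^ n + (z ^ n) ^ 2 + (z ^ n) ^ 3 + (z ^ n) ^ 4 = 0 := by
  have hp := Complex.isPrimitiveRoot_exp 5 (by norm_num)
  generalize Complex.exp _ = z at hp
  have h5 := hp.pow_eq_one
  have hn : ‖z‖ = 1 := hp.norm'_eq_one (by norm_num)
  refine ⟨z, hn, h5, ?_, fun n hn' => ?_⟩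
  · have h0 : z ≠ 0 := by rw [← norm_pos_iff, hn]; exact one_pos
    apply mul_left_cancel₀ h0
    rw [Complex.mul_conj', hn]
    rw [← pow_succ', h5]; simp
  · have h1 : z ^ n ≠ 1 := fun h => hn' ((hp.pow_eq_one_iff_dvd n).1 h)
    have h2 : (z ^ n) ^ 5 = 1 := by rw [← pow_mul, mul_comm, pow_mul, h5, one_pow]
    apply mul_left_cancel₀ (sub_ne_zero.2 h1)
    linear_combination h2

/-- Extraction of the `x̄` and `x̄²` coefficients of a quadratic polynomial in `x, x̄` by discrete
Fourier averaging over fifth roots of unity. -/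
lemma coeff_extract {t0 t1 t2 s1 s2 s : ℂ} {ρ K : ℝ} (hρ : 0 < ρ)
    (hT : ∀ x : ℂ, ‖x‖ = ρ → ‖t0 + t1 * x + t2 * x ^ 2 + s1 * (starRingEnd ℂ) x
      + s2 * (starRingEnd ℂ) x ^ 2 + s * x * (starRingEnd ℂ) x‖ ≤ K) :
    ‖s1‖ * ρ ≤ K ∧ ‖s2‖ * ρ ^ 2 ≤ K := by
  obtain ⟨z, hn, h5, hc, hS⟩ := fifth_root
  obtain ⟨T, hTdef⟩ : ∃ T : ℕ → ℂ, T = fun k => t0 + t1 * (ρ * z ^ k) + t2 * (ρ * z ^ k) ^ 2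
    + s1 * (ρ * (z ^ 4) ^ k) + s2 * (ρ * (z ^ 4) ^ k) ^ 2 + s * (ρ * z ^ k) * (ρ * (z ^ 4) ^ k) :=
    ⟨_, rfl⟩
  have hTk : ∀ k, ‖T k‖ ≤ K := fun k => by
    have := hT (ρ * z ^ k) (by simp [hn, abs_of_pos hρ])
    simpa [hTdef, hc] using this
  have hK : ∀ n : ℕ, ‖T 0 + z ^ n * T 1 + (z ^ n) ^ 2 * T 2 + (z ^ n) ^ 3 * T 3
      + (z ^ n) ^ 4 * T 4‖ ≤ 5 * K := fun n => by
    have hb : ∀ m k, ‖(z ^ n) ^ m * T k‖ ≤ K := fun m k => by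
      rw [norm_mul, norm_pow, norm_pow, hn, one_pow, one_pow, one_mul]; exact hTk k
    have h1 := norm_add_le (T 0 + z ^ n * T 1 + (z ^ n) ^ 2 * T 2 + (z ^ n) ^ 3 * T 3)
      ((z ^ n) ^ 4 * T 4)
    have h2 := norm_add_le (T 0 + z ^ n * T 1 + (z ^ n) ^ 2 * T 2) ((z ^ n) ^ 3 * T 3)
    have h3 := norm_add_le (T 0 + z ^ n * T 1) ((z ^ n) ^ 2 * T 2)
    have h4 := norm_add_le (T 0) (z ^ n * T 1)
    have h5 := hb 1 1
    rw [pow_one] at h5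
    linarith [hb 4 4, hb 3 3, hb 2 2, hTk 0]
  have e1 : T 0 + z ^ 1 * T 1 + (z ^ 1) ^ 2 * T 2 + (z ^ 1) ^ 3 * T 3
      + (z ^ 1) ^ 4 * T 4 = 5 * (s1 * ρ) := by
    simp only [hTdef]
    linear_combination t0 * hS 1 (by norm_num) + t1 * ρ * hS 2 (by norm_num)
      + t2 * ρ ^ 2 * hS 3 (by norm_num) + s2 * ρ ^ 2 * hS 9 (by norm_num)
      + s * ρ ^ 2 * hS 6 (by norm_num)
      + s1 * ρ * (z ^ 15 + 2 * z ^ 10 + 3 * z ^ 5 + 4) * h5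
  have e2 : T 0 + z ^ 2 * T 1 + (z ^ 2) ^ 2 * T 2 + (z ^ 2) ^ 3 * T 3
      + (z ^ 2) ^ 4 * T 4 = 5 * (s2 * ρ ^ 2) := by
    simp only [hTdef]
    linear_combination t0 * hS 2 (by norm_num) + t1 * ρ * hS 3 (by norm_num)
      + t2 * ρ ^ 2 * hS 4 (by norm_num) + s1 * ρ * hS 6 (by norm_num)
      + s * ρ ^ 2 * hS 7 (by norm_num)
      + s2 * ρ ^ 2 * (z^35+z^30+2*z^25+2*z^20+3*z ^ 15 + 3 * z ^ 10 + 4 * z ^ 5 + 4) * h5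
  have h1 := hK 1
  have h2 := hK 2
  rw [e1, norm_mul, norm_mul, Complex.norm_real, Real.norm_of_nonneg hρ.le] at h1
  rw [e2, norm_mul, norm_mul, norm_pow, Complex.norm_real, Real.norm_of_nonneg hρ.le] at h2
  norm_num at h1 h2
  exact ⟨h1, h2⟩

/-! ### Rigidity of quadratic polynomials in a conjugated function -/

/-- If the polynomial `c0 + c1 ω̄ + c2 ω̄²` with holomorphic coefficients is small, then its `x̄` and
`x̄²` Taylor coefficients at `0` nearly vanish. Unless `ω'(0)` is small, this forces the polynomial
in `ω̄` to be nearly zero, and `hid` contradicts this. The quantitative form bounds `‖ω'(0)‖`. -/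
lemma quad_rigid {om c0 c1 c2 : ℂ → ℂ} {L ρ : ℝ} (hL : 1 ≤ L) (hρ : 0 < ρ) (hρ1 : ρ < 1)
    (dom : DifferentiableOn ℂ om (ball 0 1)) (d0 : DifferentiableOn ℂ c0 (ball 0 1))
    (d1 : DifferentiableOn ℂ c1 (ball 0 1)) (d2 : DifferentiableOn ℂ c2 (ball 0 1))
    (hom : ∀ x ∈ ball (0 : ℂ) 1, ‖om x‖ ≤ 1) (h0 : ∀ x ∈ ball (0 : ℂ) 1, ‖c0 x‖ ≤ L)
    (h1 : ∀ x ∈ ball (0 : ℂ) 1, ‖c1 x‖ ≤ L) (h2 : ∀ x ∈ ball (0 : ℂ) 1, ‖c2 x‖ ≤ L)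
    (hG : ∀ x ∈ ball (0 : ℂ) 1, ‖c0 x + c1 x * (starRingEnd ℂ) (om x)
      + c2 x * (starRingEnd ℂ) (om x) ^ 2‖ ≤ ρ ^ 3)
    (hid : c2 0 + om 0 * c1 0 + om 0 ^ 2 * c0 0 = - (3 / 2) * deriv om 0 ^ 2) :
    ‖deriv om 0‖ ^ 5 ≤ 2000 * L * ρ := by
  have m0 : (0 : ℂ) ∈ ball (0 : ℂ) 1 := mem_ball_self one_pos
  -- recentre the polynomial at the value of the dilatation at the origin
  obtain ⟨w, hw⟩ : ∃ w, w = (starRingEnd ℂ) (om 0) := ⟨_, rfl⟩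
  have hw1 : ‖w‖ ≤ 1 := by rw [hw, RCLike.norm_conj]; exact hom 0 m0
  obtain ⟨p, hp⟩ : ∃ p : ℂ → ℂ, p = fun x => c1 x + 2 * c2 x * w := ⟨_, rfl⟩
  obtain ⟨t, ht⟩ : ∃ t : ℂ → ℂ, t = fun x => c0 x + c1 x * w + c2 x * w ^ 2 := ⟨_, rfl⟩
  have dp : DifferentiableOn ℂ p (ball 0 1) := by rw [hp]; fun_prop
  have dt : DifferentiableOn ℂ t (ball 0 1) := by rw [ht]; fun_prop
  have bp : ∀ x ∈ ball (0 : ℂ) 1, ‖p x‖ ≤ 3 * L := fun x hx => by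
    rw [hp]
    calc _ ≤ ‖c1 x‖ + ‖2 * c2 x * w‖ := norm_add_le _ _
      _ = ‖c1 x‖ + 2 * ‖c2 x‖ * ‖w‖ := by rw [norm_mul, norm_mul]; norm_num
      _ ≤ L + 2 * L * 1 := by gcongr; exacts [h1 x hx, h2 x hx]
      _ = _ := by ring
  have bt : ∀ x ∈ ball (0 : ℂ) 1, ‖t x‖ ≤ 3 * L := fun x hx => by
    rw [ht]
    calc _ ≤ ‖c0 x‖ + ‖c1 x * w‖ + ‖c2 x * w ^ 2‖ := norm_add₃_le
      _ = ‖c0 x‖ + ‖c1 x‖ * ‖w‖ + ‖c2 x‖ * ‖w‖ ^ 2 := by rw [norm_mul, norm_mul, norm_pow]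
      _ ≤ L + L * 1 + L * 1 ^ 2 := by gcongr; exacts [h0 x hx, h1 x hx, h2 x hx]
      _ = _ := by ring
  -- iterated difference quotients give Taylor expansions at `0` with bounded remainders
  obtain ⟨o1, do1, bo1, eo1, vo1⟩ := slope_bdd dom hom
  obtain ⟨o2, do2, bo2, eo2, -⟩ := slope_bdd do1 bo1
  obtain ⟨o3, do3, bo3, eo3, -⟩ := slope_bdd do2 bo2
  obtain ⟨p1, dp1, bp1, ep1, -⟩ := slope_bdd dp bp
  obtain ⟨p2, dp2, bp2, ep2, -⟩ := slope_bdd dp1 bp1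
  obtain ⟨t1, dt1, bt1, et1, -⟩ := slope_bdd dt bt
  obtain ⟨t2, dt2, bt2, et2, -⟩ := slope_bdd dt1 bt1
  obtain ⟨t3, dt3, bt3, et3, -⟩ := slope_bdd dt2 bt2
  obtain ⟨q1, dq1, bq1, eq1, -⟩ := slope_bdd d2 h2
  obtain ⟨cj, hcj⟩ : ∃ cj : ℂ → ℂ, cj = fun z => (starRingEnd ℂ) z := ⟨_, rfl⟩
  have ncj : ∀ z, ‖cj z‖ = ‖z‖ := fun z => by rw [hcj]; exact RCLike.norm_conj z
  have key : ∀ x : ℂ, ‖x‖ = ρ → ‖t 0 + t1 0 * x + t2 0 * x ^ 2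
      + (p 0 * cj (o1 0)) * (starRingEnd ℂ) x
      + (p 0 * cj (o2 0) + c2 0 * cj (o1 0) ^ 2) * (starRingEnd ℂ) x ^ 2
      + (p1 0 * cj (o1 0)) * x * (starRingEnd ℂ) x‖
      ≤ ρ ^ 3 + 120 * L * ρ ^ 3 := fun x hx => by
    have hx1 : x ∈ ball (0 : ℂ) 1 := by rw [mem_ball_zero_iff, hx]; exact hρ1
    have hnx : ‖cj x‖ = ρ := by rw [ncj, hx]
    have e : t 0 + t1 0 * x + t2 0 * x ^ 2
      + (p 0 * cj (o1 0)) * (starRingEnd ℂ) x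
      + (p 0 * cj (o2 0) + c2 0 * cj (o1 0) ^ 2) * (starRingEnd ℂ) x ^ 2
      + (p1 0 * cj (o1 0)) * x * (starRingEnd ℂ) x =
      (c0 x + c1 x * (starRingEnd ℂ) (om x) + c2 x * (starRingEnd ℂ) (om x) ^ 2)
      - x ^ 3 * t3 x - p 0 * cj x ^ 3 * cj (o3 x) - p1 0 * x * cj x ^ 2 * cj (o2 x)
      - x ^ 2 * p2 x * cj x * cj (o1 x) - x * q1 x * cj x ^ 2 * cj (o1 x) ^ 2
      - c2 0 * cj x ^ 3 * cj (o2 x) * cj (o1 x) - c2 0 * cj x ^ 3 * cj (o2 x) * cj (o1 0) := by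
      have a1 : (starRingEnd ℂ) (om x) = w + cj x * cj (o1 x) := by
        rw [eo1 x, hw, hcj]; simp
      have a2 : cj (o1 x) = cj (o1 0) + cj x * cj (o2 x) := by
        rw [eo2 x, hcj]; simp
      have a3 : cj (o2 x) = cj (o2 0) + cj x * cj (o3 x) := by
        rw [eo3 x, hcj]; simp
      have b1 : t x = t 0 + x * t1 0 + x ^ 2 * t2 0 + x ^ 3 * t3 x := by
        rw [et1 x, et2 x, et3 x]; ring
      have b2 : p x = p 0 + x * p1 0 + x ^ 2 * p2 x := by
        rw [ep1 x, ep2 x]; ring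
      have b3 := eq1 x
      have a4 : (starRingEnd ℂ) x = cj x := by rw [hcj]
      have b4 : c0 x + c1 x * (w + cj x * cj (o1 x)) + c2 x * (w + cj x * cj (o1 x)) ^ 2
        = t x + p x * (cj x * cj (o1 x)) + c2 x * (cj x * cj (o1 x)) ^ 2 := by
        rw [ht, hp]; ring
      rw [a1, b4, b1, b2, b3, a4]
      generalize c2 0 = q0 at *
      generalize cj x = y at *
      rw [a2, a3]
      ring
    rw [e]
    have n1 : ‖x ^ 3 * t3 x‖ ≤ ρ ^ 3 * (24 * L) := by
      rw [norm_mul, norm_pow, hx]; gcongr; linarith [bt3 x hx1]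
    have n2 : ‖p 0 * cj x ^ 3 * cj (o3 x)‖ ≤ (3 * L) * ρ ^ 3 * 8 := by
      rw [norm_mul, norm_mul, norm_pow, hnx, ncj]
      gcongr
      · exact bp 0 m0
      · linarith [bo3 x hx1]
    have n3 : ‖p1 0 * x * cj x ^ 2 * cj (o2 x)‖ ≤ (6 * L) * ρ * ρ ^ 2 * 4 := by
      rw [norm_mul, norm_mul, norm_mul, norm_pow, hnx, ncj, hx]
      gcongr
      · linarith [bp1 0 m0]
      · linarith [bo2 x hx1]
    have n4 : ‖x ^ 2 * p2 x * cj x * cj (o1 x)‖ ≤ ρ ^ 2 * (12 * L) * ρ * 2 := by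
      rw [norm_mul, norm_mul, norm_mul, norm_pow, hnx, ncj, hx]
      gcongr
      · linarith [bp2 x hx1]
      · linarith [bo1 x hx1]
    have n5 : ‖x * q1 x * cj x ^ 2 * cj (o1 x) ^ 2‖ ≤ ρ * (2 * L) * ρ ^ 2 * 2 ^ 2 := by
      rw [norm_mul, norm_mul, norm_mul, norm_pow, norm_pow, hnx, ncj, hx]
      gcongr
      · linarith [bq1 x hx1]
      · linarith [bo1 x hx1]
    have n6 : ‖c2 0 * cj x ^ 3 * cj (o2 x) * cj (o1 x)‖ ≤ L * ρ ^ 3 * 4 * 2 := by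
      rw [norm_mul, norm_mul, norm_mul, norm_pow, hnx, ncj, ncj]
      gcongr
      · exact h2 0 m0
      · linarith [bo2 x hx1]
      · linarith [bo1 x hx1]
    have n7 : ‖c2 0 * cj x ^ 3 * cj (o2 x) * cj (o1 0)‖ ≤ L * ρ ^ 3 * 4 * 2 := by
      rw [norm_mul, norm_mul, norm_mul, norm_pow, hnx, ncj, ncj]
      gcongr
      · exact h2 0 m0
      · linarith [bo2 x hx1]
      · linarith [bo1 0 m0]
    refine (norm_sub_le_of_le (norm_sub_le_of_le (norm_sub_le_of_le (norm_sub_le_of_le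
      (norm_sub_le_of_le (norm_sub_le_of_le (norm_sub_le_of_le (hG x hx1) n1) n2) n3) n4) n5)
      n6) n7).trans (le_of_eq (by ring))
  obtain ⟨k1, k2⟩ := coeff_extract hρ key
  rw [vo1] at k1 k2
  obtain ⟨a, ha⟩ : ∃ a, a = deriv om 0 := ⟨_, rfl⟩
  rw [← ha] at k1 k2 hid ⊢
  have na : ‖a‖ ≤ 2 := by have := bo1 0 m0; rw [vo1, ← ha] at this; linarith
  have k0 : ‖t 0‖ ≤ ρ ^ 3 := by
    have := hG 0 m0; rw [← hw] at this; rw [ht]; exact this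
  have j1 : ‖p 0‖ * ‖a‖ ≤ 121 * L * ρ ^ 2 := by
    rw [norm_mul, ncj] at k1
    have : ‖p 0‖ * ‖a‖ * ρ ≤ (121 * L * ρ ^ 2) * ρ := by
      refine k1.trans ?_
      nlinarith [pow_pos hρ 3]
    exact le_of_mul_le_mul_right this hρ
  have j2 : ‖p 0 * cj (o2 0) + c2 0 * cj a ^ 2‖ ≤ 121 * L * ρ := by
    have : ‖p 0 * cj (o2 0) + c2 0 * cj a ^ 2‖ * ρ ^ 2 ≤ (121 * L * ρ) * ρ ^ 2 := by
      refine k2.trans ?_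
      nlinarith [pow_pos hρ 3]
    exact le_of_mul_le_mul_right this (by positivity)
  have hρ2 : ρ ^ 2 ≤ ρ := by nlinarith
  have hρ3 : ρ ^ 3 ≤ ρ := by nlinarith
  have j3 : ‖c2 0‖ * ‖a‖ ^ 3 ≤ 726 * L * ρ := by
    have : ‖c2 0‖ * ‖a‖ ^ 2 ≤ 121 * L * ρ + ‖p 0‖ * 4 := by
      have e : c2 0 * cj a ^ 2 = (p 0 * cj (o2 0) + c2 0 * cj a ^ 2) - p 0 * cj (o2 0) := by ring
      have h3 := norm_sub_le_of_le j2 (le_refl ‖p 0 * cj (o2 0)‖)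
      rw [← e, norm_mul, norm_mul, norm_pow, ncj, ncj] at h3
      refine h3.trans ?_
      gcongr
      linarith [bo2 0 m0]
    calc ‖c2 0‖ * ‖a‖ ^ 3 = (‖c2 0‖ * ‖a‖ ^ 2) * ‖a‖ := by ring
      _ ≤ (121 * L * ρ + ‖p 0‖ * 4) * ‖a‖ := by gcongr
      _ = 121 * L * ρ * ‖a‖ + 4 * (‖p 0‖ * ‖a‖) := by ring
      _ ≤ 121 * L * ρ * 2 + 4 * (121 * L * ρ ^ 2) := by gcongr
      _ ≤ _ := by nlinarith
  obtain ⟨r, hr⟩ : ∃ r, r = om 0 * w := ⟨_, rfl⟩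
  have hr1 : ‖1 - r‖ ≤ 1 := by
    rw [hr, hw, Complex.mul_conj']
    have : ((1 : ℂ) - (‖om 0‖ : ℂ) ^ 2) = ((1 - ‖om 0‖ ^ 2 : ℝ) : ℂ) := by push_cast; rfl
    rw [this, Complex.norm_real, Real.norm_eq_abs, abs_le]
    constructor <;> nlinarith [hom 0 m0, norm_nonneg (om 0)]
  -- `hid` in terms of the recentred coefficients `t`, `p`, `c2`
  have hid2 : (3 / 2) * a ^ 2 = - ((1 - r) ^ 2 * c2 0 + (1 - r) * om 0 * p 0
      + om 0 ^ 2 * t 0) := by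
    rw [hp, ht, hr]; linear_combination hid
  have hn := congrArg norm hid2
  rw [norm_neg, norm_mul, norm_pow] at hn
  norm_num at hn
  have hsum : 3 / 2 * ‖a‖ ^ 2 ≤ ‖c2 0‖ + ‖p 0‖ + ρ ^ 3 := by
    rw [hn]
    refine norm_add₃_le.trans ?_
    have : ‖om 0‖ ≤ 1 := hom 0 m0
    simp only [norm_mul, norm_pow]
    gcongr
    · exact mul_le_of_le_one_left (norm_nonneg _) (pow_le_one₀ (norm_nonneg _) hr1)
    · exact mul_le_of_le_one_left (norm_nonneg _) (mul_le_one₀ hr1 (norm_nonneg _) this)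
    · exact (mul_le_of_le_one_left (norm_nonneg _) (pow_le_one₀ (norm_nonneg _) this)).trans k0
  have ha3 : ‖a‖ ^ 3 ≤ 8 := by
    calc ‖a‖ ^ 3 ≤ 2 ^ 3 := by gcongr
      _ = 8 := by norm_num
  have ha2 : ‖a‖ ^ 2 ≤ 4 := by
    calc ‖a‖ ^ 2 ≤ 2 ^ 2 := by gcongr
      _ = 4 := by norm_num
  have f1 : 3 / 2 * ‖a‖ ^ 5 ≤ ‖c2 0‖ * ‖a‖ ^ 3 + (‖p 0‖ * ‖a‖) * ‖a‖ ^ 2 + ρ ^ 3 * ‖a‖ ^ 3 := by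
    have := mul_le_mul_of_nonneg_right hsum (pow_nonneg (norm_nonneg a) 3)
    nlinarith
  have f2 : (‖p 0‖ * ‖a‖) * ‖a‖ ^ 2 ≤ (121 * L * ρ ^ 2) * 4 := by gcongr
  have f3 : ρ ^ 3 * ‖a‖ ^ 3 ≤ ρ ^ 3 * 8 := by gcongr
  have : 0 ≤ ‖a‖ ^ 5 := by positivity
  nlinarith

/-! ### Smallness of the dilatation derivative and of the Schwarzian -/

/-- The rigidity estimate rescaled to the disk of radius `(1 - ‖z‖) / 2` about `z`. -/
lemma dil_small {h g : ℂ → ℂ} {d c ρ Q S : ℝ} (hd1 : d < 1) (hρ : 0 < ρ) (hρ1 : ρ < 1)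
    (hc : c ≤ ρ ^ 3)
    (hd : DifferentiableOn ℂ h (ball 0 1))
    (gd : DifferentiableOn ℂ g (ball 0 1)) (hn : ∀ z ∈ ball (0 : ℂ) 1, deriv h z ≠ 0)
    (hw : ∀ z ∈ ball (0 : ℂ) 1, ‖dil h g z‖ ≤ d)
    (hS : ∀ z ∈ ball (0 : ℂ) 1, (1 - ‖z‖ ^ 2) ^ 2 * ‖schwH h g z‖ ≤ c)
    (hP : ∀ z ∈ ball (0 : ℂ) 1, ‖preSch h z‖ * (1 - ‖z‖) ≤ Q)
    (hA : ∀ z ∈ ball (0 : ℂ) 1, ‖schw h z‖ * (1 - ‖z‖) ^ 2 ≤ S)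
    {z : ℂ} (hz : z ∈ ball (0 : ℂ) 1) :
    (‖deriv (dil h g) z‖ * (1 - ‖z‖) / 2) ^ 5 ≤ 2000 * (2 * S + 2 * Q + 14) * ρ := by
  have hU : IsOpen (ball (0 : ℂ) 1) := isOpen_ball
  have hz' : ‖z‖ < 1 := by simpa using hz
  obtain ⟨r, hr⟩ : ∃ r, r = (1 - ‖z‖) / 2 := ⟨_, rfl⟩
  have hr0 : 0 < r := by linarith
  obtain ⟨φ, hφ⟩ : ∃ φ : ℂ → ℂ, φ = fun x => z + r * x := ⟨_, rfl⟩
  have hφn : ∀ x ∈ ball (0 : ℂ) 1, r ≤ 1 - ‖φ x‖ := fun x hx => by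
    rw [mem_ball_zero_iff] at hx
    have : ‖φ x‖ ≤ ‖z‖ + r * ‖x‖ := by
      rw [hφ]; refine (norm_add_le _ _).trans ?_
      rw [norm_mul, Complex.norm_real, Real.norm_of_nonneg hr0.le]
    nlinarith
  have hφb : ∀ x ∈ ball (0 : ℂ) 1, φ x ∈ ball (0 : ℂ) 1 := fun x hx => by
    rw [mem_ball_zero_iff]; linarith [hφn x hx]
  have dφ : DifferentiableOn ℂ φ (ball 0 1) := by rw [hφ]; fun_prop
  have φ0 : φ 0 = z := by rw [hφ]; simp
  have dW := dil_diff hU hd gd hn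
  have dW1 := deriv_diff hU dW
  have dW2 := deriv_diff hU dW1
  have dP := preSch_diff hU hd hn
  have dA : DifferentiableOn ℂ (schw h) (ball 0 1) := by
    have := deriv_diff hU dP
    unfold schw; fun_prop
  have comp : ∀ {F : ℂ → ℂ}, DifferentiableOn ℂ F (ball 0 1) →
      DifferentiableOn ℂ (fun x => F (φ x)) (ball 0 1) := fun hF => hF.comp dφ hφb
  have cA := comp dA
  have cW := comp dW
  have cW1 := comp dW1
  have cW2 := comp dW2
  have cP := comp dP
  have bA : ∀ x ∈ ball (0 : ℂ) 1, ‖schw h (φ x)‖ * r ^ 2 ≤ S := fun x hx => by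
    refine le_trans ?_ (hA _ (hφb x hx)); gcongr; exact hφn x hx
  have bP : ∀ x ∈ ball (0 : ℂ) 1, ‖preSch h (φ x)‖ * r ≤ Q := fun x hx => by
    refine le_trans ?_ (hP _ (hφb x hx)); gcongr; exact hφn x hx
  have bW1 : ∀ x ∈ ball (0 : ℂ) 1, ‖deriv (dil h g) (φ x)‖ * r ≤ 2 := fun x hx => by
    refine le_trans ?_ (dil_bounds hd1 hd gd hn hw (hφb x hx)).1; gcongr; exact hφn x hx
  have bW2 : ∀ x ∈ ball (0 : ℂ) 1, ‖deriv (deriv (dil h g)) (φ x)‖ * r ^ 2 ≤ 8 := fun x hx => by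
    refine le_trans ?_ (dil_bounds hd1 hd gd hn hw (hφb x hx)).2; gcongr; exact hφn x hx
  have bW : ∀ x ∈ ball (0 : ℂ) 1, ‖dil h g (φ x)‖ ≤ 1 := fun x hx =>
    (hw _ (hφb x hx)).trans hd1.le
  have m0 : (0 : ℂ) ∈ ball (0 : ℂ) 1 := mem_ball_self one_pos
  have hS0 : 0 ≤ S := le_trans (by positivity) (bA 0 m0)
  have hQ0 : 0 ≤ Q := le_trans (by positivity) (bP 0 m0)
  have nr : ‖(r : ℂ)‖ = r := by rw [Complex.norm_real, Real.norm_of_nonneg hr0.le]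
  have hder : deriv (fun x => dil h g (φ x)) 0 = r * deriv (dil h g) z := by
    have h1 : HasDerivAt φ (r : ℂ) 0 := by
      rw [hφ]; simpa using ((hasDerivAt_id (0 : ℂ)).const_mul (r : ℂ)).const_add z
    have h2 : HasDerivAt (dil h g) (deriv (dil h g) (φ 0)) (φ 0) := hda dW hU (hφb 0 m0)
    have := (h2.comp 0 h1).deriv
    rw [φ0] at this
    rw [mul_comm, ← this]; rfl
  obtain ⟨B, hB⟩ : ∃ B : ℂ → ℂ, B = fun x => preSch h (φ x) * deriv (dil h g) (φ x)
    - deriv (deriv (dil h g)) (φ x) := ⟨_, rfl⟩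
  have dB : DifferentiableOn ℂ B (ball 0 1) := by rw [hB]; fun_prop
  have bB : ∀ x ∈ ball (0 : ℂ) 1, ‖B x‖ * r ^ 2 ≤ 2 * Q + 8 := fun x hx => by
    have h1 : ‖B x‖ ≤ ‖preSch h (φ x)‖ * ‖deriv (dil h g) (φ x)‖
      + ‖deriv (deriv (dil h g)) (φ x)‖ := by
      rw [hB]; exact (norm_sub_le _ _).trans (by rw [norm_mul])
    calc _ ≤ (‖preSch h (φ x)‖ * ‖deriv (dil h g) (φ x)‖
      + ‖deriv (deriv (dil h g)) (φ x)‖) * r ^ 2 := by gcongr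
      _ = (‖preSch h (φ x)‖ * r) * (‖deriv (dil h g) (φ x)‖ * r)
        + ‖deriv (deriv (dil h g)) (φ x)‖ * r ^ 2 := by ring
      _ ≤ Q * 2 + 8 := by gcongr; exacts [bP x hx, bW1 x hx, bW2 x hx]
      _ = _ := by ring
  have fin := quad_rigid (om := fun x => dil h g (φ x)) (L := 2 * S + 2 * Q + 14)
    (c0 := fun x => r ^ 2 * schw h (φ x))
    (c1 := fun x => r ^ 2 * (-2 * schw h (φ x) * dil h g (φ x) + B x))
    (c2 := fun x => r ^ 2 * (schw h (φ x) * dil h g (φ x) ^ 2 - dil h g (φ x) * B x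
      - 3 / 2 * deriv (dil h g) (φ x) ^ 2)) (by linarith) hρ hρ1 cW (by fun_prop) (by fun_prop)
      (by fun_prop) bW (fun x hx => ?_) (fun x hx => ?_) (fun x hx => ?_) (fun x hx => ?_) ?_
  · rw [hder, norm_mul, nr] at fin
    refine le_trans (le_of_eq ?_) fin
    rw [hr]; ring
  · rw [norm_mul, norm_pow, nr, mul_comm]; linarith [bA x hx]
  · rw [norm_mul, norm_pow, nr]
    calc _ ≤ r ^ 2 * (2 * ‖schw h (φ x)‖ * ‖dil h g (φ x)‖ + ‖B x‖) := by
          gcongr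
          refine (norm_add_le _ _).trans (le_of_eq ?_)
          rw [norm_mul, norm_mul]; norm_num
      _ = 2 * (‖schw h (φ x)‖ * r ^ 2) * ‖dil h g (φ x)‖ + ‖B x‖ * r ^ 2 := by ring
      _ ≤ 2 * S * 1 + (2 * Q + 8) := by gcongr; exacts [bA x hx, bW x hx, bB x hx]
      _ ≤ _ := by linarith
  · rw [norm_mul, norm_pow, nr]
    calc _ ≤ r ^ 2 * (‖schw h (φ x)‖ * ‖dil h g (φ x)‖ ^ 2 + ‖dil h g (φ x)‖ * ‖B x‖
          + 3 / 2 * ‖deriv (dil h g) (φ x)‖ ^ 2) := by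
          gcongr
          refine (norm_sub_le_of_le (norm_sub_le _ _) le_rfl).trans (le_of_eq ?_)
          rw [norm_mul, norm_mul, norm_mul, norm_pow, norm_pow]; norm_num
      _ = (‖schw h (φ x)‖ * r ^ 2) * ‖dil h g (φ x)‖ ^ 2 + ‖dil h g (φ x)‖ * (‖B x‖ * r ^ 2)
          + 3 / 2 * (‖deriv (dil h g) (φ x)‖ * r) ^ 2 := by ring
      _ ≤ S * 1 ^ 2 + 1 * (2 * Q + 8) + 3 / 2 * 2 ^ 2 := by
          gcongr; exacts [bA x hx, bW x hx, bW x hx, bB x hx, bW1 x hx]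
      _ ≤ _ := by linarith
  · have hb := hφb x hx
    have hf := schwH_formula hd gd hn hb ((hw _ hb).trans_lt hd1)
    have e : (r : ℂ) ^ 2 * schw h (φ x) + r ^ 2 * (-2 * schw h (φ x) * dil h g (φ x) + B x)
        * (starRingEnd ℂ) (dil h g (φ x))
        + r ^ 2 * (schw h (φ x) * dil h g (φ x) ^ 2 - dil h g (φ x) * B x
      - 3 / 2 * deriv (dil h g) (φ x) ^ 2) * (starRingEnd ℂ) (dil h g (φ x)) ^ 2
      = r ^ 2 * (schwH h g (φ x) * (1 - dil h g (φ x) * (starRingEnd ℂ) (dil h g (φ x))) ^ 2) := by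
      rw [hf, hB]; ring
    rw [e, norm_mul, norm_mul, norm_pow, norm_pow, nr]
    have h1 : ‖(1 - dil h g (φ x) * (starRingEnd ℂ) (dil h g (φ x)))‖ ≤ 1 := by
      rw [Complex.mul_conj']
      have : ((1 : ℂ) - (‖dil h g (φ x)‖ : ℂ) ^ 2) = ((1 - ‖dil h g (φ x)‖ ^ 2 : ℝ) : ℂ) := by
        push_cast; rfl
      rw [this, Complex.norm_real, Real.norm_eq_abs, abs_le]
      constructor <;> nlinarith [bW x hx, norm_nonneg (dil h g (φ x))]
    have h2 : r ≤ 1 - ‖φ x‖ ^ 2 := by nlinarith [hφn x hx, norm_nonneg (φ x)]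
    calc _ ≤ (1 - ‖φ x‖ ^ 2) ^ 2 * (‖schwH h g (φ x)‖ * 1 ^ 2) := by gcongr
      _ ≤ c := by rw [one_pow, mul_one]; exact hS _ hb
      _ ≤ _ := hc
  · rw [hder]
    rw [φ0]; ring

/-- The analytic heart of the smallness reduction: a small harmonic Schwarzian forces both the
hyperbolic derivative of the dilatation and the Schwarzian of `h` to be small, while the
pre-Schwarzian of `h` stays bounded in terms of `d` only. -/
lemma smallness (d : ℝ) (hd0 : 0 ≤ d) (hd1 : d < 1) : ∃ M : ℝ, 0 < M ∧ ∀ δ : ℝ, 0 < δ →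
    ∃ c : ℝ, 0 < c ∧ ∀ h g : ℂ → ℂ,
        DifferentiableOn ℂ h (ball 0 1) → DifferentiableOn ℂ g (ball 0 1) →
        (∀ z ∈ ball (0 : ℂ) 1, deriv h z ≠ 0) →
        (∀ z ∈ ball (0 : ℂ) 1, ‖dil h g z‖ ≤ d) →
        (∀ z ∈ ball (0 : ℂ) 1, (1 - ‖z‖ ^ 2) ^ 2 * ‖schwH h g z‖ ≤ c) →
        ∀ z ∈ ball (0 : ℂ) 1, (1 - ‖z‖ ^ 2) * ‖preSch h z‖ ≤ M ∧
          (1 - ‖z‖ ^ 2) * ‖deriv (dil h g) z‖ ≤ δ ∧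
          (1 - ‖z‖ ^ 2) ^ 2 * ‖schw h z‖ ≤ δ := by
  obtain ⟨m, hm⟩ : ∃ m, m = 1 - d ^ 2 := ⟨_, rfl⟩
  have hm0 : 0 < m := by nlinarith
  obtain ⟨Q, hQ⟩ : ∃ Q, Q = 24 * (1 + 8 / m + 3 / 2 * (2 / m) ^ 2) := ⟨_, rfl⟩
  have hQ0 : 0 < Q := by rw [hQ]; positivity
  obtain ⟨S, hS⟩ : ∃ S, S = 1 + (Q * 2 + 8) / m + 3 / 2 * (2 / m) ^ 2 := ⟨_, rfl⟩
  have hS0 : 0 < S := by rw [hS]; positivity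
  obtain ⟨L, hL⟩ : ∃ L, L = 2 * S + 2 * Q + 14 := ⟨_, rfl⟩
  have hL0 : 0 < L := by rw [hL]; positivity
  refine ⟨2 * Q, by linarith, fun δ hδ => ?_⟩
  obtain ⟨η, hη⟩ : ∃ η, η = min m (min (δ / 2) (δ * m / (8 * (Q + 6)))) := ⟨_, rfl⟩
  have hη0 : 0 < η := by rw [hη]; positivity
  have hη1 : η ≤ m := by rw [hη]; exact min_le_left _ _
  have hη2 : η ≤ δ / 2 := by rw [hη]; exact (min_le_right _ _).trans (min_le_left _ _)
  have hη3 : η * (8 * (Q + 6)) ≤ δ * m := by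
    rw [← le_div_iff₀ (by positivity), hη]; exact (min_le_right _ _).trans (min_le_right _ _)
  obtain ⟨ρ, hρ⟩ : ∃ ρ, ρ = min (1 / 2) ((η / 2) ^ 5 / (2000 * L)) := ⟨_, rfl⟩
  have hρ0 : 0 < ρ := by rw [hρ]; positivity
  have hρ1 : ρ ≤ 1 / 2 := by rw [hρ]; exact min_le_left _ _
  have hρ2 : 2000 * L * ρ ≤ (η / 2) ^ 5 := by
    rw [mul_comm, ← le_div_iff₀ (by positivity), hρ]; exact min_le_right _ _
  obtain ⟨c, hc⟩ : ∃ c, c = min (δ / 8) (ρ ^ 3) := ⟨_, rfl⟩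
  have hc1 : c ≤ δ / 8 := by rw [hc]; exact min_le_left _ _
  have hc2 : c ≤ ρ ^ 3 := by rw [hc]; exact min_le_right _ _
  have hc3 : c ≤ 1 := hc2.trans (pow_le_one₀ hρ0.le (by linarith))
  refine ⟨c, by rw [hc]; positivity, fun h g hd gd hn hw hSf => ?_⟩
  have hP : ∀ z ∈ ball (0 : ℂ) 1, ‖preSch h z‖ * (1 - ‖z‖) ≤ Q := fun z hz => by
    rw [hQ, hm]; exact preSch_bound hd0 hd1 hc3 hd gd hn hw hSf hz
  have hA : ∀ z ∈ ball (0 : ℂ) 1, ‖schw h z‖ * (1 - ‖z‖) ^ 2 ≤ S := fun z hz => by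
    obtain ⟨b1, b2⟩ := dil_bounds hd1 hd gd hn hw hz
    rw [hS, hm]
    exact (schw_bound hd0 hd1 hd gd hn hz (hw z hz) ((hSf z hz).trans hc3) (hP z hz) b1 b2)
  have hW : ∀ z ∈ ball (0 : ℂ) 1, ‖deriv (dil h g) z‖ * (1 - ‖z‖) ≤ η := fun z hz => by
    have h1 := dil_small hd1 hρ0 (by linarith) hc2 hd gd hn hw hSf hP hA hz
    rw [← hL] at h1
    have h2 := le_of_pow_le_pow_left₀ (n := 5) (by norm_num) (by linarith) (h1.trans hρ2)
    linarith
  intro z hz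
  have hz' : ‖z‖ < 1 := by simpa using hz
  have e : 1 - ‖z‖ ^ 2 ≤ 2 * (1 - ‖z‖) := by nlinarith
  have e0 : 0 ≤ 1 - ‖z‖ ^ 2 := by nlinarith [norm_nonneg z]
  refine ⟨?_, ?_, ?_⟩
  · calc _ ≤ 2 * (1 - ‖z‖) * ‖preSch h z‖ := by gcongr
      _ ≤ _ := by linarith [hP z hz]
  · calc _ ≤ 2 * (1 - ‖z‖) * ‖deriv (dil h g) z‖ := by gcongr
      _ ≤ _ := by linarith [hW z hz]
  · have hW2 := hyp_cauchy 1 (deriv_diff isOpen_ball (dil_diff isOpen_ball hd gd hn))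
      (B := η) (by simpa using hW) hz
    have h1 := schw_bound hd0 hd1 hd gd hn hz (hw z hz) (hSf z hz) (hP z hz) (hW z hz) hW2
    rw [← hm] at h1
    have h2 : (η / m) ^ 2 ≤ η / m := by
      have h3 : η / m ≤ 1 := (div_le_one hm0).2 hη1
      have h4 : 0 < η / m := by positivity
      nlinarith
    have h3 : (η / m) * (8 * (Q + 6)) ≤ δ := by
      rw [div_mul_eq_mul_div, div_le_iff₀ hm0]; exact hη3
    have h4 : (Q * η + 2 ^ (1 + 1) * η) / m = (η / m) * (Q + 4) := by ring
    rw [h4] at h1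
    have h5 : 0 < η / m := by positivity
    calc _ ≤ (2 * (1 - ‖z‖)) ^ 2 * ‖schw h z‖ := by gcongr
      _ = 4 * (‖schw h z‖ * (1 - ‖z‖) ^ 2) := by ring
      _ ≤ 4 * (c + η / m * (Q + 4) + 3 / 2 * (η / m) ^ 2) := by gcongr
      _ ≤ δ := by nlinarith

/-! ### Riccati equations along rays -/

/-- Growth of the solutions of the Riccati equation `y' = e (y²/2 + s)` and of the associated
linear equations along a ray, when `|s| ≤ δ / (1 - t²)²`. -/
lemma ray_bounds {y l χ s : ℝ → ℂ} {e : ℂ} {δ T : ℝ} (hδ : 0 < δ) (hδ1 : δ ≤ 1 / 4) (hT : T ≤ 1)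
    (he : ‖e‖ = 1)
    (hy : ∀ t, 0 ≤ t → t < T → HasDerivAt y (e * (1 / 2 * y t ^ 2 + s t)) t)
    (hl : ∀ t, 0 ≤ t → t < T → HasDerivAt l (e * (y t * l t)) t)
    (hχ : ∀ t, 0 ≤ t → t < T → HasDerivAt χ (e * l t) t)
    (hs : ∀ t, 0 ≤ t → t < T → (1 - t ^ 2) ^ 2 * ‖s t‖ ≤ δ)
    (y0 : y 0 = 0) (l0 : l 0 = 1) (χ0 : χ 0 = 0) {t : ℝ} (ht : 0 ≤ t) (htT : t < T) :
    (1 - t ^ 2) * ‖y t‖ ≤ 2 * δ * t ∧ ‖l t - 1‖ ≤ 4 * δ * ((√(1 - t))⁻¹ - 1) ∧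
      ‖χ t - t * e‖ ≤ 4 * δ * t := by
  have hsq : ∀ x, x < T → HasDerivAt (fun x => √(1 - x)) (-1 / (2 * √(1 - x))) x := fun x hx => by
    have h1 : HasDerivAt (fun x : ℝ => 1 - x) (-1) x := by
      simpa using (hasDerivAt_id x).const_sub 1
    exact h1.sqrt (by linarith)
  have hY : ∀ t, 0 ≤ t → t < T → ‖y t‖ ≤ 2 * δ * t / (1 - t ^ 2) := fun t ht htT => by
    have hd : ∀ x ∈ Set.Icc 0 t, HasDerivAt (fun x => 2 * δ * x / (1 - x ^ 2))
        (2 * δ * (1 + x ^ 2) / (1 - x ^ 2) ^ 2) x := fun x hx => by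
      have h1 : 1 - x ^ 2 ≠ 0 := by nlinarith [hx.1, hx.2]
      have h2 : HasDerivAt (fun x : ℝ => 2 * δ * x) (2 * δ) x := by
        simpa using (hasDerivAt_id x).const_mul (2 * δ)
      have h3 : HasDerivAt (fun x : ℝ => 1 - x ^ 2) (-(2 * x)) x := by
        simpa using (hasDerivAt_pow 2 x).const_sub 1
      exact (h2.div h3 h1).congr_deriv (by ring)
    refine image_norm_le_of_norm_deriv_right_lt_deriv_boundary' (a := 0) (b := t) (f := y)
      (f' := fun x => e * (1 / 2 * y x ^ 2 + s x)) (B := fun x => 2 * δ * x / (1 - x ^ 2))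
      (B' := fun x => 2 * δ * (1 + x ^ 2) / (1 - x ^ 2) ^ 2)
      (fun x hx => (hy x hx.1 (hx.2.trans_lt htT)).continuousAt.continuousWithinAt)
      (fun x hx => (hy x hx.1 (hx.2.trans htT)).hasDerivWithinAt) (by simp [y0])
      (fun x hx => (hd x hx).continuousAt.continuousWithinAt)
      (fun x hx => (hd x ⟨hx.1, hx.2.le⟩).hasDerivWithinAt)
      (fun x hx hB => ?_) ⟨ht, le_rfl⟩
    have h1 : 0 < 1 - x ^ 2 := by nlinarith [hx.1, hx.2]
    rw [norm_mul, he, one_mul]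
    refine (norm_add_le _ _).trans_lt ?_
    rw [norm_mul, norm_pow, hB]
    have h2 : ‖s x‖ ≤ δ / (1 - x ^ 2) ^ 2 := by
      rw [le_div_iff₀ (by positivity), mul_comm]; exact hs x hx.1 (hx.2.trans htT)
    have h3 : ‖(1 / 2 : ℂ)‖ = 1 / 2 := by norm_num
    rw [h3]
    refine (add_le_add le_rfl h2).trans_lt ?_
    rw [div_pow, mul_div_assoc', ← add_div]
    apply div_lt_div_of_pos_right _ (by positivity)
    have : x ^ 2 ≤ 1 := by linarith
    nlinarith [mul_pos hδ hδ, sq_nonneg x, mul_nonneg hδ.le (sq_nonneg x)]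
  have hL : ∀ t, 0 ≤ t → t < T → ‖l t - 1‖ ≤ 4 * δ * ((√(1 - t))⁻¹ - 1) := fun t ht htT => by
    have hd : ∀ x ∈ Set.Icc 0 t, HasDerivAt (fun x => 4 * δ * ((√(1 - x))⁻¹ - 1))
        (2 * δ * (√(1 - x))⁻¹ ^ 3) x := fun x hx => by
      have h0 : √(1 - x) ≠ 0 := (Real.sqrt_pos.2 (by linarith [hx.2])).ne'
      exact (((((hsq x (hx.2.trans_lt htT)).inv h0).sub_const 1).const_mul (4 * δ)).congr_deriv
        (by field_simp; ring))
    refine image_norm_le_of_norm_deriv_right_lt_deriv_boundary' (a := 0) (b := t)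
      (f := fun x => l x - 1)
      (f' := fun x => e * (y x * l x)) (B := fun x => 4 * δ * ((√(1 - x))⁻¹ - 1))
      (B' := fun x => 2 * δ * (√(1 - x))⁻¹ ^ 3)
      (fun x hx => ((hl x hx.1 (hx.2.trans_lt htT)).sub_const 1).continuousAt.continuousWithinAt)
      (fun x hx => ((hl x hx.1 (hx.2.trans htT)).sub_const 1).hasDerivWithinAt) (by simp [l0])
      (fun x hx => (hd x hx).continuousAt.continuousWithinAt)
      (fun x hx => (hd x ⟨hx.1, hx.2.le⟩).hasDerivWithinAt)
      (fun x hx hB => ?_) ⟨ht, le_rfl⟩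
    have hx1 : 0 < 1 - x := by linarith [hx.2]
    have hu0 : 0 < √(1 - x) := Real.sqrt_pos.2 hx1
    have hu2 : √(1 - x) ^ 2 = 1 - x := Real.sq_sqrt hx1.le
    obtain ⟨u, hu⟩ : ∃ u, u = (√(1 - x))⁻¹ := ⟨_, rfl⟩
    rw [← hu] at hB ⊢
    have hu1 : 1 ≤ u := by
      rw [hu]; apply (one_le_inv₀ hu0).2
      nlinarith [hx.1]
    have hux : u ^ 2 * (1 - x) = 1 := by 
      rw [hu, inv_pow, hu2, inv_mul_cancel₀ hx1.ne']
    have hlx : ‖l x‖ ≤ u := by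
      have : ‖l x‖ ≤ ‖l x - 1‖ + 1 := by simpa using norm_add_le (l x - 1) 1
      rw [hB] at this
      nlinarith
    rw [norm_mul, he, one_mul, norm_mul]
    have hyx : ‖y x‖ ≤ 2 * δ * (x / (1 + x)) * u ^ 2 := by
      refine (hY x hx.1 (hx.2.trans htT)).trans (le_of_eq ?_)
      have : 1 - x ^ 2 = (1 - x) * (1 + x) := by ring
      rw [this, show u ^ 2 = 1 / (1 - x) by rw [eq_div_iff hx1.ne', hux]]
      have := hx.1
      field_simp
    have hx2 : x / (1 + x) ≤ 1 / 2 := by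
      rw [div_le_div_iff₀ (by linarith [hx.1]) (by norm_num)]; linarith
    have hx3 : 0 ≤ x / (1 + x) := div_nonneg hx.1 (by linarith [hx.1])
    calc ‖y x‖ * ‖l x‖ ≤ (2 * δ * (x / (1 + x)) * u ^ 2) * u := by gcongr
      _ ≤ (2 * δ * (1 / 2) * u ^ 2) * u := by gcongr
      _ < 2 * δ * u ^ 3 := by nlinarith [mul_pos hδ (pow_pos (lt_of_lt_of_le one_pos hu1) 3)]
  refine ⟨?_, hL t ht htT, ?_⟩
  · have h1 : 0 < 1 - t ^ 2 := by nlinarith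
    have := hY t ht htT
    rw [le_div_iff₀ h1] at this; linarith
  have hd : ∀ x ∈ Set.Icc 0 t, HasDerivAt (fun x => 4 * δ * (2 - 2 * √(1 - x) - x))
      (4 * δ * ((√(1 - x))⁻¹ - 1)) x := fun x hx => by
    have h0 : √(1 - x) ≠ 0 := (Real.sqrt_pos.2 (by linarith [hx.2])).ne'
    exact (((((hsq x (hx.2.trans_lt htT)).const_mul 2).const_sub 2).sub
      (hasDerivAt_id x)).const_mul (4 * δ)).congr_deriv (by field_simp)
  have hte : ∀ x : ℝ, HasDerivAt (fun x : ℝ => (x : ℂ) * e) e x := fun x => by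
    simpa using ((hasDerivAt_id x).ofReal_comp).mul_const e
  have := image_norm_le_of_norm_deriv_right_le_deriv_boundary' (a := 0) (b := t)
      (f := fun x => χ x - x * e)
      (f' := fun x => e * l x - e) (B := fun x => 4 * δ * (2 - 2 * √(1 - x) - x))
      (B' := fun x => 4 * δ * ((√(1 - x))⁻¹ - 1))
      (fun x hx => ((hχ x hx.1 (hx.2.trans_lt htT)).sub (hte x)).continuousAt.continuousWithinAt)
      (fun x hx => ((hχ x hx.1 (hx.2.trans htT)).sub (hte x)).hasDerivWithinAt) (by simp [χ0])
      (fun x hx => (hd x hx).continuousAt.continuousWithinAt)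
      (fun x hx => (hd x ⟨hx.1, hx.2.le⟩).hasDerivWithinAt)
      (fun x hx => ?_) ⟨ht, le_rfl⟩
  · refine this.trans ?_
    have h2 : √(1 - t) ^ 2 = 1 - t := Real.sq_sqrt (by linarith)
    have h3 : √(1 - t) ≤ 1 := Real.sqrt_le_one.2 (by linarith)
    have h4 := Real.sqrt_nonneg (1 - t)
    have : 2 - 2 * √(1 - t) - t ≤ t := by nlinarith
    gcongr
  · have : e * l x - e = e * (l x - 1) := by ring
    rw [this, norm_mul, he, one_mul]
    exact hL x hx.1 (hx.2.trans htT)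

/-! ### Möbius normalization -/

/-- Locally univalent functions on the disk whose Schwarzian norm is at most `δ`. -/
structure DH (δ : ℝ) (h : ℂ → ℂ) : Prop where
  diff : DifferentiableOn ℂ h (ball 0 1)
  nz : ∀ z ∈ ball (0 : ℂ) 1, deriv h z ≠ 0
  sch : ∀ z ∈ ball (0 : ℂ) 1, (1 - ‖z‖ ^ 2) ^ 2 * ‖schw h z‖ ≤ δ

/-- Functions in the class `DH δ` normalized to agree with the identity to second order at `0`. -/
structure NH (δ : ℝ) (h : ℂ → ℂ) : Prop extends DH δ h where
  n0 : h 0 = 0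
  n1 : deriv h 0 = 1
  n2 : preSch h 0 = 0

/-- Derivative, pre-Schwarzian and Schwarzian of a Möbius transformation of `h`. -/
lemma mob_calc {h : ℂ → ℂ} {U : Set ℂ} {α β γ κ : ℂ} (hU : IsOpen U)
    (hd : DifferentiableOn ℂ h U) (hn : ∀ z ∈ U, deriv h z ≠ 0)
    (hk : ∀ z ∈ U, γ * h z + κ ≠ 0) (hΔ : α * κ - β * γ ≠ 0) {z : ℂ} (hz : z ∈ U) :
    HasDerivAt (fun w => (α * h w + β) / (γ * h w + κ))
      ((α * κ - β * γ) * deriv h z / (γ * h z + κ) ^ 2) z ∧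
    preSch (fun w => (α * h w + β) / (γ * h w + κ)) z
      = preSch h z - 2 * γ * deriv h z / (γ * h z + κ) ∧
    schw (fun w => (α * h w + β) / (γ * h w + κ)) z = schw h z := by
  have D1 : ∀ z ∈ U, HasDerivAt (fun w => (α * h w + β) / (γ * h w + κ))
      ((α * κ - β * γ) * deriv h z / (γ * h z + κ) ^ 2) z := fun z hz => by
    have h1 := hda hd hU hz
    refine (((h1.const_mul α).add_const β).div ((h1.const_mul γ).add_const κ)
      (hk z hz)).congr_deriv ?_
    ring
  have D2 : ∀ z ∈ U, preSch (fun w => (α * h w + β) / (γ * h w + κ)) z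
      = preSch h z - 2 * γ * deriv h z / (γ * h z + κ) := fun z hz => by
    have h1 := hda hd hU hz
    have h2 := hda (deriv_diff hU hd) hU hz
    have h3 : deriv (deriv (fun w => (α * h w + β) / (γ * h w + κ))) z
        = (α * κ - β * γ) * (deriv (deriv h) z * (γ * h z + κ) - 2 * γ * deriv h z ^ 2)
          / (γ * h z + κ) ^ 3 := by
      have e : deriv (fun w => (α * h w + β) / (γ * h w + κ)) =ᶠ[nhds z]
          fun z => (α * κ - β * γ) * deriv h z / (γ * h z + κ) ^ 2 := by
        filter_upwards [hU.mem_nhds hz] with w hw using (D1 w hw).deriv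
      rw [e.deriv_eq]
      have hk' := hk z hz
      refine (((h2.const_mul (α * κ - β * γ)).div (((h1.const_mul γ).add_const κ).fun_pow 2)
        (pow_ne_zero 2 hk')).congr_deriv ?_).deriv
      field_simp
      push_cast
      ring
    rw [preSch, preSch, h3, (D1 z hz).deriv]
    have := hk z hz
    have := hn z hz
    field_simp
  refine ⟨D1 z hz, D2 z hz, ?_⟩
  have h1 := hda hd hU hz
  have h2 := hda (deriv_diff hU hd) hU hz
  have h4 := hda (preSch_diff hU hd hn) hU hz
  have hk' := hk z hz
  have e : preSch (fun w => (α * h w + β) / (γ * h w + κ)) =ᶠ[nhds z]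
      fun z => preSch h z - 2 * γ * deriv h z / (γ * h z + κ) := by
    filter_upwards [hU.mem_nhds hz] with w hw using D2 w hw
  rw [schw, schw, e.deriv_eq, D2 z hz]
  have h5 := (h4.sub ((h2.const_mul (2 * γ)).div ((h1.const_mul γ).add_const κ) hk'))
  have h6 : deriv (fun z => preSch h z - 2 * γ * deriv h z / (γ * h z + κ)) z = _ := h5.deriv
  rw [h6]
  have h7 : deriv (deriv h) z = preSch h z * deriv h z := by
    rw [preSch, div_mul_cancel₀ _ (hn z hz)]
  rw [h7]
  field_simp
  ring

/-- Along a ray, `y = h''/h'` solves the Riccati equation `y' = y²/2 + S_h`, and `h'` solves the linear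
equation `h'' = y h'`; so a small Schwarzian keeps a normalized `h` close to the identity. -/
lemma ray_holo {h : ℂ → ℂ} {U : Set ℂ} {e : ℂ} {δ T : ℝ} (hδ : 0 < δ) (hδ1 : δ ≤ 1 / 4)
    (hT : T ≤ 1) (he : ‖e‖ = 1) (hU : IsOpen U)
    (hd : DifferentiableOn ℂ h U) (hn : ∀ z ∈ U, deriv h z ≠ 0)
    (hr : ∀ t : ℝ, 0 ≤ t → t < T → (t * e : ℂ) ∈ U)
    (hs : ∀ z ∈ U, (1 - ‖z‖ ^ 2) ^ 2 * ‖schw h z‖ ≤ δ)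
    (n0 : h 0 = 0) (n1 : deriv h 0 = 1) (n2 : preSch h 0 = 0) {t : ℝ} (ht : 0 ≤ t) (htT : t < T) :
    (1 - t ^ 2) * ‖preSch h (t * e)‖ ≤ 2 * δ * t ∧
      ‖deriv h (t * e) - 1‖ ≤ 4 * δ * ((√(1 - t))⁻¹ - 1) ∧
      ‖h (t * e) - t * e‖ ≤ 4 * δ * t := by
  have hte : ∀ x : ℝ, HasDerivAt (fun x : ℝ => (x : ℂ) * e) e x := fun x => by
    simpa using ((hasDerivAt_id x).ofReal_comp).mul_const e
  have comp : ∀ {F : ℂ → ℂ}, DifferentiableOn ℂ F U → ∀ t : ℝ, 0 ≤ t → t < T →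
      HasDerivAt (fun x : ℝ => F (x * e)) (deriv F (t * e) * e) t := fun hF t h0 h1 =>
    HasDerivAt.comp (h₂ := _) t (hda hF hU (hr t h0 h1)) (hte t)
  refine ray_bounds (y := fun t => preSch h (t * e)) (l := fun t => deriv h (t * e))
    (χ := fun t => h (t * e)) (s := fun t => schw h (t * e)) hδ hδ1 hT he
    (fun t h0 h1 => ?_) (fun t h0 h1 => ?_) (fun t h0 h1 => ?_) (fun t h0 h1 => ?_) (by simpa)
    (by simpa) (by simpa) ht htT
  · refine (comp (preSch_diff hU hd hn) t h0 h1).congr_deriv ?_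
    rw [schw]; ring
  · refine (comp (deriv_diff hU hd) t h0 h1).congr_deriv ?_
    rw [preSch, div_mul_cancel₀ _ (hn _ (hr t h0 h1))]; ring
  · exact (comp hd t h0 h1).congr_deriv (by ring)
  · have := hs _ (hr t h0 h1)
    rwa [norm_mul, he, mul_one, Complex.norm_real, Real.norm_of_nonneg h0] at this

lemma polar (z : ℂ) : ∃ e : ℂ, ‖e‖ = 1 ∧ z = (‖z‖ : ℂ) * e := by
  by_cases hz : z = 0
  · exact ⟨1, by simp, by simp [hz]⟩
  · have : (‖z‖ : ℂ) ≠ 0 := by simpa using hz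
    exact ⟨z / ‖z‖, by simp [hz], by field_simp⟩

/-- The normal form of `h` under postcomposition with Möbius transformations. -/
noncomputable def nrm (h : ℂ → ℂ) (z : ℂ) : ℂ :=
  (h z - h 0) / (deriv h 0 + preSch h 0 / 2 * (h z - h 0))

lemma nrm_eq (h : ℂ → ℂ) : nrm h = fun z => (1 * h z + -h 0) /
    (preSch h 0 / 2 * h z + (deriv h 0 - preSch h 0 / 2 * h 0)) := by
  funext z; rw [nrm]; ring_nf

/-- The normalizing Möbius transformation has no pole on the image of the disk: along a ray the
normal form stays bounded up to the first pole. -/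
lemma DH.den_ne {h : ℂ → ℂ} {δ : ℝ} (H : DH δ h) (hδ : 0 < δ) (hδ1 : δ ≤ 1 / 4) :
    ∀ z ∈ ball (0 : ℂ) 1, deriv h 0 + preSch h 0 / 2 * (h z - h 0) ≠ 0 := by
  intro z hz hzero
  have m0 : (0 : ℂ) ∈ ball (0 : ℂ) 1 := mem_ball_self one_pos
  have hz' : ‖z‖ < 1 := by simpa using hz
  obtain ⟨e, he, hze⟩ := polar z
  have hray : ∀ t : ℝ, 0 ≤ t → t < 1 → (t * e : ℂ) ∈ ball (0 : ℂ) 1 := fun t h0 h1 => by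
    rw [mem_ball_zero_iff, norm_mul, he, mul_one, Complex.norm_real, Real.norm_of_nonneg h0]
    exact h1
  obtain ⟨q, hq⟩ : ∃ q : ℂ → ℂ, q = fun z => deriv h 0 + preSch h 0 / 2 * (h z - h 0) := ⟨_, rfl⟩
  have dq : DifferentiableOn ℂ q (ball 0 1) := by
    rw [hq]; have := H.diff; fun_prop
  obtain ⟨U, hUdef⟩ : ∃ U, U = ball (0 : ℂ) 1 ∩ q ⁻¹' {0}ᶜ := ⟨_, rfl⟩
  have hU : IsOpen U := by
    rw [hUdef]; exact dq.continuousOn.isOpen_inter_preimage isOpen_ball isOpen_compl_singleton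
  have hUb : ∀ w ∈ U, w ∈ ball (0 : ℂ) 1 := fun w hw => by rw [hUdef] at hw; exact hw.1
  have hUq : ∀ w ∈ U, q w ≠ 0 := fun w hw => by rw [hUdef] at hw; exact hw.2
  have hcont : ContinuousOn (fun t : ℝ => q (t * e)) (Set.Icc 0 ‖z‖) :=
    dq.continuousOn.comp (by fun_prop) (fun t ht => hray t ht.1 (ht.2.trans_lt hz'))
  have hcomp : IsCompact (Set.Icc 0 ‖z‖ ∩ (fun t : ℝ => q (t * e)) ⁻¹' {0}) :=
    (isCompact_Icc).of_isClosed_subset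
      (hcont.preimage_isClosed_of_isClosed isClosed_Icc isClosed_singleton) Set.inter_subset_left
  obtain ⟨t0, ⟨⟨ht0, ht0z⟩, hqt0⟩, hleast⟩ := hcomp.exists_isLeast
    ⟨‖z‖, ⟨norm_nonneg z, le_rfl⟩, by
      simp only [Set.mem_preimage, Set.mem_singleton_iff]; rw [← hze, hq]; exact hzero⟩
  simp only [Set.mem_preimage, Set.mem_singleton_iff] at hqt0
  have ht0pos : 0 < t0 := by
    rcases ht0.eq_or_lt with h1 | h1
    · rw [← h1, hq] at hqt0; simp at hqt0; exact absurd hqt0 (H.nz 0 m0)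
    · exact h1
  have hrayU : ∀ t : ℝ, 0 ≤ t → t < t0 → (t * e : ℂ) ∈ U := fun t h0 h1 => by
    rw [hUdef]
    refine ⟨hray t h0 (by linarith), fun h2 => ?_⟩
    have := hleast ⟨⟨h0, by linarith⟩, h2⟩
    linarith
  have hk : ∀ z ∈ U, preSch h 0 / 2 * h z + (deriv h 0 - preSch h 0 / 2 * h 0) ≠ 0 :=
    fun w hw h0 => hUq w hw (by rw [hq]; linear_combination h0)
  have hΔ : (1 : ℂ) * (deriv h 0 - preSch h 0 / 2 * h 0) - -h 0 * (preSch h 0 / 2) ≠ 0 := by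
    have := H.nz 0 m0
    intro h0; apply this; linear_combination h0
  have hdU : DifferentiableOn ℂ h U := H.diff.mono hUb
  have hnU : ∀ z ∈ U, deriv h z ≠ 0 := fun w hw => H.nz w (hUb w hw)
  have calc1 := fun w (hw : w ∈ U) => mob_calc (α := 1) (β := -h 0) hU hdU hnU hk hΔ hw
  rw [← nrm_eq] at calc1
  have h0U : (0 : ℂ) ∈ U := by simpa using hrayU 0 le_rfl ht0pos
  have hn0 := H.nz 0 m0
  have bound : ∀ t : ℝ, 0 ≤ t → t < t0 → ‖h (t * e) - h 0‖ ≤ 2 * ‖q (t * e)‖ := fun t h0 h1 => by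
    have := (ray_holo hδ hδ1 (by linarith) he hU
      (fun w hw => (calc1 w hw).1.differentiableAt.differentiableWithinAt)
      (fun w hw => by
        rw [(calc1 w hw).1.deriv]
        exact div_ne_zero (mul_ne_zero hΔ (hnU w hw)) (pow_ne_zero 2 (hk w hw))) hrayU
      (fun w hw => by rw [(calc1 w hw).2.2]; exact H.sch w (hUb w hw))
      (by simp [nrm]) (by rw [(calc1 0 h0U).1.deriv]; field_simp; ring)
      (by rw [(calc1 0 h0U).2.1]; field_simp; ring) h0 h1).2.2
    have h2 : ‖nrm h (t * e)‖ ≤ 2 := by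
      have h3 := norm_le_norm_add_norm_sub' (nrm h (t * e)) (t * e)
      rw [norm_mul, he, mul_one, Complex.norm_real, Real.norm_of_nonneg h0] at h3
      nlinarith
    have h4 : q (t * e) ≠ 0 := hUq _ (hrayU t h0 h1)
    have h5 : nrm h (t * e) = (h (t * e) - h 0) / q (t * e) := by rw [nrm, hq]
    rw [h5, norm_div, div_le_iff₀ (norm_pos_iff.2 h4)] at h2
    exact h2
  have hlim : ‖h (t0 * e) - h 0‖ ≤ 2 * ‖q (t0 * e)‖ := by
    have ht01 : (t0 * e : ℂ) ∈ ball (0 : ℂ) 1 := hray t0 ht0 (by linarith)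
    have c1 : ContinuousAt (fun t : ℝ => 2 * ‖q (t * e)‖ - ‖h (t * e) - h 0‖) t0 := by
      have a1 : ContinuousAt (fun t : ℝ => q (t * e)) t0 :=
        ContinuousAt.comp (f := fun t : ℝ => (t * e : ℂ))
          (dq.continuousOn.continuousAt (isOpen_ball.mem_nhds ht01)) (by fun_prop)
      have a2 : ContinuousAt (fun t : ℝ => h (t * e)) t0 :=
        ContinuousAt.comp (f := fun t : ℝ => (t * e : ℂ))
          (H.diff.continuousOn.continuousAt (isOpen_ball.mem_nhds ht01)) (by fun_prop)
      exact (a1.norm.const_mul 2).sub (a2.sub continuousAt_const).norm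
    have := ge_of_tendsto (b := 0) (c1.tendsto.mono_left (nhdsWithin_le_nhds (s := Set.Iio t0))) (by
      filter_upwards [Ioo_mem_nhdsLT ht0pos] with t ht
      linarith [bound t ht.1.le ht.2])
    linarith
  rw [hqt0, norm_zero, mul_zero, norm_le_zero_iff] at hlim
  rw [hq] at hqt0
  simp only [hlim, mul_zero, add_zero] at hqt0
  exact hn0 hqt0

/-- The normal form is normalized, and its Schwarzian is that of `h` by Möbius invariance. -/
lemma DH.nrm_NH {h : ℂ → ℂ} {δ : ℝ} (H : DH δ h) (hδ : 0 < δ) (hδ1 : δ ≤ 1 / 4) :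
    NH δ (nrm h) := by
  have m0 : (0 : ℂ) ∈ ball (0 : ℂ) 1 := mem_ball_self one_pos
  have hk : ∀ z ∈ ball (0 : ℂ) 1,
      preSch h 0 / 2 * h z + (deriv h 0 - preSch h 0 / 2 * h 0) ≠ 0 :=
    fun w hw h0 => H.den_ne hδ hδ1 w hw (by linear_combination h0)
  have hΔ : (1 : ℂ) * (deriv h 0 - preSch h 0 / 2 * h 0) - -h 0 * (preSch h 0 / 2) ≠ 0 := by
    have := H.nz 0 m0
    intro h0; apply this; linear_combination h0
  have calc1 := fun w (hw : w ∈ ball (0 : ℂ) 1) =>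
    mob_calc (α := 1) (β := -h 0) isOpen_ball H.diff H.nz hk hΔ hw
  rw [← nrm_eq] at calc1
  have hn0 := H.nz 0 m0
  refine ⟨⟨fun w hw => (calc1 w hw).1.differentiableAt.differentiableWithinAt, fun w hw => ?_,
    fun w hw => ?_⟩, ?_, ?_, ?_⟩
  · rw [(calc1 w hw).1.deriv]
    exact div_ne_zero (mul_ne_zero hΔ (H.nz w hw)) (pow_ne_zero 2 (hk w hw))
  · rw [(calc1 w hw).2.2]; exact H.sch w hw
  · simp [nrm]
  · rw [(calc1 0 m0).1.deriv]; field_simp; ring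
  · rw [(calc1 0 m0).2.1]; field_simp; ring

/-- Growth and distortion of normalized functions. -/
lemma NH.bounds {h : ℂ → ℂ} {δ : ℝ} (H : NH δ h) (hδ : 0 < δ) (hδ1 : δ ≤ 1 / 4) {z : ℂ}
    (hz : ‖z‖ < 1) :
    (1 - ‖z‖ ^ 2) * ‖preSch h z‖ ≤ 2 * δ * ‖z‖ ∧
      ‖deriv h z - 1‖ ≤ 4 * δ * ((√(1 - ‖z‖))⁻¹ - 1) ∧ ‖h z - z‖ ≤ 4 * δ * ‖z‖ := by
  obtain ⟨e, he, hze⟩ := polar z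
  have := ray_holo hδ hδ1 le_rfl he isOpen_ball H.diff H.nz (fun t h0 h1 => by
    rw [mem_ball_zero_iff, norm_mul, he, mul_one, Complex.norm_real, Real.norm_of_nonneg h0]
    exact h1) H.sch H.n0 H.n1 H.n2 (norm_nonneg z) hz
  rwa [← hze] at this

lemma NH.deriv_le {h : ℂ → ℂ} {δ : ℝ} (H : NH δ h) (hδ : 0 < δ) (hδ1 : δ ≤ 1 / 4) {z : ℂ}
    (hz : ‖z‖ < 1) : ‖deriv h z‖ ≤ (√(1 - ‖z‖))⁻¹ := by
  have h1 := (H.bounds hδ hδ1 hz).2.1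
  have h2 := norm_add_le (deriv h z - 1) 1
  simp only [sub_add_cancel, norm_one] at h2
  have h3 : 1 ≤ (√(1 - ‖z‖))⁻¹ := (one_le_inv₀ (Real.sqrt_pos.2 (by linarith))).2
    (Real.sqrt_le_one.2 (by linarith [norm_nonneg z]))
  nlinarith

/-! ### Boundary extension -/

/-- The derivative quantities at `z` depend on the germ at `z` only. -/
lemma germ_eq {h k : ℂ → ℂ} {z : ℂ} (e : h =ᶠ[nhds z] k) :
    deriv h z = deriv k z ∧ preSch h z = preSch k z ∧ schw h z = schw k z := by
  have e1 : deriv h =ᶠ[nhds z] deriv k := e.deriv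
  have e2 : preSch h =ᶠ[nhds z] preSch k := by
    filter_upwards [e1, e1.deriv] with w h1 h2
    rw [preSch, preSch, h1, h2]
  exact ⟨e1.eq_of_nhds, e2.eq_of_nhds, by rw [schw, schw, e2.deriv_eq, e2.eq_of_nhds]⟩

lemma germ_ball {h k : ℂ → ℂ} (e : ∀ z ∈ ball (0 : ℂ) 1, h z = k z) {z : ℂ}
    (hz : z ∈ ball (0 : ℂ) 1) : h =ᶠ[nhds z] k := by
  filter_upwards [isOpen_ball.mem_nhds hz] with w hw using e w hw

lemma DH.congr {h k : ℂ → ℂ} {δ : ℝ} (H : DH δ h) (e : ∀ z ∈ ball (0 : ℂ) 1, k z = h z) :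
    DH δ k := by
  refine ⟨H.diff.congr e, fun z hz => ?_, fun z hz => ?_⟩
  · rw [(germ_eq (germ_ball e hz)).1]; exact H.nz z hz
  · rw [(germ_eq (germ_ball e hz)).2.2]; exact H.sch z hz

lemma NH.congr {h k : ℂ → ℂ} {δ : ℝ} (H : NH δ h) (e : ∀ z ∈ ball (0 : ℂ) 1, k z = h z) :
    NH δ k := by
  have m0 : (0 : ℂ) ∈ ball (0 : ℂ) 1 := mem_ball_self one_pos
  have g := germ_eq (germ_ball e m0)
  exact ⟨H.toDH.congr e, by rw [e 0 m0, H.n0], by rw [g.1, H.n1], by rw [g.2.1, H.n2]⟩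

/-- Uniform Hölder-`1/2` radial modulus of continuity. -/
lemma NH.radial {h : ℂ → ℂ} {δ : ℝ} (H : NH δ h) (hδ : 0 < δ) (hδ1 : δ ≤ 1 / 4) {z : ℂ}
    (hz : ‖z‖ ≤ 1) {r s : ℝ} (hr : 0 ≤ r) (hrs : r ≤ s) (hs : s < 1) :
    ‖h (s * z) - h (r * z)‖ ≤ 2 * √(1 - r) := by
  have hmem : ∀ x ∈ Set.Icc r s, (x * z : ℂ) ∈ ball (0 : ℂ) 1 := fun x hx => by
    rw [mem_ball_zero_iff, norm_mul, Complex.norm_real, Real.norm_of_nonneg (hr.trans hx.1)]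
    nlinarith [hx.1, hx.2, norm_nonneg z]
  have hte : ∀ x : ℝ, HasDerivAt (fun x : ℝ => (x : ℂ) * z) z x := fun x => by
    simpa using ((hasDerivAt_id x).ofReal_comp).mul_const z
  have hd : ∀ x ∈ Set.Icc r s, HasDerivAt (fun x : ℝ => h (x * z) - h (r * z))
      (deriv h (x * z) * z) x := fun x hx =>
    (HasDerivAt.comp (h₂ := h) x (hda H.diff isOpen_ball (hmem x hx)) (hte x)).sub_const _
  have hB : ∀ x ∈ Set.Icc r s, HasDerivAt (fun x => 2 * √(1 - r) - 2 * √(1 - x))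
      ((√(1 - x))⁻¹) x := fun x hx => by
    have h1 : HasDerivAt (fun x : ℝ => 1 - x) (-1) x := by
      simpa using (hasDerivAt_id x).const_sub 1
    have hx1 : 0 < 1 - x := by linarith [hx.2]
    have h0 : √(1 - x) ≠ 0 := (Real.sqrt_pos.2 hx1).ne'
    exact (((h1.sqrt hx1.ne').const_mul 2).const_sub (2 * √(1 - r))).congr_deriv (by field_simp)
  have := image_norm_le_of_norm_deriv_right_le_deriv_boundary'
      (fun x hx => (hd x hx).continuousAt.continuousWithinAt)
      (fun x hx => (hd x ⟨hx.1, hx.2.le⟩).hasDerivWithinAt) (by simp)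
      (fun x hx => (hB x hx).continuousAt.continuousWithinAt)
      (fun x hx => (hB x ⟨hx.1, hx.2.le⟩).hasDerivWithinAt)
      (fun x hx => ?_) ⟨hrs, le_rfl⟩
  · exact this.trans (by linarith [Real.sqrt_nonneg (1 - s)])
  · have hx' : x ∈ Set.Icc r s := ⟨hx.1, hx.2.le⟩
    have hx1 : 0 < 1 - x := by linarith [hx.2]
    have h0 : 0 < √(1 - x) := Real.sqrt_pos.2 hx1
    have hm := hmem x hx'
    rw [mem_ball_zero_iff] at hm
    have hle : ‖(x * z : ℂ)‖ ≤ x := by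
      rw [norm_mul, Complex.norm_real, Real.norm_of_nonneg (hr.trans hx.1)]
      nlinarith [hx.1, norm_nonneg z]
    rw [norm_mul]
    calc _ ≤ (√(1 - ‖(x * z : ℂ)‖))⁻¹ * 1 := by
          gcongr; exact H.deriv_le hδ hδ1 hm
      _ ≤ _ := by rw [mul_one]; gcongr

/-- Normalized functions extend continuously to the closed disk, as uniform limits of their dilates.
The values off the open disk may have to be changed. -/
lemma NH.exists_ext {h : ℂ → ℂ} {δ : ℝ} (H : NH δ h) (hδ : 0 < δ) (hδ1 : δ ≤ 1 / 4) :
    ∃ k : ℂ → ℂ, NH δ k ∧ ContinuousOn k (closedBall 0 1) ∧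
      ∀ z ∈ ball (0 : ℂ) 1, k z = h z := by
  obtain ⟨r, hr⟩ : ∃ r : ℕ → ℝ, r = fun n : ℕ => 1 - 1 / ((n : ℝ) + 1) := ⟨_, rfl⟩
  have hr1 : ∀ n, r n < 1 := fun n => by
    rw [hr]; have : (0 : ℝ) < 1 / ((n : ℝ) + 1) := by positivity
    linarith
  have hr0 : ∀ n, 0 ≤ r n := fun n => by
    rw [hr]; simp only [sub_nonneg]
    rw [div_le_one (by positivity)]; linarith [(Nat.cast_nonneg n : (0 : ℝ) ≤ n)]
  have hmono : Monotone r := fun m n hmn => by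
    rw [hr]; simp only; gcongr
  have hlim : Filter.Tendsto r Filter.atTop (nhds 1) := by
    rw [hr]; simpa using tendsto_one_div_add_atTop_nhds_zero_nat.const_sub (1 : ℝ)
  have hsq : Filter.Tendsto (fun n => 2 * √(1 - r n)) Filter.atTop (nhds 0) := by
    have := ((hlim.const_sub 1).sqrt).const_mul 2
    simpa using this
  have hC : UniformCauchySeqOn (fun n z => h (r n * z)) Filter.atTop (closedBall (0 : ℂ) 1) := by
    rw [Metric.uniformCauchySeqOn_iff]
    intro ε hε
    obtain ⟨N, hN⟩ := (hsq.eventually (gt_mem_nhds (half_pos hε))).exists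
    refine ⟨N, fun m hm n hn z hz => ?_⟩
    have hz' : ‖z‖ ≤ 1 := by simpa using hz
    have h1 := H.radial hδ hδ1 hz' (hr0 N) (hmono hm) (hr1 m)
    have h2 := H.radial hδ hδ1 hz' (hr0 N) (hmono hn) (hr1 n)
    rw [dist_eq_norm]
    have e : h (r m * z) - h (r n * z) = (h (r m * z) - h (r N * z))
      - (h (r n * z) - h (r N * z)) := by ring
    rw [e]
    exact (norm_sub_le _ _).trans_lt (by linarith)
  have hex : ∀ z : ℂ, ∃ w, z ∈ closedBall (0 : ℂ) 1 →
      Filter.Tendsto (fun n => h (r n * z)) Filter.atTop (nhds w) := fun z => by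
    by_cases hz : z ∈ closedBall (0 : ℂ) 1
    · obtain ⟨w, hw⟩ := cauchySeq_tendsto_of_complete (hC.cauchySeq hz)
      exact ⟨w, fun _ => hw⟩
    · exact ⟨0, fun h => absurd h hz⟩
  choose k hk using hex
  have hU := hC.tendstoUniformlyOn_of_tendsto (fun z hz => hk z hz)
  have hkh : ∀ z ∈ ball (0 : ℂ) 1, k z = h z := fun z hz => by
    have h1 : Filter.Tendsto (fun n => (r n * z : ℂ)) Filter.atTop (nhds z) := by
      have := (Complex.continuous_ofReal.tendsto 1).comp hlim
      simpa using this.mul_const z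
    have h2 := (H.diff.continuousOn.continuousAt (isOpen_ball.mem_nhds hz)).tendsto.comp h1
    exact tendsto_nhds_unique (hk z (ball_subset_closedBall hz)) h2
  refine ⟨k, H.congr hkh, ?_, hkh⟩
  refine hU.continuousOn (Filter.Frequently.of_forall fun n => ?_)
  refine H.diff.continuousOn.comp (by fun_prop) (fun z hz => ?_)
  have hz' : ‖z‖ ≤ 1 := by simpa using hz
  rw [mem_ball_zero_iff, norm_mul, Complex.norm_real, Real.norm_of_nonneg (hr0 n)]
  nlinarith [hr1 n, hr0 n, norm_nonneg z]

/-! ### The Ahlfors–Weill extension -/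

/-- Retraction of the plane onto the closed unit disk: reflection in the unit circle outside. -/
noncomputable def rho (z : ℂ) : ℂ := if ‖z‖ ≤ 1 then z else 1 / (starRingEnd ℂ) z

/-- The Ahlfors–Weill type extension of `g` relative to `h`: with `ζ = rho z`, the value is
`g ζ + ω(ζ) Φ(ζ)` where `ω = g'/h'` and `Φ` is the case-A correction built from `h`. In particular
`Gf h h` is the classical Ahlfors–Weill extension of `h`. Inside the closed disk it is `g`. -/
noncomputable def Gf (h g : ℂ → ℂ) (z : ℂ) : ℂ :=
  g (rho z) + (z - rho z) * deriv g (rho z) / (1 - (z - rho z) * preSch h (rho z) / 2)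

lemma rho_in {z : ℂ} (hz : ‖z‖ ≤ 1) : rho z = z := if_pos hz

lemma rho_out {z : ℂ} (hz : 1 ≤ ‖z‖) : rho z = 1 / (starRingEnd ℂ) z := by
  rcases hz.lt_or_eq with h | h
  · exact if_neg (not_le.2 h)
  · rw [rho_in h.ge]
    have h0 : z ≠ 0 := by rintro rfl; simp at h
    have h1 : (starRingEnd ℂ) z ≠ 0 := by simpa using h0
    rw [eq_div_iff h1, Complex.mul_conj, Complex.normSq_eq_norm_sq, ← h]; simp

lemma rho_norm_out {z : ℂ} (hz : 1 ≤ ‖z‖) : ‖rho z‖ = 1 / ‖z‖ := by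
  rw [rho_out hz]; simp

lemma rho_mul_out {z : ℂ} (hz : 1 ≤ ‖z‖) : z * (starRingEnd ℂ) (rho z) = 1 := by
  have h0 : z ≠ 0 := by rintro rfl; simp at hz; linarith
  rw [rho_out hz]; simp [h0]

lemma rho_norm_mul {z : ℂ} (hz : 1 ≤ ‖z‖) : ‖z‖ * ‖rho z‖ = 1 := by
  rw [rho_norm_out hz]; field_simp

lemma rho_norm_le (z : ℂ) : ‖rho z‖ ≤ 1 := by
  rcases le_total ‖z‖ 1 with h | h
  · rwa [rho_in h]
  · rw [rho_norm_out h]; exact (div_le_one (by linarith)).2 h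

lemma rho_norm_lt {z : ℂ} (h : 1 < ‖z‖) : ‖rho z‖ < 1 := by
  rw [rho_norm_out h.le]; exact (div_lt_one (by linarith)).2 h

lemma rho_mem_ball {z : ℂ} (h : 1 < ‖z‖) : rho z ∈ ball (0 : ℂ) 1 := by
  simpa using rho_norm_lt h

lemma rho_mem (z : ℂ) : rho z ∈ closedBall (0 : ℂ) 1 := by simpa using rho_norm_le z

lemma rho_ne {z : ℂ} (hz : 1 ≤ ‖z‖) : rho z ≠ 0 := by
  intro h; have := rho_norm_mul hz; rw [h] at this; simp at this

lemma rho_le_self (z : ℂ) : ‖rho z‖ ≤ ‖z‖ := by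
  rcases le_total ‖z‖ 1 with h | h
  · rw [rho_in h]
  · exact (rho_norm_le z).trans h

lemma rho_cont : Continuous rho := by
  rw [continuous_iff_continuousAt]
  intro z
  rcases lt_or_ge ‖z‖ 1 with h | h
  · refine continuousAt_id.congr ?_
    filter_upwards [(continuous_norm.continuousAt (x := z)).eventually (gt_mem_nhds h)] with w hw
    exact (rho_in (le_of_lt hw)).symm
  · have hz0 : z ≠ 0 := by rintro rfl; simp at h; linarith
    have e : rho = fun z => if ‖z‖ ≤ 1 then z else 1 / (starRingEnd ℂ) z := rfl
    have hc : ContinuousAt (fun z : ℂ => 1 / (starRingEnd ℂ) z) z :=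
      continuousAt_const.div Complex.continuous_conj.continuousAt (by simpa using hz0)
    rw [ContinuousAt, rho_out h]
    rcases h.lt_or_eq with h1 | h1
    · refine Filter.Tendsto.congr' ?_ hc
      filter_upwards [(continuous_norm.continuousAt (x := z)).eventually (lt_mem_nhds h1)] with w hw
      exact (rho_out (le_of_lt hw)).symm
    · rw [e]
      refine Filter.Tendsto.if' ?_ ?_
      · have : (1 / (starRingEnd ℂ) z) = z := by rw [← rho_out h, rho_in h1.ge]
        rw [this]; exact continuousAt_id
      · exact hc

/-- `1 - |ζ|² = conj ζ (z - ζ)` for `ζ = 1 / conj z`. -/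
lemma one_sub_rho {z : ℂ} (hz : 1 ≤ ‖z‖) :
    ((1 - ‖rho z‖ ^ 2 : ℝ) : ℂ) = (starRingEnd ℂ) (rho z) * (z - rho z) := by
  have := rho_mul_out hz
  have h2 := Complex.mul_conj (rho z)
  rw [Complex.normSq_eq_norm_sq] at h2
  push_cast at h2 ⊢
  linear_combination -this + h2

lemma norm_sub_rho {z : ℂ} (hz : 1 ≤ ‖z‖) : ‖z - rho z‖ = ‖z‖ * (1 - ‖rho z‖ ^ 2) := by
  have h1 := congrArg norm (one_sub_rho hz)
  rw [Complex.norm_real, norm_mul, RCLike.norm_conj, Real.norm_of_nonneg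
    (by nlinarith [rho_norm_le z, norm_nonneg (rho z)])] at h1
  have := rho_norm_mul hz
  rw [h1]; linear_combination (-‖z - rho z‖) * this

/-- The complementary denominator: `denA` at the reflected point is `conj ζ` times it. -/
noncomputable def den1 (h : ℂ → ℂ) (z : ℂ) : ℂ := 1 - (z - rho z) * preSch h (rho z) / 2

lemma denA_rho (h : ℂ → ℂ) {z : ℂ} (hz : 1 ≤ ‖z‖) :
    denA h (rho z) = (starRingEnd ℂ) (rho z) * den1 h z := by
  rw [denA, one_sub_rho hz, den1]; ring

lemma denA_eq_zero_iff (h : ℂ → ℂ) {z : ℂ} (hz : 1 ≤ ‖z‖) :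
    denA h (1 / (starRingEnd ℂ) z) = 0 ↔ den1 h z = 0 := by
  rw [← rho_out hz, denA_rho h hz, mul_eq_zero, or_iff_right]
  simpa using rho_ne hz

lemma Gf_in (h g : ℂ → ℂ) {z : ℂ} (hz : ‖z‖ ≤ 1) : Gf h g z = g z := by
  rw [Gf, rho_in hz]; simp

lemma Gf_eq (h g : ℂ → ℂ) (z : ℂ) :
    Gf h g z = g (rho z) + (z - rho z) * deriv g (rho z) / den1 h z := rfl

lemma phiA_rho (h : ℂ → ℂ) {z : ℂ} (hz : 1 ≤ ‖z‖) :
    phiA h (rho z) = (z - rho z) * deriv h (rho z) / den1 h z := by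
  have : (starRingEnd ℂ) (rho z) ≠ 0 := by simpa using rho_ne hz
  rw [phiA, one_sub_rho hz, denA_rho h hz, mul_assoc, mul_div_mul_left _ _ this]

lemma extA_rho (h g : ℂ → ℂ) {z : ℂ} (hz : 1 ≤ ‖z‖) (hn : deriv h (rho z) ≠ 0) :
    extA h g (1 / (starRingEnd ℂ) z) = Gf h h z + (starRingEnd ℂ) (Gf h g z) := by
  rw [← rho_out hz, extA, phiA_rho h hz, Gf_eq, Gf_eq, ← map_mul]
  have : dil h g (rho z) * ((z - rho z) * deriv h (rho z) / den1 h z)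
      = (z - rho z) * deriv g (rho z) / den1 h z := by
    rw [dil]; field_simp
  rw [this, map_add]; ring

/-- `W = N / D` form of the Ahlfors–Weill extension outside the disk. -/
noncomputable def numA (h : ℂ → ℂ) (ζ : ℂ) : ℂ :=
  h ζ * denA h ζ + ((1 - ‖ζ‖ ^ 2 : ℝ) : ℂ) * deriv h ζ

lemma Gf_num (h : ℂ → ℂ) {z : ℂ} (hz : 1 ≤ ‖z‖) (hD : den1 h z ≠ 0) :
    Gf h h z = numA h (rho z) / denA h (rho z) := by
  have : (starRingEnd ℂ) (rho z) ≠ 0 := by simpa using rho_ne hz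
  rw [Gf_eq, numA, denA_rho h hz, one_sub_rho hz]; field_simp

/-! ### Estimates for normalized functions -/

lemma NH.w_le {h : ℂ → ℂ} {δ : ℝ} (H : NH δ h) (hδ : 0 < δ) (hδ1 : δ ≤ 1 / 4) {z : ℂ}
    (hz : 1 < ‖z‖) : ‖(z - rho z) * preSch h (rho z) / 2‖ ≤ δ := by
  have h1 := (H.bounds hδ hδ1 (rho_norm_lt hz)).1
  rw [norm_div, norm_mul, norm_sub_rho hz.le, Complex.norm_ofNat]
  have h2 := rho_norm_mul hz.le
  have : ‖z‖ * ((1 - ‖rho z‖ ^ 2) * ‖preSch h (rho z)‖) ≤ ‖z‖ * (2 * δ * ‖rho z‖) := by gcongr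
  rw [div_le_iff₀ two_pos]
  linear_combination this + 2 * δ * h2

lemma den1_in (h : ℂ → ℂ) {z : ℂ} (hz : ‖z‖ ≤ 1) : den1 h z = 1 := by
  rw [den1, rho_in hz]; simp

lemma NH.den1_ge {h : ℂ → ℂ} {δ : ℝ} (H : NH δ h) (hδ : 0 < δ) (hδ1 : δ ≤ 1 / 4) (z : ℂ) :
    1 - δ ≤ ‖den1 h z‖ := by
  rcases le_or_gt ‖z‖ 1 with hz | hz
  · rw [den1_in h hz]; simp; linarith
  · have := norm_sub_norm_le (1 : ℂ) ((z - rho z) * preSch h (rho z) / 2)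
    rw [norm_one] at this
    have h2 := H.w_le hδ hδ1 hz
    rw [den1]; linarith

lemma NH.den1_ne {h : ℂ → ℂ} {δ : ℝ} (H : NH δ h) (hδ : 0 < δ) (hδ1 : δ ≤ 1 / 4) (z : ℂ) :
    den1 h z ≠ 0 := by
  have := H.den1_ge hδ hδ1 z
  intro h0; rw [h0, norm_zero] at this; linarith

lemma norm_sub_rho_le {z : ℂ} (hz : 1 ≤ ‖z‖) : ‖z - rho z‖ ≤ 2 * ‖z‖ * (1 - ‖rho z‖) := by
  rw [norm_sub_rho hz, mul_assoc, mul_left_comm]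
  gcongr
  nlinarith [rho_norm_le z]

/-- The correction term tends to `0` uniformly at the unit circle. -/
lemma NH.phi_le {h : ℂ → ℂ} {δ : ℝ} (H : NH δ h) (hδ : 0 < δ) (hδ1 : δ ≤ 1 / 4) (z : ℂ) :
    ‖(z - rho z) * deriv h (rho z) / den1 h z‖ ≤ 4 * ‖z‖ * √(1 - ‖rho z‖) := by
  rcases le_or_gt ‖z‖ 1 with hz | hz
  · rw [rho_in hz]; simp; positivity
  · have h0 : 0 < 1 - ‖rho z‖ := by linarith [rho_norm_lt hz]
    have hs := Real.sqrt_pos.2 h0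
    have h1 := H.deriv_le hδ hδ1 (rho_norm_lt hz)
    have h2 := H.den1_ge hδ hδ1 z
    rw [norm_div, norm_mul, div_le_iff₀ (by linarith)]
    have h3 : ‖z - rho z‖ * ‖deriv h (rho z)‖ ≤
        (2 * ‖z‖ * (1 - ‖rho z‖)) * (√(1 - ‖rho z‖))⁻¹ := by
      gcongr
      exact norm_sub_rho_le hz.le
    have h4 : (2 * ‖z‖ * (1 - ‖rho z‖)) * (√(1 - ‖rho z‖))⁻¹ = 2 * ‖z‖ * √(1 - ‖rho z‖) := by
      have := Real.mul_self_sqrt h0.le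
      field_simp; linear_combination -this
    have h5 : (4 * ‖z‖ * √(1 - ‖rho z‖)) * (1 / 2) ≤
      (4 * ‖z‖ * √(1 - ‖rho z‖)) * ‖den1 h z‖ := by gcongr; linarith
    linarith

lemma NH.close_in {h : ℂ → ℂ} {δ : ℝ} (H : NH δ h) (hδ : 0 < δ) (hδ1 : δ ≤ 1 / 4)
    (hc : ContinuousOn h (closedBall 0 1)) {z : ℂ} (hz : ‖z‖ ≤ 1) : ‖h z - z‖ ≤ 4 * δ * ‖z‖ := by
  have hcl : closure (ball (0 : ℂ) 1) = closedBall 0 1 := closure_ball _ one_ne_zero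
  refine le_on_closure (s := ball (0 : ℂ) 1) (f := fun z => ‖h z - z‖)
    (g := fun z => 4 * δ * ‖z‖) (fun x hx => ?_) ?_ (by fun_prop) (by rw [hcl]; simpa using hz)
  · exact (H.bounds hδ hδ1 (by simpa using hx)).2.2
  · rw [hcl]; fun_prop

/-- The extension stays close to the identity. -/
lemma NH.close {h : ℂ → ℂ} {δ : ℝ} (H : NH δ h) (hδ : 0 < δ) (hδ1 : δ ≤ 1 / 100)
    (hc : ContinuousOn h (closedBall 0 1)) (z : ℂ) : ‖Gf h h z - z‖ ≤ 1 / 2 * ‖z‖ := by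
  have hδ2 : δ ≤ 1 / 4 := by linarith
  rcases le_or_gt ‖z‖ 1 with hz | hz
  · rw [Gf_in h h hz]
    exact (H.close_in hδ hδ2 hc hz).trans (by gcongr; linarith)
  · have h0 : 0 < 1 - ‖rho z‖ := by linarith [rho_norm_lt hz]
    have hs := Real.sqrt_pos.2 h0
    obtain ⟨-, h1, h1'⟩ := H.bounds hδ hδ2 (rho_norm_lt hz)
    have h2 := H.den1_ge hδ hδ2 z
    have h2' := H.den1_ne hδ hδ2 z
    have hw := H.w_le hδ hδ2 hz
    have e : Gf h h z - z = (h (rho z) - rho z) + (z - rho z) *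
        (((deriv h (rho z) - 1) + (z - rho z) * preSch h (rho z) / 2) / den1 h z) := by
      rw [Gf_eq]; field_simp; rw [den1]; ring
    have h3 : ‖z - rho z‖ * ‖deriv h (rho z) - 1‖ ≤ 8 * δ * ‖z‖ := by
      calc _ ≤ (2 * ‖z‖ * (1 - ‖rho z‖)) * (4 * δ * ((√(1 - ‖rho z‖))⁻¹ - 1)) := by
            gcongr; exact norm_sub_rho_le hz.le
        _ = 8 * δ * ‖z‖ * ((1 - ‖rho z‖) * (√(1 - ‖rho z‖))⁻¹ - (1 - ‖rho z‖)) := by ring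
        _ = 8 * δ * ‖z‖ * (√(1 - ‖rho z‖) - (1 - ‖rho z‖)) := by
            congr 2
            have := Real.mul_self_sqrt h0.le
            field_simp; linear_combination -this
        _ ≤ 8 * δ * ‖z‖ * 1 := by
            gcongr
            have : √(1 - ‖rho z‖) ≤ 1 := Real.sqrt_le_one.2 (by linarith [norm_nonneg (rho z)])
            linarith
        _ = _ := by ring
    have h4 : ‖z - rho z‖ ≤ ‖z‖ := by
      rw [norm_sub_rho hz.le]
      nlinarith [norm_nonneg z, sq_nonneg ‖rho z‖]
    have h5 : ‖(z - rho z) * (((deriv h (rho z) - 1) + (z - rho z) * preSch h (rho z) / 2)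
        / den1 h z)‖ ≤ 18 * δ * ‖z‖ := by
      rw [norm_mul, norm_div, mul_div_assoc', div_le_iff₀ (by linarith)]
      calc _ ≤ ‖z - rho z‖ * (‖deriv h (rho z) - 1‖ + δ) := by
            gcongr; exact (norm_add_le _ _).trans (by gcongr)
        _ ≤ 8 * δ * ‖z‖ + ‖z‖ * δ := by rw [mul_add]; gcongr
        _ = 18 * δ * ‖z‖ * (1 / 2) := by ring
        _ ≤ _ := by gcongr; linarith
    have h6 : 4 * δ * ‖rho z‖ ≤ 4 * δ * ‖z‖ := by gcongr; exact rho_le_self z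
    rw [e]
    refine (norm_add_le _ _).trans ?_
    nlinarith [norm_nonneg z]

/-! ### Equivariance under disk automorphisms -/

/-- The disk automorphism taking `0` to `a`. -/
noncomputable def Tm (a z : ℂ) : ℂ := (z + a) / (1 + (starRingEnd ℂ) a * z)

lemma Tm_den {a z : ℂ} (ha : ‖a‖ < 1) (hz : ‖z‖ ≤ 1) : 1 + (starRingEnd ℂ) a * z ≠ 0 := by
  intro h
  have h1 : ‖(starRingEnd ℂ) a * z‖ = 1 := by
    rw [show (starRingEnd ℂ) a * z = -1 by linear_combination h]; simp
  rw [norm_mul, RCLike.norm_conj] at h1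
  nlinarith [norm_nonneg a, norm_nonneg z]

lemma Tm_zero (a : ℂ) : Tm a 0 = a := by simp [Tm]

lemma one_sub_norm (z : ℂ) : ((1 - ‖z‖ ^ 2 : ℝ) : ℂ) = 1 - z * (starRingEnd ℂ) z := by
  rw [Complex.mul_conj, Complex.normSq_eq_norm_sq]; push_cast; ring

lemma Tm_one_sub {a z : ℂ} (ha : ‖a‖ < 1) (hz : ‖z‖ ≤ 1) :
    ((1 - ‖Tm a z‖ ^ 2 : ℝ) : ℂ) * ((1 + (starRingEnd ℂ) a * z) * (1 + a * (starRingEnd ℂ) z)) =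
      ((1 - ‖a‖ ^ 2 : ℝ) : ℂ) * ((1 - ‖z‖ ^ 2 : ℝ) : ℂ) := by
  have h1 := Tm_den ha hz
  have h2 : 1 + a * (starRingEnd ℂ) z ≠ 0 := by
    have := (map_ne_zero (starRingEnd ℂ)).2 h1
    simpa using this
  rw [one_sub_norm, one_sub_norm, one_sub_norm, Tm]
  simp only [map_div₀, map_add, map_mul, map_one, Complex.conj_conj]
  generalize (starRingEnd ℂ) a = a' at *
  generalize (starRingEnd ℂ) z = z' at *
  have h3 := h1
  rw [mul_comm] at h3
  field_simp
  ring

lemma Tm_one_sub' {a z : ℂ} (ha : ‖a‖ < 1) (hz : ‖z‖ ≤ 1) :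
    (1 - ‖Tm a z‖ ^ 2) * ‖1 + (starRingEnd ℂ) a * z‖ ^ 2 = (1 - ‖a‖ ^ 2) * (1 - ‖z‖ ^ 2) := by
  have h := Tm_one_sub ha hz
  have : (1 + (starRingEnd ℂ) a * z) * (1 + a * (starRingEnd ℂ) z)
      = ((‖1 + (starRingEnd ℂ) a * z‖ ^ 2 : ℝ) : ℂ) := by
    rw [← Complex.normSq_eq_norm_sq, ← Complex.mul_conj]; simp
  rw [this] at h
  exact_mod_cast h

lemma Tm_closed {a z : ℂ} (ha : ‖a‖ < 1) (hz : ‖z‖ ≤ 1) : ‖Tm a z‖ ≤ 1 := by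
  have h := Tm_one_sub' ha hz
  have h1 : 0 < ‖1 + (starRingEnd ℂ) a * z‖ ^ 2 := by
    have := norm_pos_iff.2 (Tm_den ha hz); positivity
  have h2 : 0 ≤ (1 - ‖a‖ ^ 2) * (1 - ‖z‖ ^ 2) :=
    mul_nonneg (by nlinarith [norm_nonneg a]) (by nlinarith [norm_nonneg z])
  rw [← h] at h2
  have := nonneg_of_mul_nonneg_left h2 h1
  nlinarith [norm_nonneg (Tm a z)]

lemma Tm_ball {a z : ℂ} (ha : ‖a‖ < 1) (hz : ‖z‖ < 1) : ‖Tm a z‖ < 1 := by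
  have h := Tm_one_sub' ha hz.le
  have h2 : 0 < (1 - ‖a‖ ^ 2) * (1 - ‖z‖ ^ 2) :=
    mul_pos (by nlinarith [norm_nonneg a]) (by nlinarith [norm_nonneg z])
  rw [← h] at h2
  have := pos_of_mul_pos_left h2 (by positivity)
  nlinarith [norm_nonneg (Tm a z)]

lemma Tm_inv {a z : ℂ} (ha : ‖a‖ < 1) (hz : ‖z‖ ≤ 1) : Tm a (Tm (-a) z) = z := by
  have h1 : 1 - (starRingEnd ℂ) a * z ≠ 0 := by
    have := Tm_den (a := -a) (by simpa using ha) hz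
    simpa [sub_eq_add_neg] using this
  have h2 : 1 - a * (starRingEnd ℂ) a ≠ 0 := by
    rw [← one_sub_norm]
    have : 0 < 1 - ‖a‖ ^ 2 := by nlinarith [norm_nonneg a]
    exact_mod_cast this.ne'
  have h3 := Tm_den ha (Tm_closed (a := -a) (by simpa using ha) hz)
  rw [Tm, div_eq_iff h3]
  simp only [Tm, map_neg, neg_mul, ← sub_eq_add_neg]
  clear h3
  generalize (starRingEnd ℂ) a = a' at *
  have h3 := h1
  rw [mul_comm] at h3
  field_simp
  ring

lemma Tm_surj {a z : ℂ} (ha : ‖a‖ < 1) (hz : ‖z‖ ≤ 1) : ∃ w, ‖w‖ ≤ 1 ∧ Tm a w = z :=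
  ⟨_, Tm_closed (a := -a) (by simpa using ha) hz, Tm_inv ha hz⟩

lemma Tm_surj' {a z : ℂ} (ha : ‖a‖ < 1) (hz : ‖z‖ < 1) : ∃ w, ‖w‖ < 1 ∧ Tm a w = z :=
  ⟨_, Tm_ball (a := -a) (by simpa using ha) hz, Tm_inv ha hz.le⟩

lemma Tm_deriv {a z : ℂ} (ha : ‖a‖ < 1) (hz : ‖z‖ ≤ 1) :
    HasDerivAt (Tm a) (((1 - ‖a‖ ^ 2 : ℝ) : ℂ) / (1 + (starRingEnd ℂ) a * z) ^ 2) z := by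
  have h1 := Tm_den ha hz
  have hs : HasDerivAt (fun w => 1 + (starRingEnd ℂ) a * w) ((starRingEnd ℂ) a) z := by
    simpa using ((hasDerivAt_id z).const_mul ((starRingEnd ℂ) a)).const_add 1
  refine (((hasDerivAt_id z).add_const a).div hs h1).congr_deriv ?_
  rw [one_sub_norm]; simp only [id]; ring

/-- Transformation rules under precomposition with a disk automorphism. -/
lemma comp_calc {h : ℂ → ℂ} {a : ℂ} (ha : ‖a‖ < 1) (hd : DifferentiableOn ℂ h (ball 0 1))
    (hn : ∀ z ∈ ball (0 : ℂ) 1, deriv h z ≠ 0) {z : ℂ} (hz : z ∈ ball (0 : ℂ) 1) :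
    HasDerivAt (fun w => h (Tm a w))
      (deriv h (Tm a z) * (((1 - ‖a‖ ^ 2 : ℝ) : ℂ) / (1 + (starRingEnd ℂ) a * z) ^ 2)) z ∧
    preSch (fun w => h (Tm a w)) z
      = preSch h (Tm a z) * (((1 - ‖a‖ ^ 2 : ℝ) : ℂ) / (1 + (starRingEnd ℂ) a * z) ^ 2)
        - 2 * (starRingEnd ℂ) a / (1 + (starRingEnd ℂ) a * z) ∧
    schw (fun w => h (Tm a w)) z
      = schw h (Tm a z) * (((1 - ‖a‖ ^ 2 : ℝ) : ℂ) / (1 + (starRingEnd ℂ) a * z) ^ 2) ^ 2 := by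
  set κ : ℂ := ((1 - ‖a‖ ^ 2 : ℝ) : ℂ) with hκ
  have hκ0 : κ ≠ 0 := by
    have : 0 < 1 - ‖a‖ ^ 2 := by nlinarith [norm_nonneg a]
    rw [hκ]; exact_mod_cast this.ne'
  have mem : ∀ w ∈ ball (0 : ℂ) 1, Tm a w ∈ ball (0 : ℂ) 1 := fun w hw => by
    simpa using Tm_ball ha (by simpa using hw)
  have hs0 : ∀ w ∈ ball (0 : ℂ) 1, 1 + (starRingEnd ℂ) a * w ≠ 0 := fun w hw =>
    Tm_den ha (by simpa using (mem_ball_zero_iff.1 hw).le)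
  have hs : ∀ w, HasDerivAt (fun w => 1 + (starRingEnd ℂ) a * w) ((starRingEnd ℂ) a) w := fun w => by
    simpa using ((hasDerivAt_id w).const_mul ((starRingEnd ℂ) a)).const_add 1
  have hT : ∀ w ∈ ball (0 : ℂ) 1,
      HasDerivAt (Tm a) (κ / (1 + (starRingEnd ℂ) a * w) ^ 2) w := fun w hw =>
    Tm_deriv ha (mem_ball_zero_iff.1 hw).le
  have hq : ∀ w ∈ ball (0 : ℂ) 1, HasDerivAt (fun w => κ / (1 + (starRingEnd ℂ) a * w) ^ 2)
      (-2 * κ * (starRingEnd ℂ) a / (1 + (starRingEnd ℂ) a * w) ^ 3) w := fun w hw => by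
    have := hs0 w hw
    refine ((hasDerivAt_const w κ).div ((hs w).fun_pow 2) (pow_ne_zero 2 this)).congr_deriv ?_
    field_simp; push_cast; ring
  have hp : ∀ w ∈ ball (0 : ℂ) 1, HasDerivAt
      (fun w => 2 * (starRingEnd ℂ) a / (1 + (starRingEnd ℂ) a * w))
      (-2 * (starRingEnd ℂ) a ^ 2 / (1 + (starRingEnd ℂ) a * w) ^ 2) w := fun w hw => by
    have := hs0 w hw
    refine ((hasDerivAt_const w (2 * (starRingEnd ℂ) a)).div (hs w) this).congr_deriv ?_
    field_simp; ring
  have d1 : ∀ w ∈ ball (0 : ℂ) 1, HasDerivAt (fun w => h (Tm a w))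
      (deriv h (Tm a w) * (κ / (1 + (starRingEnd ℂ) a * w) ^ 2)) w := fun w hw =>
    HasDerivAt.comp (h₂ := h) w (hda hd isOpen_ball (mem w hw)) (hT w hw)
  have e1 : ∀ w ∈ ball (0 : ℂ) 1, deriv (fun w => h (Tm a w)) =ᶠ[nhds w]
      fun w => deriv h (Tm a w) * (κ / (1 + (starRingEnd ℂ) a * w) ^ 2) := fun w hw => by
    filter_upwards [isOpen_ball.mem_nhds hw] with x hx using (d1 x hx).deriv
  have hd2 := deriv_diff isOpen_ball hd
  have d2 : ∀ w ∈ ball (0 : ℂ) 1, HasDerivAt (deriv (fun w => h (Tm a w))) _ w := fun w hw =>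
    ((HasDerivAt.comp (h₂ := deriv h) w (hda hd2 isOpen_ball (mem w hw)) (hT w hw)).mul
      (hq w hw)).congr_of_eventuallyEq (e1 w hw)
  have p1 : ∀ w ∈ ball (0 : ℂ) 1, preSch (fun w => h (Tm a w)) w
      = preSch h (Tm a w) * (κ / (1 + (starRingEnd ℂ) a * w) ^ 2)
        - 2 * (starRingEnd ℂ) a / (1 + (starRingEnd ℂ) a * w) := fun w hw => by
    have n1 := hn _ (mem w hw)
    have n2 := hs0 w hw
    rw [preSch, (d2 w hw).deriv, (d1 w hw).deriv, preSch]
    simp only [Function.comp]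
    field_simp; try ring
  refine ⟨d1 z hz, p1 z hz, ?_⟩
  have e2 : preSch (fun w => h (Tm a w)) =ᶠ[nhds z] fun w =>
      preSch h (Tm a w) * (κ / (1 + (starRingEnd ℂ) a * w) ^ 2)
        - 2 * (starRingEnd ℂ) a / (1 + (starRingEnd ℂ) a * w) := by
    filter_upwards [isOpen_ball.mem_nhds hz] with x hx using p1 x hx
  have hd3 := preSch_diff isOpen_ball hd hn
  have d3 := ((((HasDerivAt.comp (h₂ := preSch h) z (hda hd3 isOpen_ball (mem z hz)) (hT z hz)).mul
      (hq z hz))).sub (hp z hz)).congr_of_eventuallyEq e2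
  have n2 := hs0 z hz
  rw [schw, d3.deriv, p1 z hz, schw]
  simp only [Function.comp]
  field_simp; try ring

/-- The Schwarzian norm is invariant under precomposition with disk automorphisms. -/
lemma DH.comp {h : ℂ → ℂ} {δ : ℝ} {a : ℂ} (H : DH δ h) (ha : ‖a‖ < 1) :
    DH δ (fun w => h (Tm a w)) := by
  have mem : ∀ w ∈ ball (0 : ℂ) 1, Tm a w ∈ ball (0 : ℂ) 1 := fun w hw => by
    simpa using Tm_ball ha (by simpa using hw)
  have hs0 : ∀ w ∈ ball (0 : ℂ) 1, 1 + (starRingEnd ℂ) a * w ≠ 0 := fun w hw =>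
    Tm_den ha (by simpa using (mem_ball_zero_iff.1 hw).le)
  have hκ : 0 < 1 - ‖a‖ ^ 2 := by nlinarith [norm_nonneg a]
  refine ⟨fun z hz => (comp_calc ha H.diff H.nz hz).1.differentiableAt.differentiableWithinAt,
    fun z hz => ?_, fun z hz => ?_⟩
  · rw [(comp_calc ha H.diff H.nz hz).1.deriv]
    exact mul_ne_zero (H.nz _ (mem z hz))
      (div_ne_zero (by exact_mod_cast hκ.ne') (pow_ne_zero 2 (hs0 z hz)))
  · rw [(comp_calc ha H.diff H.nz hz).2.2]
    refine le_trans (le_of_eq ?_) (H.sch _ (mem z hz))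
    have h1 := Tm_one_sub' ha (mem_ball_zero_iff.1 hz).le
    have h2 : ‖1 + (starRingEnd ℂ) a * z‖ ≠ 0 := norm_ne_zero_iff.2 (hs0 z hz)
    rw [norm_mul, norm_pow, norm_div, norm_pow, Complex.norm_real, Real.norm_of_nonneg hκ.le]
    have : (1 - ‖z‖ ^ 2) * ((1 - ‖a‖ ^ 2) / ‖1 + (starRingEnd ℂ) a * z‖ ^ 2) = 1 - ‖Tm a z‖ ^ 2 := by
      field_simp; linear_combination -h1
    rw [← this]; ring

/-- The pair `(N, D)` representing the extension is equivariant under disk automorphisms. -/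
lemma num_den_comp {h : ℂ → ℂ} {a : ℂ} (ha : ‖a‖ < 1) (hd : DifferentiableOn ℂ h (ball 0 1))
    (hn : ∀ z ∈ ball (0 : ℂ) 1, deriv h z ≠ 0) {z : ℂ} (hz : z ∈ ball (0 : ℂ) 1) :
    ∃ u : ℂ, u ≠ 0 ∧ denA (fun w => h (Tm a w)) z = u * denA h (Tm a z) ∧
      numA (fun w => h (Tm a w)) z = u * numA h (Tm a z) := by
  have h1 := Tm_den ha (mem_ball_zero_iff.1 hz).le
  have h2 : 1 + a * (starRingEnd ℂ) z ≠ 0 := by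
    have := (map_ne_zero (starRingEnd ℂ)).2 h1
    simpa using this
  have e := Tm_one_sub ha (mem_ball_zero_iff.1 hz).le
  have e' : ((1 - ‖z‖ ^ 2 : ℝ) : ℂ) * (((1 - ‖a‖ ^ 2 : ℝ) : ℂ) / (1 + (starRingEnd ℂ) a * z) ^ 2)
      = (1 + a * (starRingEnd ℂ) z) / (1 + (starRingEnd ℂ) a * z) *
        ((1 - ‖Tm a z‖ ^ 2 : ℝ) : ℂ) := by
    rw [← mul_div_assoc, mul_comm ((1 - ‖z‖ ^ 2 : ℝ) : ℂ), ← e]; field_simp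
  have eD : denA (fun w => h (Tm a w)) z
      = (1 + a * (starRingEnd ℂ) z) / (1 + (starRingEnd ℂ) a * z) * denA h (Tm a z) := by
    rw [denA, denA, (comp_calc ha hd hn hz).2.1]
    have e3 : (1 / 2 : ℂ) * ((1 - ‖z‖ ^ 2 : ℝ) : ℂ) * (preSch h (Tm a z) *
        (((1 - ‖a‖ ^ 2 : ℝ) : ℂ) / (1 + (starRingEnd ℂ) a * z) ^ 2) -
        2 * (starRingEnd ℂ) a / (1 + (starRingEnd ℂ) a * z))
        = 1 / 2 * preSch h (Tm a z) * ((1 + a * (starRingEnd ℂ) z) / (1 + (starRingEnd ℂ) a * z) *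
        ((1 - ‖Tm a z‖ ^ 2 : ℝ) : ℂ)) - ((1 - ‖z‖ ^ 2 : ℝ) : ℂ) *
        ((starRingEnd ℂ) a / (1 + (starRingEnd ℂ) a * z)) := by
      rw [← e']; ring
    have e4 : (starRingEnd ℂ) (Tm a z)
        = ((starRingEnd ℂ) z + (starRingEnd ℂ) a) / (1 + a * (starRingEnd ℂ) z) := by
      simp [Tm]
    rw [e3, one_sub_norm z, e4]
    generalize ((1 - ‖Tm a z‖ ^ 2 : ℝ) : ℂ) = q
    clear e4 e3 e' e
    generalize (starRingEnd ℂ) a = a' at *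
    generalize (starRingEnd ℂ) z = z' at *
    have h3 := h2
    rw [mul_comm] at h3
    field_simp
    ring
  refine ⟨_, div_ne_zero h2 h1, eD, ?_⟩
  rw [numA, numA, eD, (comp_calc ha hd hn hz).1.deriv]
  linear_combination deriv h (Tm a z) * e'

/-- The pair `(N, D)` transforms linearly under the normalizing Möbius transformation. -/
lemma num_den_nrm {h : ℂ → ℂ} {δ : ℝ} (H : DH δ h) (hδ : 0 < δ) (hδ1 : δ ≤ 1 / 4)
    {z : ℂ} (hz : z ∈ ball (0 : ℂ) 1) :
    denA (nrm h) z * (deriv h 0 + preSch h 0 / 2 * (h z - h 0))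
      = preSch h 0 / 2 * (numA h z - h 0 * denA h z) + deriv h 0 * denA h z ∧
    numA (nrm h) z * (deriv h 0 + preSch h 0 / 2 * (h z - h 0)) = numA h z - h 0 * denA h z := by
  have m0 : (0 : ℂ) ∈ ball (0 : ℂ) 1 := mem_ball_self one_pos
  have hk : ∀ z ∈ ball (0 : ℂ) 1,
      preSch h 0 / 2 * h z + (deriv h 0 - preSch h 0 / 2 * h 0) ≠ 0 :=
    fun w hw h0 => H.den_ne hδ hδ1 w hw (by linear_combination h0)
  have hΔ : (1 : ℂ) * (deriv h 0 - preSch h 0 / 2 * h 0) - -h 0 * (preSch h 0 / 2) ≠ 0 := by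
    ring_nf; exact H.nz 0 m0
  obtain ⟨c1, c2, -⟩ := mob_calc isOpen_ball H.diff H.nz hk hΔ hz
  have n := hk z hz
  rw [← nrm_eq] at c1 c2
  have e0 : deriv h 0 + preSch h 0 / 2 * (h z - h 0)
      = preSch h 0 / 2 * h z + (deriv h 0 - preSch h 0 / 2 * h 0) := by ring
  rw [e0]
  have eN : nrm h z = (1 * h z + -h 0) /
    (preSch h 0 / 2 * h z + (deriv h 0 - preSch h 0 / 2 * h 0)) := by rw [nrm_eq]
  obtain ⟨q, hq⟩ : ∃ q, q = preSch h 0 / 2 * h z + (deriv h 0 - preSch h 0 / 2 * h 0) := ⟨_, rfl⟩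
  rw [← hq] at c2 n eN
  have c1' := c1.deriv
  rw [← hq] at c1'
  simp only [numA, denA, c2, c1', eN, ← hq]
  have hq' : deriv h 0 = q - preSch h 0 / 2 * h z + preSch h 0 / 2 * h 0 := by
    linear_combination -hq
  rw [hq']
  constructor
  · field_simp; ring
  · field_simp; ring

/-! ### Injectivity -/

/-- Functions in the class `DH δ` that extend continuously to the closed disk. -/
structure CH (δ : ℝ) (h : ℂ → ℂ) : Prop extends DH δ h where
  cont : ContinuousOn h (closedBall 0 1)

lemma Tm_contOn {a : ℂ} (ha : ‖a‖ < 1) : ContinuousOn (Tm a) (closedBall 0 1) := fun z hz =>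
  (Tm_deriv ha (by simpa using hz)).continuousAt.continuousWithinAt

lemma CH.comp {h : ℂ → ℂ} {δ : ℝ} {a : ℂ} (H : CH δ h) (ha : ‖a‖ < 1) :
    CH δ (fun w => h (Tm a w)) :=
  ⟨H.toDH.comp ha, H.cont.comp (Tm_contOn ha) fun z hz => by
    simpa using Tm_closed ha (by simpa using hz)⟩

/-- Two continuous functions on the closed disk agreeing on the open disk agree on the closed
disk. -/
lemma eq_closed {f k : ℂ → ℂ} (hf : ContinuousOn f (closedBall 0 1))
    (hk : ContinuousOn k (closedBall 0 1)) (e : ∀ z ∈ ball (0 : ℂ) 1, f z = k z) {z : ℂ}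
    (hz : ‖z‖ ≤ 1) : f z = k z := by
  have hcl : closure (ball (0 : ℂ) 1) = closedBall 0 1 := closure_ball _ one_ne_zero
  exact Set.EqOn.of_subset_closure (s := ball (0 : ℂ) 1) (t := closedBall 0 1) e hf hk
    ball_subset_closedBall hcl.ge (by simpa using hz)

/-- The normalizing denominator does not vanish even on the unit circle. -/
lemma CH.den_ne {h : ℂ → ℂ} {δ : ℝ} (H : CH δ h) (hδ : 0 < δ) (hδ1 : δ ≤ 1 / 4) {z : ℂ}
    (hz : ‖z‖ ≤ 1) : deriv h 0 + preSch h 0 / 2 * (h z - h 0) ≠ 0 := by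
  obtain ⟨k, hk, kc, ke⟩ := (H.toDH.nrm_NH hδ hδ1).exists_ext hδ hδ1
  have hc := H.cont
  have key : k z * (deriv h 0 + preSch h 0 / 2 * (h z - h 0)) = h z - h 0 := by
    refine eq_closed (f := fun z => k z * (deriv h 0 + preSch h 0 / 2 * (h z - h 0)))
      (k := fun z => h z - h 0) (by fun_prop) (by fun_prop) (fun w hw => ?_) hz
    have := H.toDH.den_ne hδ hδ1 w hw
    rw [ke w hw, nrm, div_mul_cancel₀ _ this]
  intro h0
  rw [h0, mul_zero] at key
  rw [← key, mul_zero, add_zero] at h0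
  exact H.nz 0 (mem_ball_self one_pos) h0

lemma CH.nrm_cont {h : ℂ → ℂ} {δ : ℝ} (H : CH δ h) (hδ : 0 < δ) (hδ1 : δ ≤ 1 / 4) :
    ContinuousOn (nrm h) (closedBall 0 1) := by
  have hc := H.cont
  exact ContinuousOn.div (f := fun z => h z - h 0)
    (g := fun z => deriv h 0 + preSch h 0 / 2 * (h z - h 0)) (by fun_prop) (by fun_prop)
    fun z hz => H.den_ne hδ hδ1 (by simpa using hz)

lemma numA_zero (h : ℂ → ℂ) : numA h 0 = h 0 * denA h 0 + deriv h 0 := by simp [numA]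

lemma denA_zero (h : ℂ → ℂ) : denA h 0 = -(preSch h 0 / 2) := by
  simp [denA]; ring

/-- A point of the closed disk and an exterior point never have the same image. -/
lemma CH.cross_out {h : ℂ → ℂ} {δ : ℝ} (H : CH δ h) (hδ : 0 < δ) (hδ1 : δ ≤ 1 / 4) {x ζ : ℂ}
    (hx : ‖x‖ ≤ 1) (hζ : ‖ζ‖ < 1) : numA h ζ - h x * denA h ζ ≠ 0 := by
  obtain ⟨y, hy, rfl⟩ := Tm_surj hζ hx
  have h1 := (H.comp hζ).den_ne hδ hδ1 hy
  obtain ⟨u, hu, e1, e2⟩ := num_den_comp hζ H.diff H.nz (mem_ball_self one_pos (x := (0 : ℂ)))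
  have e3 := numA_zero fun w => h (Tm ζ w)
  have e4 := denA_zero fun w => h (Tm ζ w)
  simp only [Tm_zero] at e1 e2 e3 h1
  intro h0
  apply h1
  linear_combination (-1 : ℂ) * e3 + e2 + u * h0 - h (Tm ζ y) * e1 + (h (Tm ζ y) - h ζ) * e4

/-- Two distinct exterior points never have the same image. -/
lemma CH.cross_out_out {h : ℂ → ℂ} {δ : ℝ} (H : CH δ h) (hδ : 0 < δ) (hδ1 : δ ≤ 1 / 4) {ξ ζ : ℂ}
    (hξ : ‖ξ‖ < 1) (hζ : ‖ζ‖ < 1) (hne : ξ ≠ ζ) :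
    numA h ζ * denA h ξ - numA h ξ * denA h ζ ≠ 0 := by
  obtain ⟨y, hy, rfl⟩ := Tm_surj' hζ hξ
  have hy0 : y ≠ 0 := by rintro rfl; exact hne (Tm_zero ζ)
  have HT := H.comp hζ
  have hyb : y ∈ ball (0 : ℂ) 1 := by simpa using hy
  have h1 := HT.den_ne hδ hδ1 hy.le
  obtain ⟨u, hu, e1, e2⟩ := num_den_comp hζ H.diff H.nz (mem_ball_self one_pos (x := (0 : ℂ)))
  obtain ⟨v, hv, f1, f2⟩ := num_den_comp hζ H.diff H.nz hyb
  obtain ⟨g1, -⟩ := num_den_nrm HT.toDH hδ hδ1 hyb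
  have e3 := numA_zero fun w => h (Tm ζ w)
  have e4 := denA_zero fun w => h (Tm ζ w)
  have b1 := ((HT.toDH.nrm_NH hδ hδ1).bounds hδ hδ1 hy).1
  have hD : denA (nrm fun w => h (Tm ζ w)) y ≠ 0 := by
    intro h0
    rw [denA, sub_eq_zero] at h0
    have := congrArg norm h0
    rw [RCLike.norm_conj, norm_mul, norm_mul, Complex.norm_real, Real.norm_of_nonneg
      (by nlinarith [norm_nonneg y])] at this
    norm_num at this
    have hp := norm_pos_iff.2 hy0
    nlinarith
  simp only [Tm_zero] at e1 e2 e3 h1 g1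
  intro h0
  refine mul_ne_zero hD h1 ?_
  rw [g1, f1, f2]
  have e5 : deriv (fun w => h (Tm ζ w)) 0 = u * (numA h ζ - h ζ * denA h ζ) := by
    linear_combination e2 - e3 - h ζ * e1
  have e6 : preSch (fun w => h (Tm ζ w)) 0 / 2 = -(u * denA h ζ) := by
    linear_combination -e1 + e4
  rw [e5, e6]
  linear_combination v * u * h0

/-- Injectivity on the closed disk. When both points lie on the circle, a disk automorphism makes
them antipodal. -/
lemma CH.inj_closed {h : ℂ → ℂ} {δ : ℝ} (H : CH δ h) (hδ : 0 < δ) (hδ1 : δ ≤ 1 / 100) {p q : ℂ}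
    (hp : ‖p‖ ≤ 1) (hq : ‖q‖ ≤ 1) (e : h p = h q) : p = q := by
  have hδ2 : δ ≤ 1 / 4 := by linarith
  have key : ∀ p q : ℂ, ‖p‖ < 1 → ‖q‖ ≤ 1 → h p = h q → p = q := by
    intro p q hp hq e
    obtain ⟨y, hy, rfl⟩ := Tm_surj hp hq
    have HT := H.comp hp
    have h1 := (HT.toDH.nrm_NH hδ hδ2).close_in hδ hδ2 (HT.nrm_cont hδ hδ2) hy
    have h2 : nrm (fun w => h (Tm p w)) y = 0 := by rw [nrm, Tm_zero, e, sub_self, zero_div]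
    rw [h2, zero_sub, norm_neg] at h1
    have : y = 0 := by
      by_contra h0
      have := norm_pos_iff.2 h0
      nlinarith
    rw [this, Tm_zero]
  rcases hp.lt_or_eq with hp1 | hp1
  · exact key p q hp1 hq e
  rcases hq.lt_or_eq with hq1 | hq1
  · exact (key q p hq1 hp e.symm).symm
  by_contra hne
  have hp0 : p * (starRingEnd ℂ) p = 1 := by
    rw [Complex.mul_conj, Complex.normSq_eq_norm_sq, hp1]; simp
  have hq0 : q * (starRingEnd ℂ) q = 1 := by
    rw [Complex.mul_conj, Complex.normSq_eq_norm_sq, hq1]; simp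
  have hm : ‖p + q‖ < 2 := by
    have h1 := parallelogram_law_with_norm ℝ p q
    have h2 := norm_pos_iff.2 (sub_ne_zero.2 hne)
    rw [hp1, hq1] at h1
    nlinarith [norm_nonneg (p + q)]
  have ht : 0 ≤ 4 - ‖p + q‖ ^ 2 := by nlinarith [norm_nonneg (p + q)]
  obtain ⟨t, ht0, ht1⟩ : ∃ t : ℝ, 0 ≤ t ∧ t ^ 2 = 4 - ‖p + q‖ ^ 2 :=
    ⟨√(4 - ‖p + q‖ ^ 2), Real.sqrt_nonneg _, Real.sq_sqrt ht⟩
  have ht1' : (t : ℂ) ^ 2 = 4 - (p + q) * ((starRingEnd ℂ) p + (starRingEnd ℂ) q) := by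
    rw [← map_add, Complex.mul_conj, Complex.normSq_eq_norm_sq]; exact_mod_cast ht1
  have hs0 : (2 + t : ℂ) ≠ 0 := by
    have : (2 + t : ℝ) ≠ 0 := by positivity
    exact_mod_cast this
  obtain ⟨a, ha⟩ : ∃ a : ℂ, a = (p + q) / (2 + t) := ⟨_, rfl⟩
  have hac : (starRingEnd ℂ) a = ((starRingEnd ℂ) p + (starRingEnd ℂ) q) / (2 + t) := by
    rw [ha, map_div₀, map_add, map_add, Complex.conj_ofReal, map_ofNat]
  have ha1 : ‖a‖ < 1 := by
    rw [ha, norm_div, show (2 + t : ℂ) = ((2 + t : ℝ) : ℂ) by push_cast; rfl, Complex.norm_real,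
      Real.norm_of_nonneg (by positivity), div_lt_one (by positivity)]
    linarith
  obtain ⟨x, hx, ex⟩ := Tm_surj ha1 hp
  obtain ⟨y, hy, ey⟩ := Tm_surj ha1 hq
  have den : ∀ p : ℂ, ‖p‖ ≤ 1 → 1 - (starRingEnd ℂ) a * p ≠ 0 := fun p hp => by
    simpa [sub_eq_add_neg] using Tm_den (a := -a) (by simpa using ha1) hp
  have ex' := ex
  have ey' := ey
  rw [Tm, div_eq_iff (Tm_den ha1 hx)] at ex'
  rw [Tm, div_eq_iff (Tm_den ha1 hy)] at ey'
  have ha' : a * (2 + t) = p + q := by rw [ha, div_mul_cancel₀ _ hs0]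
  have hac' : (starRingEnd ℂ) a * (2 + t) = (starRingEnd ℂ) p + (starRingEnd ℂ) q := by
    rw [hac, div_mul_cancel₀ _ hs0]
  have hX : ((p - a) * (1 - (starRingEnd ℂ) a * q) + (q - a) * (1 - (starRingEnd ℂ) a * p))
      * (2 + t) ^ 2 = 0 := by
    linear_combination (-2 * (2 + t) + (p + q) * ((starRingEnd ℂ) a * (2 + t))) * ha'
      + (-2 * p * q * (2 + t) + (p + q) * (p + q)) * hac' - 2 * (2 + t) * q * hp0
      - 2 * (2 + t) * p * hq0 + (p + q) * ht1'
  have hX' := (mul_eq_zero.1 hX).resolve_right (pow_ne_zero 2 hs0)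
  have hxy : (x + y) * ((1 - (starRingEnd ℂ) a * p) * (1 - (starRingEnd ℂ) a * q)) = 0 := by
    linear_combination (1 - (starRingEnd ℂ) a * q) * ex' + (1 - (starRingEnd ℂ) a * p) * ey' + hX'
  have hy' : y = -x := by
    have := (mul_eq_zero.1 hxy).resolve_right (mul_ne_zero (den p hp) (den q hq))
    linear_combination this
  have HT := H.comp ha1
  have hcl := fun {z : ℂ} (hz : ‖z‖ ≤ 1) =>
    (HT.toDH.nrm_NH hδ hδ2).close_in hδ hδ2 (HT.nrm_cont hδ hδ2) hz
  have c1 := hcl hx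
  have c2 := hcl hy
  have ek : nrm (fun w => h (Tm a w)) y = nrm (fun w => h (Tm a w)) x := by
    rw [nrm, nrm, ex, ey, e]
  rw [ek, hy', norm_neg] at c2
  have hx0 : x = 0 := by
    by_contra h0
    have hpos := norm_pos_iff.2 h0
    have e2 : ‖(2 : ℂ) * x‖ = 2 * ‖x‖ := by simp
    have e3 : (2 : ℂ) * x = (nrm (fun w => h (Tm a w)) x - -x)
      - (nrm (fun w => h (Tm a w)) x - x) := by ring
    have := norm_sub_le (nrm (fun w => h (Tm a w)) x - -x) (nrm (fun w => h (Tm a w)) x - x)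
    rw [← e3, e2] at this
    nlinarith
  apply hne
  rw [← ex, ← ey, hy', hx0, neg_zero]

/-- The Ahlfors–Weill extension is injective on the set where it is finite. -/
lemma CH.Gf_inj {h : ℂ → ℂ} {δ : ℝ} (H : CH δ h) (hδ : 0 < δ) (hδ1 : δ ≤ 1 / 100) {z w : ℂ}
    (hz : den1 h z ≠ 0) (hw : den1 h w ≠ 0) (e : Gf h h z = Gf h h w) : z = w := by
  have hδ2 : δ ≤ 1 / 4 := by linarith
  have key : ∀ z w : ℂ, ‖z‖ ≤ 1 → 1 < ‖w‖ → den1 h w ≠ 0 → Gf h h z ≠ Gf h h w := by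
    intro z w hz hw hD e
    have hD' : denA h (rho w) ≠ 0 := by
      rw [denA_rho h hw.le]; exact mul_ne_zero (by simpa using rho_ne hw.le) hD
    rw [Gf_in h h hz, Gf_num h hw.le hD, eq_div_iff hD'] at e
    exact H.cross_out hδ hδ2 hz (rho_norm_lt hw) (by linear_combination -e)
  rcases le_or_gt ‖z‖ 1 with h1 | h1 <;> rcases le_or_gt ‖w‖ 1 with h2 | h2
  · rw [Gf_in h h h1, Gf_in h h h2] at e
    exact H.inj_closed hδ hδ1 h1 h2 e
  · exact absurd e (key z w h1 h2 hw)
  · exact absurd e.symm (key w z h2 h1 hz)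
  · by_contra hne
    have hD : denA h (rho z) ≠ 0 := by
      rw [denA_rho h h1.le]; exact mul_ne_zero (by simpa using rho_ne h1.le) hz
    have hD' : denA h (rho w) ≠ 0 := by
      rw [denA_rho h h2.le]; exact mul_ne_zero (by simpa using rho_ne h2.le) hw
    rw [Gf_num h h1.le hz, Gf_num h h2.le hw, div_eq_div_iff hD hD'] at e
    refine H.cross_out_out hδ hδ2 (rho_norm_lt h2) (rho_norm_lt h1) (fun h3 => hne ?_)
      (by linear_combination e)
    rw [rho_out h1.le, rho_out h2.le] at h3
    exact (starRingEnd ℂ).injective (by simpa using h3.symm)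

/-! ### Wirtinger derivatives of the extension -/

/-- The exterior formula for `Gf`. -/
noncomputable def Of (h g : ℂ → ℂ) (z : ℂ) : ℂ :=
  g (1 / (starRingEnd ℂ) z) + (z - 1 / (starRingEnd ℂ) z) * deriv g (1 / (starRingEnd ℂ) z) /
    (1 - (z - 1 / (starRingEnd ℂ) z) * preSch h (1 / (starRingEnd ℂ) z) / 2)

lemma Of_eq (h g : ℂ → ℂ) {z : ℂ} (hz : 1 ≤ ‖z‖) : Gf h g z = Of h g z := by
  rw [Gf, rho_out hz, Of]

lemma hasWirt_refl {z : ℂ} (hz : z ≠ 0) :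
    HasWirt (fun w => 1 / (starRingEnd ℂ) w) 0 (-(1 / (starRingEnd ℂ) z) ^ 2) z := by
  have h0 : (starRingEnd ℂ) z ≠ 0 := by simpa using hz
  have := (hasWirt_const 1 z).div (hasWirt_id z).conj h0
  refine this.congr (by simp) ?_
  rw [map_one]; field_simp; try ring

/-- Reflection in the circle has `∂ = 0` and `∂̄ = -ζ²`; the pre-Schwarzian terms cancel in `∂̄`, which
leaves the Schwarzian and the derivative of the dilatation. -/
lemma Of_wirt {h g : ℂ → ℂ} {U : Set ℂ} (hU : IsOpen U) (hd : DifferentiableOn ℂ h U)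
    (gd : DifferentiableOn ℂ g U) (hn : ∀ z ∈ U, deriv h z ≠ 0) {z ζ u D : ℂ} (hz : z ≠ 0)
    (hζ : ζ = 1 / (starRingEnd ℂ) z) (hu : u = z - ζ) (hDe : D = 1 - u * preSch h ζ / 2)
    (hζU : ζ ∈ U) (hD : D ≠ 0) :
    HasWirt (Of h g) (deriv g ζ / D ^ 2)
      (-ζ ^ 2 * (u ^ 2 / 2 * schw h ζ * deriv g ζ + u * deriv (dil h g) ζ * deriv h ζ * D)
        / D ^ 2) z := by
  have r := hasWirt_refl hz
  have hP := hda (preSch_diff hU hd hn) hU hζU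
  have hg := hda gd hU hζU
  have hg' := hda (deriv_diff hU gd) hU hζU
  have hh' := hda (deriv_diff hU hd) hU hζU
  have n := hn ζ hζU
  rw [hζ] at hP hg hg'
  have W1 := hg.comp_hasWirt (F := fun w => 1 / (starRingEnd ℂ) w) r
  have W2 := hg'.comp_hasWirt (F := fun w => 1 / (starRingEnd ℂ) w) r
  have W3 := hP.comp_hasWirt (F := fun w => 1 / (starRingEnd ℂ) w) r
  have W4 := (hasWirt_id z).sub r
  have W5 := (hasWirt_const 1 z).sub ((W4.mul W3).div (hasWirt_const 2 z) two_ne_zero)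
  have W6 := W1.add ((W4.mul W2).div W5 (by rw [← hζ, ← hu, ← hDe]; exact hD))
  have hω : deriv (dil h g) ζ = (deriv (deriv g) ζ * deriv h ζ - deriv g ζ * deriv (deriv h) ζ)
      / deriv h ζ ^ 2 := by
    rw [← hζ] at hg'
    exact (hg'.div hh' n).deriv
  have hP2 : deriv (deriv h) ζ = preSch h ζ * deriv h ζ := by rw [preSch]; field_simp
  refine HasWirt.congr (F := Of h g) W6 ?_ ?_
  · rw [← hζ, ← hu, ← hDe]
    field_simp
    rw [hDe]; ring
  · rw [← hζ, ← hu, ← hDe, hω, hP2, schw]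
    field_simp
    rw [hDe]; ring

/-- Wirtinger derivatives of the Ahlfors–Weill extension, including at points of the unit circle
when the data are holomorphic across it. -/
lemma Gf_wirt {h g : ℂ → ℂ} {U : Set ℂ} (hU : IsOpen U) (hd : DifferentiableOn ℂ h U)
    (gd : DifferentiableOn ℂ g U) (hn : ∀ z ∈ U, deriv h z ≠ 0) {z : ℂ}
    (hζU : rho z ∈ U) (hD : den1 h z ≠ 0) :
    HasWirt (Gf h g) (deriv g (rho z) / den1 h z ^ 2)
      (-(rho z) ^ 2 * ((z - rho z) ^ 2 / 2 * schw h (rho z) * deriv g (rho z)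
        + (z - rho z) * deriv (dil h g) (rho z) * deriv h (rho z) * den1 h z)
        / den1 h z ^ 2) z := by
  rcases lt_trichotomy ‖z‖ 1 with h1 | h1 | h1
  · rw [rho_in h1.le] at hζU ⊢
    have := (hda gd hU hζU).hasWirt
    have e : Gf h g =ᶠ[nhds z] g := by
      filter_upwards [(continuous_norm.continuousAt (x := z)).eventually (gt_mem_nhds h1)] with w hw
      exact Gf_in h g (le_of_lt hw)
    refine (this.congr_fun e).congr ?_ ?_
    · rw [den1_in h h1.le]; simp
    · simp
  · have hz0 : z ≠ 0 := by rintro rfl; simp at h1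
    have W := Of_wirt hU hd gd hn hz0 (rho_out h1.ge) rfl rfl hζU hD
    have V : HasWirt g (deriv g (rho z) / den1 h z ^ 2)
      (-(rho z) ^ 2 * ((z - rho z) ^ 2 / 2 * schw h (rho z) * deriv g (rho z)
        + (z - rho z) * deriv (dil h g) (rho z) * deriv h (rho z) * den1 h z)
        / den1 h z ^ 2) z := by
      rw [rho_in h1.le] at hζU ⊢
      refine (hda gd hU hζU).hasWirt.congr ?_ ?_
      · rw [den1_in h h1.le]; simp
      · simp
    have V' : HasFDerivWithinAt (Gf h g) _ {w | ‖w‖ ≤ 1} z :=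
      (HasFDerivAt.hasFDerivWithinAt V).congr (fun w hw => Gf_in h g hw) (Gf_in h g h1.le)
    have W' : HasFDerivWithinAt (Gf h g) _ {w | 1 ≤ ‖w‖} z :=
      (HasFDerivAt.hasFDerivWithinAt W).congr (fun w hw => Of_eq h g hw) (Of_eq h g h1.ge)
    have := V'.union W'
    rw [show ({w : ℂ | ‖w‖ ≤ 1} ∪ {w | 1 ≤ ‖w‖}) = Set.univ from
      Set.eq_univ_of_forall fun w => by
        rcases le_total ‖w‖ 1 with h | h
        exacts [Or.inl h, Or.inr h]] at this
    exact this.hasFDerivAt Filter.univ_mem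
  · have hz0 : z ≠ 0 := by rintro rfl; simp at h1; linarith
    have W := Of_wirt hU hd gd hn hz0 (rho_out h1.le) rfl rfl hζU hD
    refine W.congr_fun ?_
    filter_upwards [(continuous_norm.continuousAt (x := z)).eventually (lt_mem_nhds h1)] with w hw
    exact Of_eq h g (le_of_lt hw)

lemma Gf_wirt_self {h : ℂ → ℂ} {U : Set ℂ} (hU : IsOpen U) (hd : DifferentiableOn ℂ h U)
    (hn : ∀ z ∈ U, deriv h z ≠ 0) {z : ℂ} (hζU : rho z ∈ U) (hD : den1 h z ≠ 0) :
    HasWirt (Gf h h) (deriv h (rho z) / den1 h z ^ 2)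
      (-(rho z) ^ 2 * ((z - rho z) ^ 2 / 2 * schw h (rho z)) * (deriv h (rho z) / den1 h z ^ 2))
      z := by
  have e : dil h h =ᶠ[nhds (rho z)] fun _ => 1 := by
    filter_upwards [hU.mem_nhds hζU] with w hw using div_self (hn w hw)
  refine (Gf_wirt hU hd hd hn hζU hD).congr rfl ?_
  rw [e.deriv_eq]; simp; ring

/-- The exterior quantities in terms of the disk weights. -/
lemma norm_rho_sub (z : ℂ) (hz : 1 ≤ ‖z‖) : ‖rho z‖ * ‖z - rho z‖ = 1 - ‖rho z‖ ^ 2 := by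
  rw [norm_sub_rho hz]; linear_combination (1 - ‖rho z‖ ^ 2) * rho_norm_mul hz

/-- The Schwarzian contribution to the `∂̄`-derivative, relative to the `∂`-derivative, is small. -/
lemma coef_S {h : ℂ → ℂ} {δ : ℝ} (z : ℂ) (hδ : 0 ≤ δ)
    (hs : 1 ≤ ‖z‖ → (1 - ‖rho z‖ ^ 2) ^ 2 * ‖schw h (rho z)‖ ≤ δ) :
    ‖-(rho z) ^ 2 * ((z - rho z) ^ 2 / 2 * schw h (rho z))‖ ≤ δ / 2 := by
  rcases le_or_gt 1 ‖z‖ with h1 | h1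
  · have := hs h1
    rw [← norm_rho_sub z h1] at this
    rw [norm_mul, norm_neg, norm_mul, norm_div, norm_pow, norm_pow, Complex.norm_ofNat]
    linarith
  · rw [rho_in h1.le]; simp; linarith

/-- The contribution of the dilatation to the `∂̄`-derivative, relative to `∂`, is small. -/
lemma coef_ω {h g : ℂ → ℂ} {δ M : ℝ} (z : ℂ) (hδ : 0 ≤ δ) (hM : 0 ≤ M)
    (hp : 1 ≤ ‖z‖ → (1 - ‖rho z‖ ^ 2) * ‖preSch h (rho z)‖ ≤ M)
    (hs : 1 ≤ ‖z‖ → (1 - ‖rho z‖ ^ 2) * ‖deriv (dil h g) (rho z)‖ ≤ δ) :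
    ‖-(rho z) ^ 2 * ((z - rho z) * deriv (dil h g) (rho z) * den1 h z)‖ ≤ δ * (1 + M) := by
  rcases le_or_gt 1 ‖z‖ with h1 | h1
  · have h2 := hs h1
    have h3 := hp h1
    rw [← norm_rho_sub z h1] at h2 h3
    have h4 : ‖rho z‖ * ‖den1 h z‖ ≤ 1 + M := by
      have : ‖den1 h z‖ ≤ 1 + ‖(z - rho z) * preSch h (rho z) / 2‖ := by
        rw [den1]; refine (norm_sub_le _ _).trans (by simp)
      rw [norm_div, norm_mul, Complex.norm_ofNat] at this
      have h5 : ‖rho z‖ * ‖den1 h z‖ ≤ ‖rho z‖ * (1 + ‖z - rho z‖ * ‖preSch h (rho z)‖ / 2) := by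
        gcongr
      nlinarith [rho_norm_le z, norm_nonneg (rho z)]
    rw [norm_mul, norm_neg, norm_mul, norm_mul, norm_pow]
    calc _ = (‖rho z‖ * ‖z - rho z‖ * ‖deriv (dil h g) (rho z)‖) * (‖rho z‖ * ‖den1 h z‖) := by
          ring
      _ ≤ _ := by gcongr
  · rw [rho_in h1.le]; simp; positivity

/-! ### Dilates -/

/-- The dilates `z ↦ h (r z) / r`. -/
noncomputable def kr (r : ℝ) (h : ℂ → ℂ) (z : ℂ) : ℂ := h (r * z) / r

lemma deriv_scale (h : ℂ → ℂ) (r : ℂ) (z : ℂ) :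
    deriv (fun w => h (r * w)) z = r * deriv h (r * z) := by
  rw [deriv_comp_mul_left, smul_eq_mul]

lemma kr_deriv (h : ℂ → ℂ) {r : ℝ} (hr : r ≠ 0) : deriv (kr r h) = fun z => deriv h (r * z) := by
  funext z
  have : kr r h = fun z => h (r * z) / r := rfl
  have hr' : (r : ℂ) ≠ 0 := by exact_mod_cast hr
  rw [this, deriv_div_const, deriv_scale, mul_div_cancel_left₀ _ hr']

lemma kr_preSch (h : ℂ → ℂ) {r : ℝ} (hr : r ≠ 0) :
    preSch (kr r h) = fun z => r * preSch h (r * z) := by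
  funext z
  rw [preSch, kr_deriv h hr, deriv_scale (deriv h), preSch, mul_div_assoc]

lemma kr_schw (h : ℂ → ℂ) {r : ℝ} (hr : r ≠ 0) (z : ℂ) :
    schw (kr r h) z = r ^ 2 * schw h (r * z) := by
  rw [schw, kr_preSch h hr, deriv_const_mul_field, deriv_scale (preSch h), schw]; ring

lemma scale_mem {r : ℝ} (h0 : 0 < r) (h1 : r ≤ 1) {z : ℂ} (hz : z ∈ ball (0 : ℂ) 1) :
    (r * z : ℂ) ∈ ball (0 : ℂ) 1 := by
  rw [mem_ball_zero_iff] at hz ⊢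
  rw [norm_mul, Complex.norm_real, Real.norm_of_nonneg h0.le]
  nlinarith [norm_nonneg z]

lemma scale_mem_closed {r : ℝ} (h0 : 0 < r) (h1 : r ≤ 1) {z : ℂ} (hz : z ∈ closedBall (0 : ℂ) 1) :
    (r * z : ℂ) ∈ closedBall (0 : ℂ) 1 := by
  rw [mem_closedBall_zero_iff] at hz ⊢
  rw [norm_mul, Complex.norm_real, Real.norm_of_nonneg h0.le]
  nlinarith [norm_nonneg z]

lemma weight_scale {r : ℝ} (h0 : 0 < r) (h1 : r ≤ 1) {z : ℂ} (hz : z ∈ ball (0 : ℂ) 1) :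
    0 ≤ 1 - ‖z‖ ^ 2 ∧ r * (1 - ‖z‖ ^ 2) ≤ 1 - ‖(r * z : ℂ)‖ ^ 2 := by
  rw [mem_ball_zero_iff] at hz
  have h2 : 0 ≤ 1 - ‖z‖ ^ 2 := by nlinarith [norm_nonneg z]
  rw [norm_mul, Complex.norm_real, Real.norm_of_nonneg h0.le]
  refine ⟨h2, ?_⟩
  nlinarith [mul_nonneg h0.le (sq_nonneg ‖z‖), mul_nonneg (mul_nonneg h0.le (sub_nonneg.2 h1)) (sq_nonneg ‖z‖)]

lemma kr_diff {h : ℂ → ℂ} {r : ℝ} {s : Set ℂ} (hd : DifferentiableOn ℂ h (ball 0 1))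
    (hs : ∀ z ∈ s, (r * z : ℂ) ∈ ball (0 : ℂ) 1) : DifferentiableOn ℂ (kr r h) s :=
  (hd.comp (by fun_prop) hs).div_const _

lemma DH.dilate {h : ℂ → ℂ} {δ r : ℝ} (H : DH δ h) (h0 : 0 < r) (h1 : r ≤ 1) : DH δ (kr r h) := by
  refine ⟨kr_diff H.diff fun z hz => scale_mem h0 h1 hz, fun z hz => ?_, fun z hz => ?_⟩
  · rw [kr_deriv h h0.ne']; exact H.nz _ (scale_mem h0 h1 hz)
  · rw [kr_schw h h0.ne', norm_mul, norm_pow, Complex.norm_real, Real.norm_of_nonneg h0.le]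
    obtain ⟨h2, h3⟩ := weight_scale h0 h1 hz
    refine le_trans ?_ (H.sch _ (scale_mem h0 h1 hz))
    rw [← mul_assoc, ← mul_pow, mul_comm (1 - ‖z‖ ^ 2)]
    gcongr

lemma NH.dilate {h : ℂ → ℂ} {δ r : ℝ} (H : NH δ h) (h0 : 0 < r) (h1 : r ≤ 1) : NH δ (kr r h) :=
  ⟨H.toDH.dilate h0 h1, by simp [kr, H.n0], by simp [kr_deriv h h0.ne', H.n1],
    by simp [kr_preSch h h0.ne', H.n2]⟩

lemma kr_cont {h : ℂ → ℂ} {r : ℝ} (hc : ContinuousOn h (closedBall 0 1)) (h0 : 0 < r)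
    (h1 : r ≤ 1) : ContinuousOn (kr r h) (closedBall 0 1) :=
  (hc.comp (by fun_prop) fun z hz => scale_mem_closed h0 h1 hz).div_const _

/-- Joint continuity of the extensions of the dilates, up to the boundary parameter `r = 1`. -/
lemma NH.joint_cont {h : ℂ → ℂ} {δ : ℝ} (H : NH δ h) (hδ : 0 < δ) (hδ1 : δ ≤ 1 / 4)
    (hc : ContinuousOn h (closedBall 0 1)) :
    ContinuousOn (fun p : ℝ × ℂ => Gf (kr p.1 h) (kr p.1 h) p.2) (Set.Ioc 0 1 ×ˢ Set.univ) := by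
  have hρ : Continuous fun p : ℝ × ℂ => (p.1 * rho p.2 : ℂ) := by
    have := rho_cont; fun_prop
  refine ContinuousOn.add (f := fun p : ℝ × ℂ => kr p.1 h (rho p.2))
    (g := fun p : ℝ × ℂ => (p.2 - rho p.2) * deriv (kr p.1 h) (rho p.2) / den1 (kr p.1 h) p.2)
    ?_ ?_
  · refine ContinuousOn.div (f := fun p : ℝ × ℂ => h (p.1 * rho p.2)) (g := fun p => (p.1 : ℂ))
      (hc.comp hρ.continuousOn fun p hp => ?_) (by fun_prop) fun p hp => ?_
    · exact scale_mem_closed hp.1.1 hp.1.2 (rho_mem _)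
    · exact_mod_cast hp.1.1.ne'
  · rintro ⟨r, x⟩ ⟨hr, -⟩
    simp only at hr
    by_cases hm : ((r : ℂ) * rho x) ∈ ball (0 : ℂ) 1
    · have c1 : ContinuousAt (fun p : ℝ × ℂ => deriv h (p.1 * rho p.2)) (r, x) :=
        ContinuousAt.comp (g := deriv h) (f := fun p : ℝ × ℂ => (p.1 * rho p.2 : ℂ))
          (hda (deriv_diff isOpen_ball H.diff) isOpen_ball hm).continuousAt hρ.continuousAt
      have c2 : ContinuousAt (fun p : ℝ × ℂ => preSch h (p.1 * rho p.2)) (r, x) :=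
        ContinuousAt.comp (g := preSch h) (f := fun p : ℝ × ℂ => (p.1 * rho p.2 : ℂ))
          (hda (preSch_diff isOpen_ball H.diff H.nz) isOpen_ball hm).continuousAt hρ.continuousAt
      have c3 : ContinuousAt (fun p : ℝ × ℂ => p.2 - rho p.2) (r, x) := by
        have := rho_cont; fun_prop
      have hden := (H.dilate hr.1 hr.2).den1_ne hδ hδ1 x
      rw [den1, kr_preSch h hr.1.ne'] at hden
      have c4 : ContinuousAt (fun p : ℝ × ℂ => (p.2 - rho p.2) * deriv h (p.1 * rho p.2) /
          (1 - (p.2 - rho p.2) * (p.1 * preSch h (p.1 * rho p.2)) / 2)) (r, x) := by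
        refine (c3.mul c1).div ?_ hden
        exact continuousAt_const.sub ((c3.mul (ContinuousAt.mul (by fun_prop) c2)).div_const 2)
      refine c4.continuousWithinAt.congr (fun p hp => ?_) ?_
      · rw [den1, kr_preSch h hp.1.1.ne', kr_deriv h hp.1.1.ne']
      · simp only; rw [den1, kr_preSch h hr.1.ne', kr_deriv h hr.1.ne']
    · have h1 : 1 ≤ ‖rho x‖ := by
        rw [mem_ball_zero_iff, norm_mul, Complex.norm_real, Real.norm_of_nonneg hr.1.le] at hm
        by_contra hlt
        exact hm (by nlinarith [hr.1, hr.2, norm_nonneg (rho x)])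
      have hx1 : rho x = x := by
        rcases le_or_gt ‖x‖ 1 with h2 | h2
        · exact rho_in h2
        · linarith [rho_norm_lt h2]
      have hx2 : ‖rho x‖ = 1 := le_antisymm (rho_norm_le x) h1
      have hv : (x - rho x) * deriv (kr r h) (rho x) / den1 (kr r h) x = 0 := by
        rw [hx1]; simp
      rw [ContinuousWithinAt]
      simp only
      rw [hv]
      refine squeeze_zero_norm' (a := fun p : ℝ × ℂ => 4 * ‖p.2‖ * √(1 - ‖rho p.2‖)) ?_ ?_
      · filter_upwards [self_mem_nhdsWithin] with p hp
        exact (H.dilate hp.1.1 hp.1.2).phi_le hδ hδ1 p.2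
      · have : Continuous fun p : ℝ × ℂ => 4 * ‖p.2‖ * √(1 - ‖rho p.2‖) := by
          have := rho_cont; fun_prop
        have := this.tendsto (r, x)
        simp only [hx2] at this
        simpa using this.mono_left nhdsWithin_le_nhds

/-! ### Surjectivity -/

/-- Surjectivity for functions holomorphic across the unit circle: at a minimum of
`z ↦ ‖Gf h h z - c‖ ^ 2` the derivative is invertible, which forces the value `0`. -/
lemma NH.surj_smooth {h : ℂ → ℂ} {δ : ℝ} {U : Set ℂ} (H : NH δ h) (hδ : 0 < δ) (hδ1 : δ ≤ 1 / 100)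
    (hU : IsOpen U) (hsub : closedBall (0 : ℂ) 1 ⊆ U) (hd : DifferentiableOn ℂ h U)
    (hn : ∀ z ∈ U, deriv h z ≠ 0) : Function.Surjective (Gf h h) := by
  intro c
  have hδ2 : δ ≤ 1 / 4 := by linarith
  have hw : ∀ z, HasWirt (Gf h h) _ _ z := fun z =>
    Gf_wirt_self hU hd hn (hsub (rho_mem z)) (H.den1_ne hδ hδ2 z)
  have hcont : Continuous (Gf h h) := continuous_iff_continuousAt.2 fun z => (hw z).continuousAt
  have hφ : Continuous fun z => ‖Gf h h z - c‖ ^ 2 := by fun_prop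
  obtain ⟨z, hz⟩ := hφ.exists_forall_le (by
    have h1 : Filter.Tendsto (fun z : ℂ => 1 / 2 * ‖z‖ - ‖c‖) (Filter.cocompact ℂ) Filter.atTop :=
      Filter.tendsto_atTop_add_const_right _ _
        ((tendsto_norm_cocompact_atTop).const_mul_atTop (by norm_num))
    have h2 := (Filter.tendsto_pow_atTop (α := ℝ) (n := 2) (by norm_num)).comp
      (Filter.tendsto_atTop_mono (g := fun z : ℂ => ‖Gf h h z - c‖) (fun z => ?_) h1)
    · exact h2
    · have := H.close hδ hδ1 (hd.continuousOn.mono hsub) z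
      have e1 := norm_sub_norm_le z (z - Gf h h z)
      have e2 := norm_sub_norm_le (Gf h h z) c
      rw [norm_sub_rev] at this
      rw [sub_sub_cancel] at e1
      linarith)
  refine ⟨z, ?_⟩
  by_contra hne
  have hy : Gf h h z - c ≠ 0 := sub_ne_zero.2 hne
  have ha : deriv h (rho z) / den1 h z ^ 2 ≠ 0 :=
    div_ne_zero (hn _ (hsub (rho_mem z))) (pow_ne_zero _ (H.den1_ne hδ hδ2 z))
  have hb : ‖-(rho z) ^ 2 * ((z - rho z) ^ 2 / 2 * schw h (rho z))‖ ≤ δ / 2 := by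
    refine coef_S z hδ.le fun h1 => ?_
    rcases h1.lt_or_eq with h2 | h2
    · exact H.sch _ (rho_mem_ball h2)
    · rw [rho_norm_out h1, ← h2]; simp; exact hδ.le
  have hw' := hw z
  set a := deriv h (rho z) / den1 h z ^ 2
  set b := -(rho z) ^ 2 * ((z - rho z) ^ 2 / 2 * schw h (rho z))
  set y := Gf h h z - c with hydef
  have hD : HasFDerivAt (fun z => Gf h h z - c) (wirtL a (b * a)) z := hw'.sub_const c
  have h0 := IsLocalMin.hasFDerivAt_eq_zero (Filter.Eventually.of_forall hz) hD.norm_sq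
  have h1 := congrArg (fun L : ℂ →L[ℝ] ℝ => L (y / a)) h0
  simp only [smul_apply, ContinuousLinearMap.comp_apply,
    innerSL_apply_apply, wirtL_apply, zero_apply] at h1
  rw [← hydef, mul_div_cancel₀ _ ha, inner_add_right, real_inner_self_eq_norm_sq] at h1
  have h2 : |inner ℝ y (b * a * (starRingEnd ℂ) (y / a))| ≤ δ / 2 * ‖y‖ ^ 2 := by
    refine (abs_real_inner_le_norm _ _).trans ?_
    have : ‖b * a * (starRingEnd ℂ) (y / a)‖ = ‖b‖ * ‖y‖ := by
      rw [norm_mul, norm_mul, RCLike.norm_conj, mul_assoc, ← norm_mul, mul_div_cancel₀ _ ha]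
    rw [this]
    nlinarith [norm_nonneg y, sq_nonneg ‖y‖]
  have h3 : 0 < ‖y‖ := norm_pos_iff.2 hy
  have h4 := (abs_le.1 h2).1
  simp only [nsmul_eq_mul, Nat.cast_ofNat] at h1
  nlinarith [sq_pos_of_pos h3]

lemma kr_one (h : ℂ → ℂ) : kr 1 h = h := by funext z; simp [kr]

/-- Surjectivity passes from the dilates to the limit. -/
lemma NH.surj {h : ℂ → ℂ} {δ : ℝ} (H : NH δ h) (hδ : 0 < δ) (hδ1 : δ ≤ 1 / 100)
    (hc : ContinuousOn h (closedBall 0 1)) : Function.Surjective (Gf h h) := by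
  intro c
  have hδ2 : δ ≤ 1 / 4 := by linarith
  set r : ℕ → ℝ := fun n => 1 - 1 / ((n : ℝ) + 2) with hr
  have hr0 : ∀ n, 0 < r n ∧ r n < 1 := fun n => by
    have h1 : (0 : ℝ) < n + 2 := by positivity
    have h2 : 1 / ((n : ℝ) + 2) < 1 := by
      rw [div_lt_one h1]; linarith [(Nat.cast_nonneg n : (0 : ℝ) ≤ n)]
    have h3 : 0 < 1 / ((n : ℝ) + 2) := by positivity
    constructor <;> simp only [hr] <;> linarith
  have hrlim : Filter.Tendsto r Filter.atTop (nhds 1) := by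
    have : Filter.Tendsto (fun n : ℕ => 1 / ((n : ℝ) + 2)) Filter.atTop (nhds 0) :=
      tendsto_const_nhds.div_atTop
        (Filter.tendsto_atTop_add_const_right _ _ tendsto_natCast_atTop_atTop)
    simpa only [sub_zero] using tendsto_const_nhds (x := (1 : ℝ)).sub this
  have hs : ∀ n, ∃ z, Gf (kr (r n) h) (kr (r n) h) z = c := fun n => by
    obtain ⟨h0, h1⟩ := hr0 n
    have hmem : ∀ z ∈ ball (0 : ℂ) (1 / r n), (r n * z : ℂ) ∈ ball (0 : ℂ) 1 := fun z hz => by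
      rw [mem_ball_zero_iff] at hz ⊢
      rw [norm_mul, Complex.norm_real, Real.norm_of_nonneg h0.le]
      rwa [lt_div_iff₀' h0] at hz
    refine (H.dilate h0 h1.le).surj_smooth hδ hδ1 (isOpen_ball (x := 0) (ε := 1 / r n))
      (closedBall_subset_ball (by rw [lt_div_iff₀ h0]; linarith)) (kr_diff H.diff hmem)
      (fun z hz => ?_) c
    rw [kr_deriv h h0.ne']; exact H.nz _ (hmem z hz)
  choose z hz using hs
  have hzb : ∀ n, z n ∈ closedBall (0 : ℂ) (2 * ‖c‖) := fun n => by
    have h1 := (H.dilate (hr0 n).1 (hr0 n).2.le).close hδ hδ1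
      (kr_cont hc (hr0 n).1 (hr0 n).2.le) (z n)
    rw [hz n, norm_sub_rev] at h1
    have h2 := norm_sub_norm_le (z n) (z n - c)
    rw [sub_sub_cancel] at h2
    rw [mem_closedBall_zero_iff]; linarith
  obtain ⟨w, -, φ, hφ, hlim⟩ := (isCompact_closedBall (0 : ℂ) (2 * ‖c‖)).tendsto_subseq hzb
  refine ⟨w, ?_⟩
  have hj := H.joint_cont hδ hδ2 hc (1, w) ⟨⟨one_pos, le_rfl⟩, trivial⟩
  have ht : Filter.Tendsto (fun n => (r (φ n), z (φ n))) Filter.atTop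
      (nhdsWithin (1, w) (Set.Ioc 0 1 ×ˢ Set.univ)) := by
    refine tendsto_nhdsWithin_iff.2
      ⟨(hrlim.comp hφ.tendsto_atTop).prodMk_nhds hlim, Filter.Eventually.of_forall fun n => ?_⟩
    exact ⟨⟨(hr0 _).1, (hr0 _).2.le⟩, trivial⟩
  have h2 := hj.tendsto.comp ht
  simp only [kr_one] at h2
  refine tendsto_nhds_unique h2 ?_
  simp only [Function.comp_def, hz]
  exact tendsto_const_nhds

lemma NH.Gf_continuous {h : ℂ → ℂ} {δ : ℝ} (H : NH δ h) (hδ : 0 < δ) (hδ1 : δ ≤ 1 / 100)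
    (hc : ContinuousOn h (closedBall 0 1)) : Continuous (Gf h h) := by
  have h1 := (H.joint_cont hδ (by linarith) hc).comp_continuous
    (f := fun z : ℂ => ((1 : ℝ), z)) (by fun_prop) fun z => ⟨⟨one_pos, le_rfl⟩, trivial⟩
  simpa only [kr_one, Function.comp_def] using h1

/-- The Ahlfors–Weill extension of a normalized function is a homeomorphism of the plane. -/
lemma NH.exists_homeo {h : ℂ → ℂ} {δ : ℝ} (H : NH δ h) (hδ : 0 < δ) (hδ1 : δ ≤ 1 / 100)
    (hc : ContinuousOn h (closedBall 0 1)) : ∃ E : ℂ ≃ₜ ℂ, ∀ z, E z = Gf h h z := by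
  have hδ2 : δ ≤ 1 / 4 := by linarith
  have hinj : Function.Injective (Gf h h) := fun z w e =>
    (CH.mk H.toDH hc).Gf_inj hδ hδ1 (H.den1_ne hδ hδ2 z) (H.den1_ne hδ hδ2 w) e
  have hcont := H.Gf_continuous hδ hδ1 hc
  have hprop : IsProperMap (Gf h h) := by
    refine isProperMap_iff_tendsto_cocompact.2 ⟨hcont, ?_⟩
    refine Filter.tendsto_cocompact_cocompact_of_norm fun ε => ⟨2 * ε, fun z hz => ?_⟩
    have h1 := H.close hδ hδ1 hc z
    have h2 := norm_sub_norm_le z (z - Gf h h z)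
    rw [norm_sub_rev] at h1
    rw [sub_sub_cancel] at h2
    linarith
  exact ⟨(Equiv.ofBijective _ ⟨hinj, H.surj hδ hδ1 hc⟩).toHomeomorphOfContinuousClosed
    hcont hprop.isClosedMap, fun z => rfl⟩

/-! ### Reduction to the normal form, and Lipschitz bounds from derivative bounds -/

/-- The extension of `h` is a Möbius transformation of the extension of the normalization of `h`;
the pole of the Möbius transformation is the point where the extension of `h` is infinite. -/
lemma DH.moebius {h : ℂ → ℂ} {δ : ℝ} (H : DH δ h) (hδ : 0 < δ) (hδ1 : δ ≤ 1 / 4) {z : ℂ}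
    (hq : ‖z‖ ≤ 1 → deriv h 0 + preSch h 0 / 2 * (h z - h 0) ≠ 0) (hD : den1 h z ≠ 0) :
    1 - preSch h 0 / 2 * Gf (nrm h) (nrm h) z ≠ 0 ∧
    Gf h h z = h 0 + deriv h 0 * Gf (nrm h) (nrm h) z /
      (1 - preSch h 0 / 2 * Gf (nrm h) (nrm h) z) := by
  have hh1 : deriv h 0 ≠ 0 := H.nz 0 (mem_ball_self one_pos)
  rcases le_or_gt ‖z‖ 1 with h1 | h1
  · have hq := hq h1
    rw [Gf_in _ _ h1, Gf_in _ _ h1, nrm]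
    set q := deriv h 0 + preSch h 0 / 2 * (h z - h 0) with hqd
    have e : 1 - preSch h 0 / 2 * ((h z - h 0) / q) = deriv h 0 / q := by
      rw [eq_div_iff hq, sub_mul, mul_assoc, div_mul_cancel₀ _ hq]; rw [hqd]; ring
    rw [e]
    refine ⟨div_ne_zero hh1 hq, ?_⟩
    field_simp
    ring
  · have hm := rho_mem_ball h1
    have hq := H.den_ne hδ hδ1 _ hm
    obtain ⟨e1, e2⟩ := num_den_nrm H hδ hδ1 hm
    have hk := (H.nrm_NH hδ hδ1).den1_ne hδ hδ1 z
    have hr : (starRingEnd ℂ) (rho z) ≠ 0 := by simpa using rho_ne h1.le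
    have hDk : denA (nrm h) (rho z) ≠ 0 := by rw [denA_rho _ h1.le]; exact mul_ne_zero hr hk
    have hDh : denA h (rho z) ≠ 0 := by rw [denA_rho _ h1.le]; exact mul_ne_zero hr hD
    rw [Gf_num _ h1.le hk, Gf_num _ h1.le hD]
    generalize numA h (rho z) = N at *
    generalize denA h (rho z) = D at *
    generalize numA (nrm h) (rho z) = N' at *
    generalize denA (nrm h) (rho z) = D' at *
    generalize deriv h 0 + preSch h 0 / 2 * (h (rho z) - h 0) = q at *
    generalize preSch h 0 / 2 = b at *
    have e3 : (D' - b * N') * q = deriv h 0 * D := by linear_combination e1 - b * e2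
    have e4 : D' - b * N' ≠ 0 := fun h0 => by
      rw [h0, zero_mul] at e3; exact mul_ne_zero hh1 hDh e3.symm
    have e5 : 1 - b * (N' / D') = (D' - b * N') / D' := by field_simp
    rw [e5]
    refine ⟨div_ne_zero e4 hDk, ?_⟩
    have e6 : deriv h 0 * (N' / D') / ((D' - b * N') / D') = deriv h 0 * N' / (D' - b * N') := by
      field_simp
    rw [e6, ← sub_eq_iff_eq_add', eq_div_iff e4]
    have e7 : N / D - h 0 = (N - h 0 * D) / D := by field_simp
    rw [e7, ← e2]
    field_simp
    linear_combination N' * e3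

/-- Where the extension of `h` is infinite, the extension of the normal form sits at the pole of the
Möbius transformation that takes it to the extension of `h`. -/
lemma DH.moebius_pole {h : ℂ → ℂ} {δ : ℝ} (H : DH δ h) (hδ : 0 < δ) (hδ1 : δ ≤ 1 / 4) {z : ℂ}
    (h1 : 1 < ‖z‖) (hD : den1 h z = 0) :
    1 - preSch h 0 / 2 * Gf (nrm h) (nrm h) z = 0 := by
  have hm := rho_mem_ball h1
  have hq := H.den_ne hδ hδ1 _ hm
  obtain ⟨e1, e2⟩ := num_den_nrm H hδ hδ1 hm
  have hk := (H.nrm_NH hδ hδ1).den1_ne hδ hδ1 z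
  have hr : (starRingEnd ℂ) (rho z) ≠ 0 := by simpa using rho_ne h1.le
  have hDk : denA (nrm h) (rho z) ≠ 0 := by rw [denA_rho _ h1.le]; exact mul_ne_zero hr hk
  have hDh : denA h (rho z) = 0 := by rw [denA_rho _ h1.le, hD, mul_zero]
  rw [Gf_num _ h1.le hk]
  rw [hDh] at e1 e2
  have e3 : (denA (nrm h) (rho z) - preSch h 0 / 2 * numA (nrm h) (rho z)) = 0 :=
    (mul_eq_zero.1 (by linear_combination e1 - preSch h 0 / 2 * e2 :
      (denA (nrm h) (rho z) - preSch h 0 / 2 * numA (nrm h) (rho z)) *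
        (deriv h 0 + preSch h 0 / 2 * (h (rho z) - h 0)) = 0)).resolve_right hq
  field_simp
  linear_combination 2 * e3

/-- The derivative bound: with `F`, `G` having Wirtinger derivatives `(a, b)` and `(c, e)`, the
composition of `G` with a local inverse of `F` has derivative at most `L`. -/
lemma local_inv_bound {F G E : ℂ → ℂ} {a b c e w : ℂ} {L : ℝ} (hE : ContinuousAt E w)
    (hF : HasWirt F a b (E w)) (hG : HasWirt G c e (E w))
    (hFE : ∀ᶠ y in nhds w, F (E y) = y) (hab : ‖b‖ < ‖a‖) (hL : 0 ≤ L)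
    (hce : ‖c‖ + ‖e‖ ≤ L * (‖a‖ - ‖b‖)) :
    ∃ T : ℂ →L[ℝ] ℂ, HasFDerivAt (fun y => G (E y)) T w ∧ ‖T‖ ≤ L := by
  have hlow : ∀ v : ℂ, (‖a‖ - ‖b‖) * ‖v‖ ≤ ‖wirtL a b v‖ := fun v => by
    rw [wirtL_apply]
    have := norm_sub_le_norm_add (a * v) (b * (starRingEnd ℂ) v)
    rw [norm_mul, norm_mul, RCLike.norm_conj] at this
    linarith
  have hinj : Function.Injective (wirtL a b : ℂ →ₗ[ℝ] ℂ) := by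
    rw [← LinearMap.ker_eq_bot, LinearMap.ker_eq_bot']
    intro v hv
    have h1 := hlow v
    rw [show wirtL a b v = 0 from hv, norm_zero] at h1
    have h2 : ‖v‖ ≤ 0 := by
      by_contra hc
      have := mul_pos (sub_pos.2 hab) (not_le.1 hc)
      linarith
    exact norm_le_zero_iff.1 h2
  set A : ℂ ≃L[ℝ] ℂ := (LinearEquiv.ofInjectiveEndo _ hinj).toContinuousLinearEquiv with hA
  have hAe : (A : ℂ →L[ℝ] ℂ) = wirtL a b := by
    ext v; rfl
  have hEd : HasFDerivAt E (A.symm : ℂ →L[ℝ] ℂ) w := by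
    refine HasFDerivAt.of_local_left_inverse hE ?_ hFE
    rw [hAe]; exact hF
  refine ⟨_, HasFDerivAt.comp w hG hEd, ?_⟩
  refine ContinuousLinearMap.opNorm_le_bound _ hL fun v => ?_
  have h1 := hlow (A.symm v)
  have h2 : wirtL a b (A.symm v) = v := by rw [← hAe]; simp
  rw [h2] at h1
  rw [ContinuousLinearMap.comp_apply, ContinuousLinearEquiv.coe_coe, wirtL_apply]
  refine (norm_add_le _ _).trans ?_
  rw [norm_mul, norm_mul, RCLike.norm_conj]
  nlinarith [norm_nonneg (A.symm v), mul_le_mul_of_nonneg_right hce (norm_nonneg (A.symm v)),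
    mul_le_mul_of_nonneg_left h1 hL]

/-- A function on the plane minus at most one point whose derivative is bounded by `L` is
`L`-Lipschitz: a segment through the missing point is replaced by nearby ones. -/
lemma lipschitz_off_point {K : ℂ → ℂ} {α β : ℂ} {L : ℝ} (hαβ : α ≠ 0 ∨ β ≠ 0)
    (hK : ∀ w, α + β * w ≠ 0 → ∃ T : ℂ →L[ℝ] ℂ, HasFDerivAt K T w ∧ ‖T‖ ≤ L) {x y : ℂ}
    (hx : α + β * x ≠ 0) (hy : α + β * y ≠ 0) : ‖K y - K x‖ ≤ L * ‖y - x‖ := by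
  choose! T hT hTL using hK
  have seg : ∀ y', (∀ t : ℝ, t ∈ Set.Icc (0 : ℝ) 1 → α + β * (x + t * (y' - x)) ≠ 0) →
      ‖K y' - K x‖ ≤ L * ‖y' - x‖ := by
    intro y' hs
    have hs' : ∀ w ∈ segment ℝ x y', α + β * w ≠ 0 := by
      intro w hw
      rw [segment_eq_image'] at hw
      obtain ⟨t, ht, rfl⟩ := hw
      simpa using hs t ht
    exact (convex_segment x y').norm_image_sub_le_of_norm_hasFDerivWithin_le
      (fun w hw => (hT w (hs' w hw)).hasFDerivWithinAt) (fun w hw => hTL w (hs' w hw))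
      (left_mem_segment ℝ x y') (right_mem_segment ℝ x y')
  by_cases hgood : ∀ t : ℝ, t ∈ Set.Icc (0 : ℝ) 1 → α + β * (x + t * (y - x)) ≠ 0
  · exact seg y hgood
  push Not at hgood
  obtain ⟨t, ht, h0⟩ := hgood
  have hβ : β ≠ 0 := by rintro rfl; exact hx (by simpa using h0)
  have hyx : y - x ≠ 0 := fun h1 => hx (by simpa [h1] using h0)
  have key : ∀ s : ℝ, 0 < s →
      ‖K (y + s * Complex.I * (y - x)) - K x‖ ≤ L * ‖y + s * Complex.I * (y - x) - x‖ := by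
    intro s hs
    refine seg _ fun u _ h1 => ?_
    have h2 : β * (y - x) * ((u - t : ℝ) + (u * s : ℝ) * Complex.I) = 0 := by
      push_cast
      linear_combination h1 - h0
    have h3 := (mul_eq_zero.1 h2).resolve_left (mul_ne_zero hβ hyx)
    have h4 := congrArg Complex.im h3
    have h5 := congrArg Complex.re h3
    simp at h4 h5
    rcases h4 with h4 | h4
    · subst h4
      exact hx (by simpa using h1)
    · exact hs.ne' h4
  have hφ : ContinuousAt (fun s : ℝ => y + s * Complex.I * (y - x)) 0 := by fun_prop
  have hKc : ContinuousAt K (y + ((0 : ℝ) : ℂ) * Complex.I * (y - x)) := by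
    have := (hT y hy).continuousAt
    simpa using this
  have hKφ : ContinuousAt (fun s : ℝ => K (y + s * Complex.I * (y - x))) 0 :=
    ContinuousAt.comp (g := K) (f := fun s : ℝ => y + s * Complex.I * (y - x)) hKc hφ
  have l1 : Filter.Tendsto (fun s : ℝ => ‖K (y + s * Complex.I * (y - x)) - K x‖)
      (nhdsWithin 0 (Set.Ioi 0)) (nhds ‖K y - K x‖) := by
    have : Filter.Tendsto (fun s : ℝ => ‖K (y + s * Complex.I * (y - x)) - K x‖) (nhds 0)
        (nhds ‖K (y + ((0 : ℝ) : ℂ) * Complex.I * (y - x)) - K x‖) :=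
      (Filter.Tendsto.sub_const hKφ (K x)).norm
    rw [Complex.ofReal_zero, zero_mul, zero_mul, add_zero] at this
    exact this.mono_left nhdsWithin_le_nhds
  have l2 : Filter.Tendsto (fun s : ℝ => L * ‖y + s * Complex.I * (y - x) - x‖)
      (nhdsWithin 0 (Set.Ioi 0)) (nhds (L * ‖y - x‖)) := by
    have : Filter.Tendsto (fun s : ℝ => L * ‖y + s * Complex.I * (y - x) - x‖) (nhds 0)
        (nhds (L * ‖y + ((0 : ℝ) : ℂ) * Complex.I * (y - x) - x‖)) :=
      (Filter.Tendsto.sub_const hφ x).norm.const_mul L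
    rw [Complex.ofReal_zero, zero_mul, zero_mul, add_zero] at this
    exact this.mono_left nhdsWithin_le_nhds
  exact le_of_tendsto_of_tendsto l1 l2 (by
    filter_upwards [self_mem_nhdsWithin] with s hs using key s hs)

/-! ### The contraction estimate -/

/-- Pairs `(h, g)` with the size bounds that follow from a small harmonic Schwarzian. -/
structure PH (δ M d : ℝ) (h g : ℂ → ℂ) : Prop extends DH δ h where
  gdiff : DifferentiableOn ℂ g (ball 0 1)
  dil_le : ∀ z ∈ ball (0 : ℂ) 1, ‖dil h g z‖ ≤ d
  pre : ∀ z ∈ ball (0 : ℂ) 1, (1 - ‖z‖ ^ 2) * ‖preSch h z‖ ≤ M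
  ddil : ∀ z ∈ ball (0 : ℂ) 1, (1 - ‖z‖ ^ 2) * ‖deriv (dil h g) z‖ ≤ δ

/-- The Lipschitz constant of the antianalytic part of the extension as a function of the analytic
part. -/
noncomputable def Lc (δ M d : ℝ) : ℝ := (d * (1 + δ / 2) + δ * (1 + M)) / (1 - δ / 2)

/-- The differential of the antianalytic part is at most `Lc` times the smallest stretching of the
analytic part. Here `a` and `s a` are the Wirtinger derivatives of the analytic part, and `ω a` and
`s ω a + t a` those of the antianalytic part. -/
lemma coef_bound {δ M d : ℝ} {a s t ω : ℂ} (hδ1 : δ ≤ 1 / 100) (hδ : 0 < δ) (hd : 0 ≤ d)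
    (hω : ‖ω‖ ≤ d) (hs : ‖s‖ ≤ δ / 2) (ht : ‖t‖ ≤ δ * (1 + M)) :
    ‖ω * a‖ + ‖s * (ω * a) + t * a‖ ≤ Lc δ M d * (‖a‖ - ‖s * a‖) := by
  have h1 : ‖s * (ω * a) + t * a‖ ≤ δ / 2 * (d * ‖a‖) + δ * (1 + M) * ‖a‖ := by
    refine (norm_add_le _ _).trans ?_
    rw [norm_mul, norm_mul, norm_mul]
    gcongr
  have h2 : ‖ω * a‖ ≤ d * ‖a‖ := by rw [norm_mul]; gcongr
  have h3 : (1 - δ / 2) * ‖a‖ ≤ ‖a‖ - ‖s * a‖ := by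
    rw [norm_mul]
    nlinarith [norm_nonneg a]
  have h5 : (0 : ℝ) < 1 - δ / 2 := by linarith
  have h6 : 0 ≤ δ * (1 + M) := (norm_nonneg t).trans ht
  have h4 : 0 ≤ Lc δ M d := by rw [Lc]; positivity
  refine le_trans ?_ (mul_le_mul_of_nonneg_left h3 h4)
  have e : Lc δ M d * ((1 - δ / 2) * ‖a‖) = (d * (1 + δ / 2) + δ * (1 + M)) * ‖a‖ := by
    rw [Lc, ← mul_assoc, div_mul_cancel₀ _ h5.ne']
  rw [e]
  linarith

/-- The normalizing Möbius transformation is inverted by the denormalizing one. -/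
lemma moebius_left {x b h0 h1 q : ℂ} (hh1 : h1 ≠ 0) (hq : q ≠ 0) (e : q = h1 + b * (x - h0)) :
    1 - b * ((x - h0) / q) = h1 / q ∧ h0 + h1 * ((x - h0) / q) / (h1 / q) = x := by
  constructor
  · field_simp; linear_combination e
  · field_simp; ring

/-- The denormalizing Möbius transformation is inverted by the normalizing one. -/
lemma moebius_right {x b h0 h1 y : ℂ} (hh1 : h1 ≠ 0) (hq : 1 - b * y ≠ 0)
    (e : x = h0 + h1 * y / (1 - b * y)) :
    h1 + b * (x - h0) = h1 / (1 - b * y) ∧ (x - h0) / (h1 / (1 - b * y)) = y := by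
  subst e
  generalize hs : 1 - b * y = s at *
  constructor
  · field_simp; linear_combination -h1 * hs
  · field_simp; ring

/-- For functions holomorphic across the circle, the antianalytic part of the extension is a
contraction as a function of the analytic part. -/
lemma PH.lip_smooth {h g : ℂ → ℂ} {δ M d : ℝ} {U : Set ℂ} (P : PH δ M d h g) (hδ : 0 < δ)
    (hδ1 : δ ≤ 1 / 100) (hM : 0 ≤ M) (hd0 : 0 ≤ d) (hU : IsOpen U)
    (hsub : closedBall (0 : ℂ) 1 ⊆ U) (hd : DifferentiableOn ℂ h U)
    (gd : DifferentiableOn ℂ g U) (hn : ∀ z ∈ U, deriv h z ≠ 0)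
    (hdil : ∀ z ∈ closedBall (0 : ℂ) 1, ‖dil h g z‖ ≤ d) {z w : ℂ} (hz : den1 h z ≠ 0)
    (hw : den1 h w ≠ 0) : ‖Gf h g w - Gf h g z‖ ≤ Lc δ M d * ‖Gf h h w - Gf h h z‖ := by
  have hδ2 : δ ≤ 1 / 4 := by linarith
  have C : CH δ h := ⟨P.toDH, hd.continuousOn.mono hsub⟩
  obtain ⟨E, hE⟩ := (P.toDH.nrm_NH hδ hδ2).exists_homeo hδ hδ1 (C.nrm_cont hδ hδ2)
  have hh1 : deriv h 0 ≠ 0 := P.nz 0 (mem_ball_self one_pos)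
  have mob := fun z => P.toDH.moebius hδ hδ2 (z := z) (C.den_ne hδ hδ2)
  have pole := fun z => P.toDH.moebius_pole hδ hδ2 (z := z)
  simp only [← hE] at mob pole
  set b := preSch h 0 / 2 with hb
  set S : ℂ → ℂ := fun w => E.symm ((w - h 0) / (deriv h 0 + b * (w - h 0))) with hS
  have hES : ∀ w, E (S w) = (w - h 0) / (deriv h 0 + b * (w - h 0)) := fun w => by simp [hS]
  have S1 : ∀ w, deriv h 0 + b * (w - h 0) ≠ 0 → den1 h (S w) ≠ 0 := by
    intro w hw h0
    rcases le_or_gt ‖S w‖ 1 with h1 | h1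
    · rw [den1_in h h1] at h0; exact one_ne_zero h0
    · have := pole _ h1 h0
      rw [hES] at this
      field_simp at this
      exact hh1 (by linear_combination this)
  have S2 : ∀ w, deriv h 0 + b * (w - h 0) ≠ 0 → Gf h h (S w) = w := by
    intro w hw
    obtain ⟨e1, e2⟩ := mob _ (S1 w hw)
    rw [e2, hES]
    obtain ⟨m1, m2⟩ := moebius_left hh1 hw rfl
    rw [m1, m2]
  have S3 : ∀ z, den1 h z ≠ 0 →
      deriv h 0 + b * (Gf h h z - h 0) ≠ 0 ∧ S (Gf h h z) = z := by
    intro z hz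
    obtain ⟨e1, e2⟩ := mob z hz
    obtain ⟨e3, e4⟩ := moebius_right hh1 e1 e2
    refine ⟨by rw [e3]; exact div_ne_zero hh1 e1, ?_⟩
    simp only [hS]
    rw [e3, E.symm_apply_eq, e4]
  have hlip := lipschitz_off_point (K := fun w => Gf h g (S w)) (α := deriv h 0 - b * h 0) (β := b)
    (L := Lc δ M d) ?_ ?_ (x := Gf h h z) (y := Gf h h w) ?_ ?_
  · simpa only [(S3 z hz).2, (S3 w hw).2] using hlip
  · by_contra! hc
    rw [hc.2] at hc
    exact hh1 (by simpa using hc.1)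
  · intro w hw
    have hw' : deriv h 0 + b * (w - h 0) ≠ 0 := fun h0 => hw (by linear_combination h0)
    have hD := S1 w hw'
    have hSU := hsub (rho_mem (S w))
    have hSc : ContinuousAt S w := by
      refine E.symm.continuous.continuousAt.comp (f := fun w => _ / _) ?_
      exact ContinuousAt.div (by fun_prop) (by fun_prop) hw'
    have hev : ∀ᶠ y in nhds w, Gf h h (S y) = y := by
      have : ContinuousAt (fun y => deriv h 0 + b * (y - h 0)) w := by fun_prop
      filter_upwards [this.eventually_ne hw'] with y hy using S2 y hy
    have cs := coef_S (h := h) (S w) hδ.le fun h1 => by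
      rcases h1.lt_or_eq with h2 | h2
      · exact P.sch _ (rho_mem_ball h2)
      · rw [rho_norm_out h1, ← h2]; simp; exact hδ.le
    have cω := coef_ω (h := h) (g := g) (S w) hδ.le hM (fun h1 => by
      rcases h1.lt_or_eq with h2 | h2
      · exact P.pre _ (rho_mem_ball h2)
      · rw [rho_norm_out h1, ← h2]; simp; exact hM) (fun h1 => by
      rcases h1.lt_or_eq with h2 | h2
      · exact P.ddil _ (rho_mem_ball h2)
      · rw [rho_norm_out h1, ← h2]; simp; exact hδ.le)
    have hnz := hn _ hSU
    have hω := hdil _ (rho_mem (S w))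
    have hcb := coef_bound (a := deriv h (rho (S w)) / den1 h (S w) ^ 2) hδ1 hδ hd0 hω cs cω
    have e1 : dil h g (rho (S w)) * (deriv h (rho (S w)) / den1 h (S w) ^ 2)
        = deriv g (rho (S w)) / den1 h (S w) ^ 2 := by rw [dil]; field_simp
    rw [e1] at hcb
    have h5 : (0 : ℝ) < 1 - δ / 2 := by linarith
    refine local_inv_bound hSc (Gf_wirt_self hU hd hn hSU hD) ((Gf_wirt hU hd gd hn hSU hD).congr
      rfl ?_) hev ?_ ?_ hcb
    · ring
    · have ha : 0 < ‖deriv h (rho (S w)) / den1 h (S w) ^ 2‖ :=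
        norm_pos_iff.2 (div_ne_zero hnz (pow_ne_zero _ hD))
      rw [norm_mul]
      nlinarith
    · have h6 : 0 ≤ δ * (1 + M) := (norm_nonneg _).trans cω
      rw [Lc]; positivity
  · have := (S3 z hz).1
    exact fun h0 => this (by linear_combination h0)
  · have := (S3 w hw).1
    exact fun h0 => this (by linear_combination h0)

lemma kr_dil (h g : ℂ → ℂ) {r : ℝ} (hr : r ≠ 0) :
    dil (kr r h) (kr r g) = fun z => dil h g (r * z) := by
  funext z
  rw [dil, kr_deriv h hr, kr_deriv g hr, dil]

/-- Dilation preserves the size bounds, because the weights `1 - ‖z‖²` decrease in `‖z‖`. -/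
lemma PH.dilate {h g : ℂ → ℂ} {δ M d r : ℝ} (P : PH δ M d h g) (h0 : 0 < r) (h1 : r ≤ 1) :
    PH δ M d (kr r h) (kr r g) := by
  refine ⟨P.toDH.dilate h0 h1, kr_diff P.gdiff fun z hz => scale_mem h0 h1 hz, fun z hz => ?_,
    fun z hz => ?_, fun z hz => ?_⟩
  · rw [kr_dil h g h0.ne']; exact P.dil_le _ (scale_mem h0 h1 hz)
  · rw [kr_preSch h h0.ne', norm_mul, Complex.norm_real, Real.norm_of_nonneg h0.le]
    obtain ⟨h2, h3⟩ := weight_scale h0 h1 hz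
    refine le_trans ?_ (P.pre _ (scale_mem h0 h1 hz))
    rw [← mul_assoc, mul_comm (1 - ‖z‖ ^ 2)]
    gcongr
  · rw [kr_dil h g h0.ne', deriv_scale, norm_mul, Complex.norm_real, Real.norm_of_nonneg h0.le]
    obtain ⟨h2, h3⟩ := weight_scale h0 h1 hz
    refine le_trans ?_ (P.ddil _ (scale_mem h0 h1 hz))
    rw [← mul_assoc, mul_comm (1 - ‖z‖ ^ 2)]
    gcongr

/-- Off the unit circle the extensions of the dilates converge to the extension. -/
lemma dilate_tendsto {h g : ℂ → ℂ} (hd : DifferentiableOn ℂ h (ball 0 1))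
    (gd : DifferentiableOn ℂ g (ball 0 1)) (hn : ∀ z ∈ ball (0 : ℂ) 1, deriv h z ≠ 0) {z : ℂ}
    (h1 : ‖z‖ ≠ 1) (hD : den1 h z ≠ 0) :
    Filter.Tendsto (fun r : ℝ => Gf (kr r h) (kr r g) z) (nhdsWithin 1 (Set.Ioo 0 1))
      (nhds (Gf h g z)) ∧
    ∀ᶠ r in nhdsWithin (1 : ℝ) (Set.Ioo 0 1), den1 (kr r h) z ≠ 0 := by
  have hm : rho z ∈ ball (0 : ℂ) 1 := by
    rcases h1.lt_or_gt with h2 | h2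
    · rw [rho_in h2.le]; simpa using h2
    · exact rho_mem_ball h2
  have hφ : ContinuousAt (fun r : ℝ => (r * rho z : ℂ)) 1 := by fun_prop
  have e1 : ((1 : ℝ) * rho z : ℂ) = rho z := by simp
  have cg : ContinuousAt (fun r : ℝ => g (r * rho z)) 1 := by
    refine ContinuousAt.comp (g := g) (f := fun r : ℝ => (r * rho z : ℂ)) ?_ hφ
    rw [e1]; exact (hda gd isOpen_ball hm).continuousAt
  have cg' : ContinuousAt (fun r : ℝ => deriv g (r * rho z)) 1 := by
    refine ContinuousAt.comp (g := deriv g) (f := fun r : ℝ => (r * rho z : ℂ)) ?_ hφ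
    rw [e1]; exact (hda (deriv_diff isOpen_ball gd) isOpen_ball hm).continuousAt
  have cp : ContinuousAt (fun r : ℝ => preSch h (r * rho z)) 1 := by
    refine ContinuousAt.comp (g := preSch h) (f := fun r : ℝ => (r * rho z : ℂ)) ?_ hφ
    rw [e1]; exact (hda (preSch_diff isOpen_ball hd hn) isOpen_ball hm).continuousAt
  have cD : ContinuousAt (fun r : ℝ => 1 - (z - rho z) * (r * preSch h (r * rho z)) / 2) 1 := by
    refine continuousAt_const.sub ((continuousAt_const.mul (ContinuousAt.mul ?_ cp)).div_const 2)
    fun_prop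
  have hD' : 1 - (z - rho z) * (((1 : ℝ) : ℂ) * preSch h ((1 : ℝ) * rho z)) / 2 ≠ 0 := by
    rw [e1]; simpa [den1] using hD
  have cG : ContinuousAt (fun r : ℝ => g (r * rho z) / r + (z - rho z) * deriv g (r * rho z) /
      (1 - (z - rho z) * (r * preSch h (r * rho z)) / 2)) 1 := by
    refine (cg.div ?_ ?_).add ((continuousAt_const.mul cg').div cD hD')
    · fun_prop
    · simp
  constructor
  · have := cG.tendsto.mono_left (nhdsWithin_le_nhds (s := Set.Ioo (0 : ℝ) 1))
    simp only [Complex.ofReal_one, one_mul, div_one] at this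
    refine this.congr' ?_
    filter_upwards [self_mem_nhdsWithin] with r hr
    rw [Gf, kr_deriv g hr.1.ne', kr_preSch h hr.1.ne', kr]
  · have := (cD.eventually_ne hD').filter_mono (nhdsWithin_le_nhds (s := Set.Ioo (0 : ℝ) 1))
    filter_upwards [self_mem_nhdsWithin, this] with r hr h2
    rwa [den1, kr_preSch h hr.1.ne']

/-- The contraction estimate without smoothness on the circle. -/
lemma PH.lip {h g : ℂ → ℂ} {δ M d : ℝ} (P : PH δ M d h g) (hδ : 0 < δ)
    (hδ1 : δ ≤ 1 / 100) (hM : 0 ≤ M) (hd0 : 0 ≤ d) {z w : ℂ} (hz1 : ‖z‖ ≠ 1) (hw1 : ‖w‖ ≠ 1)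
    (hz : den1 h z ≠ 0) (hw : den1 h w ≠ 0) :
    ‖Gf h g w - Gf h g z‖ ≤ Lc δ M d * ‖Gf h h w - Gf h h z‖ := by
  obtain ⟨gz, ez⟩ := dilate_tendsto P.diff P.gdiff P.nz hz1 hz
  obtain ⟨gw, ew⟩ := dilate_tendsto P.diff P.gdiff P.nz hw1 hw
  have hhz := (dilate_tendsto P.diff P.diff P.nz hz1 hz).1
  have hhw := (dilate_tendsto P.diff P.diff P.nz hw1 hw).1
  have : (nhdsWithin (1 : ℝ) (Set.Ioo 0 1)).NeBot := by
    rw [← mem_closure_iff_nhdsWithin_neBot, closure_Ioo zero_ne_one]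
    exact ⟨zero_le_one, le_rfl⟩
  refine le_of_tendsto_of_tendsto (gw.sub gz).norm ((hhw.sub hhz).norm.const_mul _) ?_
  filter_upwards [self_mem_nhdsWithin, ez, ew] with r hr hz hw
  obtain ⟨h0, h1⟩ := hr
  have hmem : ∀ z ∈ ball (0 : ℂ) (1 / r), (r * z : ℂ) ∈ ball (0 : ℂ) 1 := fun z hz => by
    rw [mem_ball_zero_iff] at hz ⊢
    rw [norm_mul, Complex.norm_real, Real.norm_of_nonneg h0.le]
    rwa [lt_div_iff₀' h0] at hz
  have hsub : closedBall (0 : ℂ) 1 ⊆ ball 0 (1 / r) :=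
    closedBall_subset_ball (by rw [lt_div_iff₀ h0]; linarith)
  refine (P.dilate h0 h1.le).lip_smooth hδ hδ1 hM hd0 (isOpen_ball (x := 0) (ε := 1 / r)) hsub
    (kr_diff P.diff hmem) (kr_diff P.gdiff hmem) (fun z hz => ?_) (fun z hz => ?_) hz hw
  · rw [kr_deriv h h0.ne']; exact P.nz _ (hmem z hz)
  · rw [kr_dil h g h0.ne']; exact P.dil_le _ (hmem z (hsub hz))

/-! ### Homeomorphisms of the Riemann sphere -/

open OnePoint in
/-- The inversion `w ↦ 1 / w` of the Riemann sphere. -/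
noncomputable def sphInv (x : OnePoint ℂ) : OnePoint ℂ :=
  x.elim ((0 : ℂ) : OnePoint ℂ) fun w => if w = 0 then ∞ else ((w⁻¹ : ℂ) : OnePoint ℂ)

open OnePoint in
lemma sphInv_coe {w : ℂ} (hw : w ≠ 0) : sphInv w = ((w⁻¹ : ℂ) : OnePoint ℂ) := by
  simp [sphInv, hw]

open OnePoint in
lemma sphInv_zero : sphInv ((0 : ℂ) : OnePoint ℂ) = ∞ := by simp [sphInv]

open OnePoint in
lemma sphInv_infty : sphInv ∞ = ((0 : ℂ) : OnePoint ℂ) := rfl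

open OnePoint in
lemma sphInv_invol : Function.Involutive sphInv := by
  intro x
  cases x with
  | infty => rw [sphInv_infty, sphInv_zero]
  | coe w =>
    rcases eq_or_ne w 0 with rfl | hw
    · rw [sphInv_zero, sphInv_infty]
    · rw [sphInv_coe hw, sphInv_coe (inv_ne_zero hw), inv_inv]

open OnePoint in
lemma sphInv_cont : Continuous sphInv := by
  have hcc : Filter.coclosedCompact ℂ = Bornology.cobounded ℂ := by
    rw [Filter.coclosedCompact_eq_cocompact, Metric.cobounded_eq_cocompact]
  rw [continuous_iff_continuousAt]
  intro x
  cases x with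
  | infty =>
    rw [continuousAt_infty', sphInv_infty, hcc]
    have h1 : Filter.Tendsto (fun w : ℂ => ((w⁻¹ : ℂ) : OnePoint ℂ)) (Bornology.cobounded ℂ)
        (nhds ((0 : ℂ) : OnePoint ℂ)) :=
      (OnePoint.continuous_coe.tendsto (0 : ℂ)).comp Filter.tendsto_inv₀_cobounded
    refine h1.congr' ?_
    filter_upwards [Bornology.eventually_ne_cobounded (0 : ℂ)] with w hw
    exact (sphInv_coe hw).symm
  | coe w =>
    rw [continuousAt_coe]
    rcases eq_or_ne w 0 with rfl | hw
    · rw [continuousAt_iff_punctured_nhds, Function.comp_apply, sphInv_zero]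
      have h1 : Filter.Tendsto (fun w : ℂ => ((w⁻¹ : ℂ) : OnePoint ℂ))
          (nhdsWithin 0 {0}ᶜ) (nhds ∞) := by
        have := (OnePoint.tendsto_coe_infty (X := ℂ))
        rw [hcc] at this
        exact this.comp Filter.tendsto_inv₀_nhdsNE_zero
      refine h1.congr' ?_
      filter_upwards [self_mem_nhdsWithin] with w hw
      exact (sphInv_coe hw).symm
    · have h1 : ContinuousAt (fun w : ℂ => ((w⁻¹ : ℂ) : OnePoint ℂ)) w :=
        OnePoint.continuous_coe.continuousAt.comp (continuousAt_inv₀ hw)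
      refine h1.congr ?_
      filter_upwards [isOpen_ne.mem_nhds hw] with w hw
      exact (sphInv_coe hw).symm

/-- The homeomorphism `w ↦ α w + β` of the plane. -/
noncomputable def affHomeo (α β : ℂ) (hα : α ≠ 0) : ℂ ≃ₜ ℂ :=
  (Homeomorph.mulLeft₀ α hα).trans (Homeomorph.addRight β)

lemma affHomeo_apply (α β : ℂ) (hα : α ≠ 0) (w : ℂ) : affHomeo α β hα w = α * w + β := rfl

open OnePoint in
/-- Möbius transformations are homeomorphisms of the Riemann sphere. -/
lemma exists_moebius (h0 h1 b : ℂ) (hh1 : h1 ≠ 0) : ∃ T : OnePoint ℂ ≃ₜ OnePoint ℂ,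
    (∀ w : ℂ, 1 - b * w ≠ 0 → T w = ((h0 + h1 * w / (1 - b * w) : ℂ) : OnePoint ℂ)) ∧
    (∀ w : ℂ, 1 - b * w = 0 → T w = ∞) ∧
    (b ≠ 0 → T ∞ = ((h0 - h1 / b : ℂ) : OnePoint ℂ)) ∧ (b = 0 → T ∞ = ∞) := by
  rcases eq_or_ne b 0 with rfl | hb
  · refine ⟨(affHomeo h1 h0 hh1).onePointCongr, fun w _ => ?_, fun w hw => ?_, fun h => ?_,
      fun _ => rfl⟩
    · rw [Homeomorph.onePointCongr_apply, map_some, affHomeo_apply]; simp [add_comm]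
    · simp at hw
    · exact absurd rfl h
  · let J : OnePoint ℂ ≃ₜ OnePoint ℂ :=
      { sphInv_invol.toPerm with
        continuous_toFun := sphInv_cont
        continuous_invFun := sphInv_cont }
    have hJ : ∀ x, J x = sphInv x := fun x => rfl
    have hC : ∀ (e : ℂ ≃ₜ ℂ) (w : ℂ),
        e.onePointCongr (w : OnePoint ℂ) = ((e w : ℂ) : OnePoint ℂ) := fun _ _ => rfl
    have hCi : ∀ e : ℂ ≃ₜ ℂ, e.onePointCongr ∞ = ∞ := fun _ => rfl
    refine ⟨((affHomeo (-b) 1 (neg_ne_zero.2 hb)).onePointCongr.trans J).trans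
      (affHomeo (h1 / b) (h0 - h1 / b) (div_ne_zero hh1 hb)).onePointCongr,
      fun w hw => ?_, fun w hw => ?_, fun _ => ?_, fun h => absurd h hb⟩
    · have e : -b * w + 1 = 1 - b * w := by ring
      rw [Homeomorph.trans_apply, Homeomorph.trans_apply, hC,
        affHomeo_apply, hJ, e, sphInv_coe hw, hC, affHomeo_apply]
      congr 1
      field_simp
      ring
    · have e : -b * w + 1 = 0 := by rw [← hw]; ring
      rw [Homeomorph.trans_apply, Homeomorph.trans_apply, hC, affHomeo_apply, hJ, e,
        sphInv_zero, hCi]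
    · rw [Homeomorph.trans_apply, Homeomorph.trans_apply, hCi, hJ, sphInv_infty,
        hC, affHomeo_apply]
      simp

/-- If `G` is Lipschitz as a function of `H` on `S` and `H '' S` is dense, then `G = K ∘ H` on `S` for
a globally Lipschitz `K`. -/
lemma exists_lipschitz {H G : ℂ → ℂ} {S : Set ℂ} {L : ℝ} (hL : 0 ≤ L) (hS : Dense (H '' S))
    (hl : ∀ z ∈ S, ∀ w ∈ S, ‖G w - G z‖ ≤ L * ‖H w - H z‖) :
    ∃ K : ℂ → ℂ, LipschitzWith L.toNNReal K ∧ ∀ z ∈ S, K (H z) = G z := by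
  choose p hpS hpH using fun x : H '' S => x.2
  have hf : LipschitzWith L.toNNReal (fun x : H '' S => G (p x)) :=
    LipschitzWith.of_dist_le_mul fun x y => by
      rw [dist_eq_norm, Subtype.dist_eq, dist_eq_norm, Real.coe_toNNReal _ hL]
      have := hl _ (hpS y) _ (hpS x)
      rwa [hpH, hpH] at this
  refine ⟨hS.extend _, hS.lipschitzWith_extend hf, fun z hz => ?_⟩
  have h1 := hS.extend_eq hf.continuous ⟨H z, z, hz, rfl⟩
  simp only at h1
  rw [h1]
  have := hl _ hz _ (hpS ⟨H z, z, hz, rfl⟩)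
  rw [hpH, sub_self, norm_zero, mul_zero] at this
  exact sub_eq_zero.1 (norm_le_zero_iff.1 this)

/-- A perturbation of the identity by a conjugated contraction is a homeomorphism of the plane. -/
lemma exists_perturb {K : ℂ → ℂ} {L : NNReal} (hL : L < 1) (hK : LipschitzWith L K) :
    ∃ Ψ : ℂ ≃ₜ ℂ, ∀ w, Ψ w = w + (starRingEnd ℂ) (K w) := by
  have hA : ApproximatesLinearOn (fun w => w + (starRingEnd ℂ) (K w))
      ((ContinuousLinearEquiv.refl ℝ ℂ : ℂ ≃L[ℝ] ℂ) : ℂ →L[ℝ] ℂ) Set.univ L := by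
    intro x _ y _
    have e : x + (starRingEnd ℂ) (K x) - (y + (starRingEnd ℂ) (K y)) -
        ((ContinuousLinearEquiv.refl ℝ ℂ : ℂ ≃L[ℝ] ℂ) : ℂ →L[ℝ] ℂ) (x - y)
        = (starRingEnd ℂ) (K x - K y) := by
      simp; ring
    rw [e, RCLike.norm_conj, ← dist_eq_norm, ← dist_eq_norm]
    exact hK.dist_le_mul x y
  refine ⟨hA.toHomeomorph _ (Or.inr ?_), fun w => rfl⟩
  have : ‖((ContinuousLinearEquiv.refl ℝ ℂ).symm : ℂ →L[ℝ] ℂ)‖₊ = 1 := by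
    rw [ContinuousLinearEquiv.refl_symm, ContinuousLinearEquiv.coe_refl]
    exact nnnorm_one
  rw [this, inv_one]
  exact hL

/-! ### The extension on the sphere -/

open OnePoint in
/-- The Ahlfors–Weill extension of a function with small Schwarzian, as a homeomorphism of the
Riemann sphere. -/
lemma DH.exists_sphere {h : ℂ → ℂ} {δ : ℝ} (H : DH δ h) (hδ : 0 < δ) (hδ1 : δ ≤ 1 / 100) :
    ∃ F : OnePoint ℂ ≃ₜ OnePoint ℂ,
      (∀ z : ℂ, ‖z‖ ≠ 1 → den1 h z ≠ 0 → F z = ((Gf h h z : ℂ) : OnePoint ℂ)) ∧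
      (∀ z : ℂ, ‖z‖ ≠ 1 → den1 h z = 0 → F z = ∞) ∧
      (denA h 0 ≠ 0 → F ∞ = ((h 0 + deriv h 0 / denA h 0 : ℂ) : OnePoint ℂ)) ∧
      (denA h 0 = 0 → F ∞ = ∞) := by
  have hδ2 : δ ≤ 1 / 4 := by linarith
  obtain ⟨k, hk, kc, ke⟩ := (H.nrm_NH hδ hδ2).exists_ext hδ hδ2
  obtain ⟨E, hE⟩ := hk.exists_homeo hδ hδ1 kc
  have hE' : ∀ z : ℂ, ‖z‖ ≠ 1 → E z = Gf (nrm h) (nrm h) z := by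
    intro z hz
    have hm : rho z ∈ ball (0 : ℂ) 1 := by
      rcases hz.lt_or_gt with h1 | h1
      · rw [rho_in h1.le]; simpa using h1
      · exact rho_mem_ball h1
    obtain ⟨e1, e2, -⟩ := germ_eq (germ_ball ke hm)
    rw [hE, Gf, Gf, ke _ hm, e1, e2]
  obtain ⟨T, T1, T2, T3, T4⟩ :=
    exists_moebius (h 0) (deriv h 0) (preSch h 0 / 2) (H.nz 0 (mem_ball_self one_pos))
  have hC : ∀ w : ℂ, E.onePointCongr (w : OnePoint ℂ) = ((E w : ℂ) : OnePoint ℂ) := fun _ => rfl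
  have hCi : E.onePointCongr ∞ = ∞ := rfl
  refine ⟨E.onePointCongr.trans T, fun z hz hD => ?_, fun z hz hD => ?_, fun h0 => ?_,
    fun h0 => ?_⟩
  · obtain ⟨m1, m2⟩ := H.moebius hδ hδ2 (z := z)
      (fun h1 => H.den_ne hδ hδ2 z (by simpa using lt_of_le_of_ne h1 hz)) hD
    rw [Homeomorph.trans_apply, hC, hE' z hz, T1 _ m1, m2]
  · have h1 : 1 < ‖z‖ := by
      refine lt_of_not_ge fun h1 => ?_
      rw [den1_in h h1] at hD
      exact one_ne_zero hD
    rw [Homeomorph.trans_apply, hC, hE' z hz, T2 _ (H.moebius_pole hδ hδ2 h1 hD)]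
  · rw [denA_zero] at h0 ⊢
    rw [Homeomorph.trans_apply, hCi, T3 (neg_ne_zero.1 h0), div_neg, sub_eq_add_neg]
  · rw [denA_zero] at h0
    rw [Homeomorph.trans_apply, hCi, T4 (neg_eq_zero.1 h0)]

open OnePoint in
/-- The finite values attained off the unit circle are dense in the plane. -/
lemma dense_image {h : ℂ → ℂ} {F : OnePoint ℂ ≃ₜ OnePoint ℂ}
    (F1 : ∀ z : ℂ, ‖z‖ ≠ 1 → den1 h z ≠ 0 → F z = ((Gf h h z : ℂ) : OnePoint ℂ))
    (F2 : ∀ z : ℂ, ‖z‖ ≠ 1 → den1 h z = 0 → F z = ∞) :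
    Dense (Gf h h '' {z | ‖z‖ ≠ 1 ∧ den1 h z ≠ 0}) := by
  have d1 : Dense {z : ℂ | ‖z‖ ≠ 1} := by
    have : {z : ℂ | ‖z‖ ≠ 1} = (sphere (0 : ℂ) 1)ᶜ := by ext z; simp
    rw [this, ← interior_eq_empty_iff_dense_compl]
    exact interior_sphere (0 : ℂ) one_ne_zero
  have d2 : Dense ((fun z : ℂ => F (z : OnePoint ℂ)) '' {z : ℂ | ‖z‖ ≠ 1}) := by
    have : DenseRange (fun z : ℂ => F (z : OnePoint ℂ)) :=
      F.surjective.denseRange.comp OnePoint.denseRange_coe F.continuous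
    exact this.dense_image (F.continuous.comp OnePoint.continuous_coe) d1
  have d3 := d2.preimage (OnePoint.isOpenEmbedding_coe (X := ℂ)).isOpenMap
  refine d3.mono ?_
  rintro w ⟨z, hz, e⟩
  by_cases hD : den1 h z = 0
  · simp only [F2 z hz hD] at e
    exact absurd e (OnePoint.infty_ne_coe w)
  · simp only [F1 z hz hD] at e
    exact ⟨z, ⟨hz, hD⟩, OnePoint.coe_injective e⟩

lemma rho_reflect {ζ : ℂ} (h0 : ζ ≠ 0) (h1 : ‖ζ‖ < 1) :
    1 < ‖1 / (starRingEnd ℂ) ζ‖ ∧ rho (1 / (starRingEnd ℂ) ζ) = ζ := by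
  have h2 : 1 < ‖1 / (starRingEnd ℂ) ζ‖ := by
    rw [norm_div, norm_one, RCLike.norm_conj]
    exact (one_lt_div (norm_pos_iff.2 h0)).2 h1
  exact ⟨h2, by rw [rho_out h2.le]; simp⟩

lemma Gf_denA (h g : ℂ → ℂ) {z : ℂ} (hz : 1 ≤ ‖z‖) :
    Gf h g z = g (rho z) + ((1 - ‖rho z‖ ^ 2 : ℝ) : ℂ) * deriv g (rho z) / denA h (rho z) := by
  have : (starRingEnd ℂ) (rho z) ≠ 0 := by simpa using rho_ne hz
  rw [Gf_eq, denA_rho h hz, one_sub_rho hz, mul_assoc, mul_div_mul_left _ _ this]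

/-- The value at infinity: letting `z → ∞`, that is `ζ → 0`, in `K (Gf h h z) = Gf h g z`. -/
lemma value_infty {h g K : ℂ → ℂ} (hd : DifferentiableOn ℂ h (ball 0 1))
    (gd : DifferentiableOn ℂ g (ball 0 1)) (hn : ∀ z ∈ ball (0 : ℂ) 1, deriv h z ≠ 0)
    (hK : Continuous K)
    (hKG : ∀ z : ℂ, ‖z‖ ≠ 1 ∧ den1 h z ≠ 0 → K (Gf h h z) = Gf h g z) (h0 : denA h 0 ≠ 0) :
    K (h 0 + deriv h 0 / denA h 0) = g 0 + deriv g 0 / denA h 0 := by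
  have m0 : ball (0 : ℂ) 1 ∈ nhds (0 : ℂ) := ball_mem_nhds 0 one_pos
  have cD : ContinuousAt (denA h) 0 := by
    have := ((preSch_diff isOpen_ball hd hn).differentiableAt m0).continuousAt
    unfold denA
    exact Complex.continuous_conj.continuousAt.sub
      ((continuousAt_const.mul (by fun_prop)).mul this)
  have cG : ∀ k : ℂ → ℂ, DifferentiableOn ℂ k (ball 0 1) → ContinuousAt (fun ζ =>
      k ζ + ((1 - ‖ζ‖ ^ 2 : ℝ) : ℂ) * deriv k ζ / denA h ζ) 0 := fun k kd => by
    have k1 := (kd.differentiableAt m0).continuousAt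
    have k2 := ((deriv_diff isOpen_ball kd).differentiableAt m0).continuousAt
    have k3 : ContinuousAt (fun ζ : ℂ => ((1 - ‖ζ‖ ^ 2 : ℝ) : ℂ)) 0 := by fun_prop
    exact k1.add ((k3.mul k2).div cD h0)
  have t1 := ((hK.continuousAt.comp (cG h hd)).tendsto).mono_left
    (nhdsWithin_le_nhds (s := {0}ᶜ))
  have t2 := (cG g gd).tendsto.mono_left (nhdsWithin_le_nhds (s := {0}ᶜ))
  have e : (K ∘ fun ζ => h ζ + ((1 - ‖ζ‖ ^ 2 : ℝ) : ℂ) * deriv h ζ / denA h ζ)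
      =ᶠ[nhdsWithin 0 {0}ᶜ] fun ζ => g ζ + ((1 - ‖ζ‖ ^ 2 : ℝ) : ℂ) * deriv g ζ / denA h ζ := by
    filter_upwards [self_mem_nhdsWithin, nhdsWithin_le_nhds m0,
      (cD.eventually_ne h0).filter_mono nhdsWithin_le_nhds] with ζ z1 z2 z3
    obtain ⟨r1, r2⟩ := rho_reflect z1 (by simpa using z2)
    have hD : den1 h (1 / (starRingEnd ℂ) ζ) ≠ 0 := fun hD => z3 (by
      rw [← r2, denA_rho h r1.le, hD, mul_zero])
    have := hKG _ ⟨r1.ne', hD⟩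
    rwa [Gf_denA h h r1.le, Gf_denA h g r1.le, r2] at this
  have := tendsto_nhds_unique (t1.congr' e) t2
  simpa using this

/-- The complex dilatation bound for the extension outside the disk. -/
lemma PH.qc {h g : ℂ → ℂ} {δ M d : ℝ} (P : PH δ M d h g) (hδ : 0 < δ) (hM : 0 ≤ M)
    (hd0 : 0 ≤ d) (hη : d * δ / 2 + δ * (1 + M) < 1) {z : ℂ} (hz : 1 < ‖z‖)
    (hD : den1 h z ≠ 0) :
    ‖wZb (fun w => extA h g (1 / (starRingEnd ℂ) w)) z‖ ≤
      (d + δ / 2) / (1 - (d * δ / 2 + δ * (1 + M))) *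
        ‖wZ (fun w => extA h g (1 / (starRingEnd ℂ) w)) z‖ := by
  have hm := rho_mem_ball hz
  have hs := coef_S (h := h) z hδ.le fun _ => P.sch _ hm
  have ht := coef_ω (h := h) (g := g) z hδ.le hM (fun _ => P.pre _ hm) fun _ => P.ddil _ hm
  have hω := P.dil_le _ hm
  have hn := P.nz _ hm
  have w1 := Gf_wirt_self isOpen_ball P.diff P.nz hm hD
  have w2 := Gf_wirt isOpen_ball P.diff P.gdiff P.nz hm hD
  set s := -(rho z) ^ 2 * ((z - rho z) ^ 2 / 2 * schw h (rho z)) with hs_def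
  set t := -(rho z) ^ 2 * ((z - rho z) * deriv (dil h g) (rho z) * den1 h z) with ht_def
  set ω := dil h g (rho z) with hω_def
  set a := deriv h (rho z) / den1 h z ^ 2 with ha_def
  have ec : deriv g (rho z) / den1 h z ^ 2 = ω * a := by
    rw [hω_def, ha_def, dil]; field_simp
  have hg' : deriv g (rho z) = ω * deriv h (rho z) := by rw [hω_def, dil]; field_simp
  have ed : -(rho z) ^ 2 * ((z - rho z) ^ 2 / 2 * schw h (rho z) * deriv g (rho z)
        + (z - rho z) * deriv (dil h g) (rho z) * deriv h (rho z) * den1 h z)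
        / den1 h z ^ 2 = s * (ω * a) + t * a := by
    rw [hg', hs_def, ht_def, ha_def]; ring
  rw [ec, ed] at w2
  clear_value s t ω a
  have w3 := w1.add w2.conj
  have ev : (fun w => extA h g (1 / (starRingEnd ℂ) w)) =ᶠ[nhds z]
      fun w => Gf h h w + (starRingEnd ℂ) (Gf h g w) := by
    filter_upwards [(continuous_norm.continuousAt (x := z)).eventually (lt_mem_nhds hz)] with w hw
    exact extA_rho h g (le_of_lt hw) (P.nz _ (rho_mem_ball hw))
  have w4 := w3.congr_fun ev
  rw [w4.wZ_eq, w4.wZb_eq]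
  have b1 : ‖s * a + (starRingEnd ℂ) (ω * a)‖ ≤ (d + δ / 2) * ‖a‖ := by
    refine (norm_add_le _ _).trans ?_
    rw [RCLike.norm_conj, norm_mul, norm_mul, add_comm, add_mul]
    gcongr
  have b2 : (1 - (d * δ / 2 + δ * (1 + M))) * ‖a‖ ≤
      ‖a + (starRingEnd ℂ) (s * (ω * a) + t * a)‖ := by
    have c1 : ‖s * (ω * a) + t * a‖ ≤ δ / 2 * (d * ‖a‖) + δ * (1 + M) * ‖a‖ := by
      refine (norm_add_le _ _).trans ?_
      rw [norm_mul, norm_mul, norm_mul]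
      gcongr
    have c2 := norm_sub_norm_le a (-(starRingEnd ℂ) (s * (ω * a) + t * a))
    rw [norm_neg, RCLike.norm_conj, sub_neg_eq_add] at c2
    linarith
  have hp : 0 < 1 - (d * δ / 2 + δ * (1 + M)) := by linarith
  refine b1.trans ?_
  rw [div_mul_eq_mul_div, le_div_iff₀ hp, mul_assoc]
  have : 0 ≤ d + δ / 2 := by linarith
  rw [mul_comm ‖a‖]
  gcongr

open OnePoint in
/-- Main theorem, case A: small harmonic Schwarzian norm and dilatation bounded by
`d < 1` yield a quasiconformal extension to the Riemann sphere via the case-(A)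
Ahlfors–Weill formula. -/
theorem main_theorem_caseA (d : ℝ) (hd0 : 0 ≤ d) (hd1 : d < 1) :
    ∃ c : ℝ, 0 < c ∧
      ∀ h g : ℂ → ℂ,
        DifferentiableOn ℂ h (ball 0 1) → DifferentiableOn ℂ g (ball 0 1) →
        (∀ z ∈ ball (0 : ℂ) 1, deriv h z ≠ 0) →
        (∀ z ∈ ball (0 : ℂ) 1, ‖dil h g z‖ ≤ d) →
        (∀ z ∈ ball (0 : ℂ) 1, (1 - ‖z‖ ^ 2) ^ 2 * ‖schwH h g z‖ ≤ c) →
        ∃ F : OnePoint ℂ ≃ₜ OnePoint ℂ,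
          (∀ z : ℂ, ‖z‖ < 1 →
            F (z : OnePoint ℂ) = ((h z + (starRingEnd ℂ) (g z) : ℂ) : OnePoint ℂ)) ∧
          (∀ z : ℂ, 1 < ‖z‖ →
            (denA h (1 / (starRingEnd ℂ) z) ≠ 0 →
              F (z : OnePoint ℂ) = ((extA h g (1 / (starRingEnd ℂ) z) : ℂ) : OnePoint ℂ)) ∧
            (denA h (1 / (starRingEnd ℂ) z) = 0 → F (z : OnePoint ℂ) = ∞)) ∧
          ((denA h 0 ≠ 0 → F ∞ = ((extA h g 0 : ℂ) : OnePoint ℂ)) ∧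
            (denA h 0 = 0 → F ∞ = ∞)) ∧
          ∃ k : ℝ, k < 1 ∧
            ∀ z : ℂ, 1 < ‖z‖ → denA h (1 / (starRingEnd ℂ) z) ≠ 0 →
              ‖wZb (fun w => extA h g (1 / (starRingEnd ℂ) w)) z‖ ≤
                k * ‖wZ (fun w => extA h g (1 / (starRingEnd ℂ) w)) z‖ := by
  obtain ⟨M, hM, hsm⟩ := smallness d hd0 hd1
  -- `δ (2 + M) < 1 - d` makes the Lipschitz constant and the complex dilatation less than one.
  obtain ⟨δ, hδ, hδ1, hδ2⟩ : ∃ δ : ℝ, 0 < δ ∧ δ ≤ 1 / 100 ∧ δ * (2 + M) < 1 - d := by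
    have hp : 0 < (1 - d) / (2 * (2 + M)) := div_pos (by linarith) (by linarith)
    refine ⟨min (1 / 100) ((1 - d) / (2 * (2 + M))), lt_min (by norm_num) hp, min_le_left _ _, ?_⟩
    have := (le_div_iff₀ (by positivity)).1 (min_le_right (1 / 100) ((1 - d) / (2 * (2 + M))))
    nlinarith
  have hdδ : d * δ ≤ δ := mul_le_of_le_one_left hδ.le hd1.le
  obtain ⟨c, hc, hb⟩ := hsm δ hδ
  refine ⟨c, hc, fun h g hd gd hn hdil hS => ?_⟩
  have hb := hb h g hd gd hn hdil hS
  have P : PH δ M d h g :=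
    ⟨⟨hd, hn, fun z hz => (hb z hz).2.2⟩, gd, hdil, fun z hz => (hb z hz).1,
      fun z hz => (hb z hz).2.1⟩
  have hL0 : 0 ≤ Lc δ M d := by
    have : 0 < 1 - δ / 2 := by linarith
    rw [Lc]; positivity
  have hL1 : Lc δ M d < 1 := by
    rw [Lc, div_lt_one (by linarith)]; nlinarith
  obtain ⟨F, F1, F2, F3, F4⟩ := P.toDH.exists_sphere hδ hδ1
  obtain ⟨K, hK, hKG⟩ := exists_lipschitz (G := Gf h g) hL0 (dense_image F1 F2)
    fun z hz w hw => P.lip hδ hδ1 hM.le hd0 hz.1 hw.1 hz.2 hw.2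
  obtain ⟨Ψ, hΨ⟩ := exists_perturb (by rw [← Real.toNNReal_one]; exact
    (Real.toNNReal_lt_toNNReal_iff one_pos).2 hL1) hK
  have hC : ∀ w : ℂ, Ψ.onePointCongr (w : OnePoint ℂ) = ((Ψ w : ℂ) : OnePoint ℂ) := fun _ => rfl
  have hCi : Ψ.onePointCongr ∞ = ∞ := rfl
  have key : ∀ z : ℂ, ‖z‖ ≠ 1 → den1 h z ≠ 0 → (F.trans Ψ.onePointCongr) (z : OnePoint ℂ) =
      ((Gf h h z + (starRingEnd ℂ) (Gf h g z) : ℂ) : OnePoint ℂ) := fun z hz hD => by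
    rw [Homeomorph.trans_apply, F1 z hz hD, hC, hΨ, hKG z ⟨hz, hD⟩]
  refine ⟨F.trans Ψ.onePointCongr, fun z hz => ?_, fun z hz => ⟨fun hD => ?_, fun hD => ?_⟩,
    ⟨fun h0 => ?_, fun h0 => ?_⟩,
    (d + δ / 2) / (1 - (d * δ / 2 + δ * (1 + M))), ?_, fun z hz hD => ?_⟩
  · rw [key z hz.ne (by rw [den1_in h hz.le]; exact one_ne_zero), Gf_in _ _ hz.le,
      Gf_in _ _ hz.le]
  · rw [Ne, denA_eq_zero_iff h hz.le] at hD
    rw [key z hz.ne' hD, extA_rho h g hz.le (hn _ (rho_mem_ball hz))]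
  · rw [denA_eq_zero_iff h hz.le] at hD
    rw [Homeomorph.trans_apply, F2 z hz.ne' hD, hCi]
  · rw [Homeomorph.trans_apply, F3 h0, hC, hΨ, value_infty hd gd hn hK.continuous hKG h0]
    have hn0 := hn 0 (mem_ball_self one_pos)
    congr 1
    rw [extA, phiA, ← map_mul]
    have e : dil h g 0 * (((1 - ‖(0 : ℂ)‖ ^ 2 : ℝ) : ℂ) * deriv h 0 / denA h 0)
        = deriv g 0 / denA h 0 := by
      rw [dil]; simp; field_simp
    rw [e, map_add]; simp; ring
  · rw [Homeomorph.trans_apply, F4 h0, hCi]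
  · rw [div_lt_one (by nlinarith)]; nlinarith
  · rw [Ne, denA_eq_zero_iff h hz.le] at hD
    exact P.qc hδ hM.le hd0 (by nlinarith) hz hD
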